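/- arXiv:0805.1657 — 3 statements merged into one kernel-verified Lean document; each statement's English description precedes it below -/
import Mathlib

section
/- Let $K$ be a field and $n \geq 3$. The edge ideal $I(C_n)$ of the $n$-cycle is a set-theoretic complete intersection (i.e., $\operatorname{ara}\, I(C_n) = \operatorname{height}\, I(C_n)$) if and only if $n = 3$ or $n = 5$. -/
open MvPolynomial

/-- Arithmetical rank: the least number of elements of `R` generating `I` up to radical. -/
noncomputable def araRank {R : Type} [CommRing R] (I : Ideal R) : ℕ :=
  sInf {s : ℕ | ∃ f : Fin s → R, (Ideal.span (Set.range f)).radical = I.radical}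

/-- The edge ideal `I(Cₙ) = (x₁x₂, x₂x₃, …, x_{n-1}xₙ, x₁xₙ)` of the `n`-cycle,
with the vertices `x₁,…,xₙ` of the cycle indexed by `ZMod n` (`xⱼ = X (j : ZMod n)`). -/
noncomputable def cycleIdeal (K : Type) [Field K] (n : ℕ) :
    Ideal (MvPolynomial (ZMod n) K) :=
  Ideal.span (Set.range fun i : ZMod n => X i * X (i + 1))

/-- `xⱼ`, the `j`-th variable of the polynomial ring (indices taken mod `n`). -/
noncomputable def xv (K : Type) [Field K] (n : ℕ) (j : ℕ) : MvPolynomial (ZMod n) K :=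
  X (j : ZMod n)

/-- The height of an ideal: the infimum of the heights of the primes containing it. -/
noncomputable def idealHeight {R : Type} [CommRing R] (I : Ideal R) : ℕ∞ :=
  ⨅ (p : PrimeSpectrum R) (_ : I ≤ p.asIdeal), Order.height p


section Height

variable {σ K : Type} [Field K]

open Classical in
/-- The prime ideal generated by the variables indexed by `s`, as the kernel of the evaluation
that kills them. -/
noncomputable def varIdeal (K : Type) [Field K] (s : Set σ) : Ideal (MvPolynomial σ K) :=
  RingHom.ker (aeval (R := K) fun i => if i ∈ s then 0 else (X i : MvPolynomial σ K))

instance varIdeal_isPrime (s : Set σ) : (varIdeal K s).IsPrime :=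
  RingHom.ker_isPrime _

lemma X_mem_varIdeal {s : Set σ} {i : σ} : (X i : MvPolynomial σ K) ∈ varIdeal K s ↔ i ∈ s := by
  by_cases h : i ∈ s <;> simp [varIdeal, h, RingHom.mem_ker, X_ne_zero]

lemma varIdeal_le {s : Set σ} {p : Ideal (MvPolynomial σ K)}
    (h : ∀ i ∈ s, (X i : MvPolynomial σ K) ∈ p) : varIdeal K s ≤ p := by
  classical
  intro f hf
  have key : (Ideal.Quotient.mkₐ K p).comp
      (aeval (R := K) fun i => if i ∈ s then 0 else (X i : MvPolynomial σ K)) =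
      Ideal.Quotient.mkₐ K p := by
    ext i
    by_cases hi : i ∈ s
    · simpa [hi] using (Ideal.Quotient.eq_zero_iff_mem.2 (h i hi)).symm
    · simp [hi]
  have h0 : (aeval (R := K) fun i => if i ∈ s then 0 else (X i : MvPolynomial σ K)) f = 0 := by
    simpa [varIdeal, RingHom.mem_ker] using hf
  have := DFunLike.congr_fun key f
  rw [AlgHom.comp_apply, h0, map_zero] at this
  exact Ideal.Quotient.eq_zero_iff_mem.1 this.symm

lemma card_le_height_varIdeal (s : Finset σ) : (s.card : ℕ∞) ≤ (varIdeal K (s : Set σ)).height := by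
  classical
  induction s using Finset.induction_on with
  | empty => simp
  | insert i s hi ih =>
    have hlt : varIdeal K (s : Set σ) < varIdeal K ((insert i s : Finset σ) : Set σ) := by
      refine lt_of_le_of_ne (varIdeal_le fun j hj => X_mem_varIdeal.2 (by simp_all)) fun h => hi ?_
      have : (X i : MvPolynomial σ K) ∈ varIdeal K (s : Set σ) := by
        rw [h]; exact X_mem_varIdeal.2 (by simp)
      simpa using X_mem_varIdeal.1 this
    have := Order.height_add_one_le (a := (⟨_, varIdeal_isPrime _⟩ : PrimeSpectrum _))
      (b := ⟨_, varIdeal_isPrime _⟩) hlt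
    rw [← PrimeSpectrum.height_eq_orderHeight, ← PrimeSpectrum.height_eq_orderHeight] at this
    rw [Finset.card_insert_of_notMem hi, Nat.cast_add, Nat.cast_one]
    exact (add_le_add ih le_rfl).trans this

lemma height_varIdeal_le_card (s : Finset σ) [Finite σ] :
    (varIdeal K (s : Set σ)).height ≤ s.card := by
  classical
  have hmin : varIdeal K (s : Set σ) ∈
      (Ideal.span ((s.image X : Finset (MvPolynomial σ K)) : Set _)).minimalPrimes := by
    refine ⟨⟨inferInstance, Ideal.span_le.2 ?_⟩, fun q hq _ => varIdeal_le fun i hi => ?_⟩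
    · intro f hf
      obtain ⟨i, hi, rfl⟩ := Finset.mem_image.1 (Finset.mem_coe.1 hf)
      exact X_mem_varIdeal.2 hi
    · exact hq.2 (Ideal.subset_span (Finset.mem_coe.2 (Finset.mem_image_of_mem _ hi)))
  exact (Ideal.height_le_card_of_mem_minimalPrimes_span_finset hmin).trans
    (by exact_mod_cast Finset.card_image_le)

lemma idealHeight_le {R : Type} [CommRing R] {I p : Ideal R} [hp : p.IsPrime] (h : I ≤ p) :
    idealHeight I ≤ p.height := by
  have := PrimeSpectrum.height_eq_orderHeight (⟨p, hp⟩ : PrimeSpectrum R)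
  exact (iInf₂_le (⟨p, hp⟩ : PrimeSpectrum R) h).trans this.ge

variable {n : ℕ}

lemma cycleIdeal_le_iff {p : Ideal (MvPolynomial (ZMod n) K)} :
    cycleIdeal K n ≤ p ↔ ∀ i : ZMod n, (X i * X (i + 1) : MvPolynomial (ZMod n) K) ∈ p := by
  rw [cycleIdeal, Ideal.span_le, Set.range_subset_iff]; rfl

lemma cycleIdeal_le_varIdeal {s : Set (ZMod n)} (h : ∀ i, i ∈ s ∨ i + 1 ∈ s) :
    cycleIdeal K n ≤ varIdeal K s :=
  cycleIdeal_le_iff.2 fun i => (h i).elim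
    (fun hi => Ideal.mul_mem_right _ _ (X_mem_varIdeal.2 hi))
    (fun hi => Ideal.mul_mem_left _ _ (X_mem_varIdeal.2 hi))

lemma le_idealHeight_cycleIdeal [NeZero n] :
    (((n + 1) / 2 : ℕ) : ℕ∞) ≤ idealHeight (cycleIdeal K n) := by
  classical
  refine le_iInf₂ fun p hp => ?_
  let s : Finset (ZMod n) := {i | (X i : MvPolynomial (ZMod n) K) ∈ p.asIdeal}
  have hs : sᶜ.card ≤ s.card := by
    refine Finset.card_le_card_of_injOn (· + 1) (fun i hi => ?_) (add_left_injective _).injOn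
    have := p.isPrime.mem_or_mem (cycleIdeal_le_iff.1 hp i)
    simp_all [s]
  rw [Finset.card_compl, ZMod.card] at hs
  rw [← PrimeSpectrum.height_eq_orderHeight]
  refine (Nat.cast_le.2 (by omega : (n + 1) / 2 ≤ s.card)).trans
    ((card_le_height_varIdeal (K := K) s).trans (Ideal.height_mono (varIdeal_le ?_)))
  simp [s]

lemma idealHeight_cycleIdeal_le [NeZero n] :
    idealHeight (cycleIdeal K n) ≤ ((n + 1) / 2 : ℕ) := by
  classical
  let t : Finset (ZMod n) := (Finset.range (n / 2)).image fun j => ((2 * j : ℕ) : ZMod n)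
  have ht : t.card = n / 2 := by
    rw [Finset.card_image_of_injOn, Finset.card_range]
    intro a ha b hb hab
    simp only [Finset.coe_range, Set.mem_Iio] at ha hb
    have := congrArg ZMod.val hab
    rw [ZMod.val_natCast_of_lt (by omega), ZMod.val_natCast_of_lt (by omega)] at this
    omega
  have key : ∀ i : ZMod n, i ∈ t → i + 1 ∉ t := by
    intro i hi hi'
    obtain ⟨a, ha, rfl⟩ := Finset.mem_image.1 hi
    obtain ⟨b, hb, hab⟩ := Finset.mem_image.1 hi'
    simp only [Finset.mem_range] at ha hb
    rw [← Nat.cast_add_one] at hab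
    have := congrArg ZMod.val hab
    rw [ZMod.val_natCast_of_lt (by omega), ZMod.val_natCast_of_lt (by omega)] at this
    omega
  have h : cycleIdeal K n ≤ varIdeal K ((tᶜ : Finset (ZMod n)) : Set (ZMod n)) :=
    cycleIdeal_le_varIdeal fun i => by
      have := key i
      simp only [Finset.coe_compl, Set.mem_compl_iff, Finset.mem_coe]
      tauto
  refine (idealHeight_le h).trans ((height_varIdeal_le_card _).trans ?_)
  rw [Finset.card_compl, ZMod.card, ht]
  exact_mod_cast (by omega : n - n / 2 ≤ (n + 1) / 2)

/-- Krull's height theorem bounds below the number of elements that generate an ideal with a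
given minimal prime up to radical. -/
lemma height_le_of_radical_eq {R : Type} [CommRing R] [IsNoetherianRing R] {I p : Ideal R} {r : ℕ}
    {f : Fin r → R} (hf : (Ideal.span (Set.range f)).radical = I.radical)
    (hp : p ∈ I.minimalPrimes) : p.height ≤ r := by
  classical
  rw [← Ideal.radical_minimalPrimes, ← hf, Ideal.radical_minimalPrimes] at hp
  have : Set.range f = ((Finset.univ.image f : Finset R) : Set R) := by simp
  rw [this] at hp
  refine (Ideal.height_le_card_of_mem_minimalPrimes_span_finset hp).trans ?_
  exact_mod_cast Finset.card_image_le.trans (by simp)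

lemma exists_araRank_generators [NeZero n] :
    ∃ f : Fin (araRank (cycleIdeal K n)) → MvPolynomial (ZMod n) K,
      (Ideal.span (Set.range f)).radical = (cycleIdeal K n).radical := by
  refine Nat.sInf_mem (s := {s : ℕ | ∃ f : Fin s → MvPolynomial (ZMod n) K,
    (Ideal.span (Set.range f)).radical = (cycleIdeal K n).radical}) ⟨Fintype.card (ZMod n), ?_⟩
  let e := (Fintype.equivFin (ZMod n)).symm
  exact ⟨fun j => X (e j) * X (e j + 1), congrArg (fun s => (Ideal.span s).radical)
    (e.surjective.range_comp fun i => (X i * X (i + 1) : MvPolynomial (ZMod n) K))⟩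

lemma idealHeight_cycleIdeal_le_araRank [NeZero n] :
    idealHeight (cycleIdeal K n) ≤ araRank (cycleIdeal K n) := by
  obtain ⟨f, hf⟩ := exists_araRank_generators (K := K) (n := n)
  have hle : cycleIdeal K n ≤ varIdeal K Set.univ := cycleIdeal_le_varIdeal (by simp)
  obtain ⟨p, hp, -⟩ := Ideal.exists_minimalPrimes_le hle
  have := hp.1.1
  exact (idealHeight_le hp.1.2).trans (height_le_of_radical_eq hf hp)

/-- A maximal independent set `A` of the cycle bounds the arithmetical rank below by the size of
its complement. -/
lemma card_compl_le_of_maximal_independent [NeZero n] (A : Finset (ZMod n))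
    (hind : ∀ i ∈ A, i + 1 ∉ A) (hmax : ∀ i ∉ A, i + 1 ∈ A ∨ i - 1 ∈ A) {r : ℕ}
    {f : Fin r → MvPolynomial (ZMod n) K}
    (hf : (Ideal.span (Set.range f)).radical = (cycleIdeal K n).radical) : n - A.card ≤ r := by
  classical
  have hmin : varIdeal K ((Aᶜ : Finset (ZMod n)) : Set (ZMod n)) ∈
      (cycleIdeal K n).minimalPrimes := by
    refine ⟨⟨inferInstance, cycleIdeal_le_varIdeal fun i => ?_⟩, fun q hq hle => ?_⟩
    · have := hind i
      simp only [Finset.coe_compl, Set.mem_compl_iff, Finset.mem_coe]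
      tauto
    · have hout : ∀ j ∈ A, (X j : MvPolynomial (ZMod n) K) ∉ q := fun j hj hq' => by
        simpa [hj] using X_mem_varIdeal.1 (hle hq')
      refine varIdeal_le fun i hi => ?_
      have hi : i ∉ A := by simpa using hi
      rcases hmax i hi with h | h
      · exact (hq.1.mem_or_mem (cycleIdeal_le_iff.1 hq.2 i)).resolve_right (hout _ h)
      · have := cycleIdeal_le_iff.1 hq.2 (i - 1)
        rw [sub_add_cancel] at this
        exact (hq.1.mem_or_mem this).resolve_left (hout _ h)
  have := (card_le_height_varIdeal (K := K) Aᶜ).trans (height_le_of_radical_eq hf hmin)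
  rw [Finset.card_compl, ZMod.card] at this
  exact_mod_cast this

lemma lt_of_radical_eq_cycleIdeal [NeZero n] (hn : n = 6 ∨ 8 ≤ n) {r : ℕ}
    {f : Fin r → MvPolynomial (ZMod n) K}
    (hf : (Ideal.span (Set.range f)).radical = (cycleIdeal K n).radical) : (n + 1) / 2 < r := by
  classical
  let B : Finset ℕ := {0, 3} ∪ (Finset.Ico 3 (n / 2)).image (2 * ·)
  let A : Finset (ZMod n) := B.image (↑)
  have hB : ∀ k, k ∈ B ↔ k = 0 ∨ k = 3 ∨ 6 ≤ k ∧ k + 2 ≤ n ∧ k % 2 = 0 := by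
    intro k
    simp only [B, Finset.mem_union, Finset.mem_insert, Finset.mem_singleton, Finset.mem_image,
      Finset.mem_Ico]
    constructor
    · rintro ((h | h) | ⟨a, ha, rfl⟩) <;> omega
    · rintro (h | h | h)
      · simp [h]
      · simp [h]
      · exact Or.inr ⟨k / 2, by omega, by omega⟩
  have hA : ∀ k < n, ((k : ZMod n) ∈ A ↔ k ∈ B) := by
    intro k hk
    refine ⟨fun h => ?_, fun h => Finset.mem_image_of_mem _ h⟩
    obtain ⟨j, hj, hjk⟩ := Finset.mem_image.1 h
    have hj' := (hB j).1 hj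
    have := congrArg ZMod.val hjk
    rw [ZMod.val_natCast_of_lt (by omega), ZMod.val_natCast_of_lt hk] at this
    exact this ▸ hj
  have hA0 : (0 : ZMod n) ∈ A := by simpa using (hA 0 (by omega)).2 ((hB 0).2 (by simp))
  have hcard : A.card ≤ n / 2 - 1 := by
    refine Finset.card_image_le.trans ((Finset.card_union_le _ _).trans ?_)
    have h1 : ({0, 3} : Finset ℕ).card = 2 := rfl
    have h2 := Finset.card_image_le (s := Finset.Ico 3 (n / 2)) (f := (2 * ·))
    rw [Nat.card_Ico] at h2
    omega
  have hwrap : ((n - 1 : ℕ) : ZMod n) + 1 = 0 := by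
    rw [← Nat.cast_add_one, Nat.sub_add_cancel (by omega), ZMod.natCast_self]
  have hrep : ∀ i : ZMod n, ∃ k < n, (k : ZMod n) = i := fun i =>
    ⟨i.val, i.val_lt, ZMod.natCast_zmod_val i⟩
  have := card_compl_le_of_maximal_independent A ?_ ?_ hf
  · omega
  · intro i hi hi'
    obtain ⟨k, hk, rfl⟩ := hrep i
    have h1 := (hB k).1 ((hA k hk).1 hi)
    rw [← Nat.cast_add_one, hA (k + 1) (by omega), hB] at hi'
    omega
  · intro i hi
    obtain ⟨k, hk, rfl⟩ := hrep i
    rw [hA k hk, hB] at hi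
    rcases eq_or_ne k (n - 1) with rfl | hk'
    · left; rwa [hwrap]
    · have hk0 : k ≠ 0 := by omega
      rw [← Nat.cast_add_one, ← Nat.cast_pred (Nat.pos_of_ne_zero hk0), hA _ (by omega),
        hA _ (by omega), hB, hB]
      omega

lemma araRank_le {R : Type} [CommRing R] {I : Ideal R} {r : ℕ} (f : Fin r → R) (hle : ∀ i, f i ∈ I)
    (h : ∀ p : Ideal R, p.IsPrime → (∀ i, f i ∈ p) → I ≤ p) : araRank I ≤ r := by
  refine Nat.sInf_le ⟨f, le_antisymm (Ideal.radical_mono (Ideal.span_le.2 ?_)) ?_⟩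
  · rintro _ ⟨i, rfl⟩
    exact hle i
  · rw [Ideal.radical_le_radical_iff, Ideal.radical_eq_sInf]
    refine le_sInf fun p hp => h p hp.2 fun i => hp.1 (Ideal.subset_span ⟨i, rfl⟩)

lemma edge_mem_cycleIdeal (i : ZMod n) :
    (X i * X (i + 1) : MvPolynomial (ZMod n) K) ∈ cycleIdeal K n :=
  Ideal.subset_span ⟨i, rfl⟩

lemma araRank_cycleIdeal_three : araRank (cycleIdeal K 3) ≤ 2 := by
  have e := edge_mem_cycleIdeal (K := K) (n := 3)
  have e0 := e 0
  have e1 := e 1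
  have e2 := e 2
  rw [show (2 : ZMod 3) + 1 = 0 from rfl] at e2
  rw [show (1 : ZMod 3) + 1 = 2 from rfl] at e1
  rw [zero_add] at e0
  refine araRank_le ![X 0 * X 1, X 1 * X 2 + X 2 * X 0] ?_ fun p hp h => cycleIdeal_le_iff.2 ?_
  · intro i
    fin_cases i
    · exact e0
    · exact add_mem e1 e2
  · have h0 : (X 0 * X 1 : MvPolynomial (ZMod 3) K) ∈ p := h 0
    have h1 : (X 1 * X 2 + X 2 * X 0 : MvPolynomial (ZMod 3) K) ∈ p := h 1
    have h12 : (X 1 * X 2 : MvPolynomial (ZMod 3) K) ∈ p := by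
      rcases hp.mem_or_mem h0 with h | h
      · exact (add_mem_cancel_right (Ideal.mul_mem_left _ _ h)).1 h1
      · exact Ideal.mul_mem_right _ _ h
    intro i
    fin_cases i
    · exact h0
    · exact h12
    · exact (add_mem_cancel_left h12).1 h1

lemma araRank_cycleIdeal_five : araRank (cycleIdeal K 5) ≤ 3 := by
  have e := edge_mem_cycleIdeal (K := K) (n := 5)
  refine araRank_le ![X 0 * X 1, X 2 * X 3 + X 4 * X 0, X 1 * X 2 + X 3 * X 4] ?_
    fun p hp h => cycleIdeal_le_iff.2 ?_
  · intro i
    fin_cases i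
    · exact e 0
    · exact add_mem (e 2) (e 4)
    · exact add_mem (e 1) (e 3)
  · have h0 : (X 0 * X 1 : MvPolynomial (ZMod 5) K) ∈ p := h 0
    have h1 : (X 2 * X 3 + X 4 * X 0 : MvPolynomial (ZMod 5) K) ∈ p := h 1
    have h2 : (X 1 * X 2 + X 3 * X 4 : MvPolynomial (ZMod 5) K) ∈ p := h 2
    have key : (X 2 * X 3 : MvPolynomial (ZMod 5) K) ∈ p ∧
        (X 1 * X 2 : MvPolynomial (ZMod 5) K) ∈ p := by
      rcases hp.mem_or_mem h0 with h | h
      · have h23 := (add_mem_cancel_right (Ideal.mul_mem_left _ _ h)).1 h1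
        refine ⟨h23, ?_⟩
        rcases hp.mem_or_mem h23 with h | h
        · exact Ideal.mul_mem_left _ _ h
        · exact (add_mem_cancel_right (Ideal.mul_mem_right _ _ h)).1 h2
      · have h12 : (X 1 * X 2 : MvPolynomial (ZMod 5) K) ∈ p := Ideal.mul_mem_right _ _ h
        refine ⟨?_, h12⟩
        rcases hp.mem_or_mem ((add_mem_cancel_left h12).1 h2) with h | h
        · exact Ideal.mul_mem_left _ _ h
        · exact (add_mem_cancel_right (Ideal.mul_mem_right _ _ h)).1 h1
    intro i
    fin_cases i
    · exact h0
    · exact key.2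
    · exact key.1
    · exact (add_mem_cancel_left key.2).1 h2
    · exact (add_mem_cancel_left key.1).1 h1

end Height

section Cech

variable {R F : Type} [CommRing R] [Field F] [Algebra R F]

/-- The sign of the position of `i` in the finite set `S`. -/
def posSign (i : ℕ) (S : Finset ℕ) : ℤ := (-1) ^ (S.filter (· < i)).card

lemma posSign_mul_self (i : ℕ) (S : Finset ℕ) : posSign i S * posSign i S = 1 := by
  rw [posSign, ← mul_pow]; simp

lemma posSign_erase_self (i : ℕ) (S : Finset ℕ) : posSign i (S.erase i) = posSign i S := by
  unfold posSign
  congr 2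
  ext j
  simp only [Finset.mem_filter, Finset.mem_erase]
  grind

lemma posSign_insert_self (i : ℕ) (S : Finset ℕ) : posSign i (insert i S) = posSign i S := by
  unfold posSign
  congr 2
  ext j
  simp only [Finset.mem_filter, Finset.mem_insert]
  grind

lemma posSign_erase_of_lt {i j : ℕ} {S : Finset ℕ} (hj : j ∈ S) (h : j < i) :
    posSign i (S.erase j) = -posSign i S := by
  unfold posSign
  have hj' : j ∈ S.filter (· < i) := Finset.mem_filter.2 ⟨hj, h⟩
  rw [Finset.filter_erase, ← Finset.card_erase_add_one hj', pow_succ]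
  simp

lemma posSign_erase_of_gt {i j : ℕ} {S : Finset ℕ} (h : i < j) :
    posSign i (S.erase j) = posSign i S := by
  unfold posSign
  rw [Finset.filter_erase, Finset.erase_eq_of_notMem]
  simp [h.le]

/-- Creation of two distinct elements anticommutes. -/
lemma posSign_anticomm {i j : ℕ} {S : Finset ℕ} (hi : i ∈ S) (hj : j ∈ S) (h : i ≠ j) :
    posSign i S * posSign j (S.erase i) = -(posSign j S * posSign i (S.erase j)) := by
  rcases lt_or_gt_of_ne h with h | h
  · rw [posSign_erase_of_lt hi h, posSign_erase_of_gt h]; ring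
  · rw [posSign_erase_of_gt h, posSign_erase_of_lt hj h]; ring

/-- The Čech differential. -/
def cechD (c : Finset ℕ → F) (S : Finset ℕ) : F :=
  ∑ i ∈ S, (posSign i S : F) * c (S.erase i)

/-- The contraction of Čech cochains with the weights `w` on `A`. -/
def cechK (w : ℕ → F) (A : Finset ℕ) (c : Finset ℕ → F) (S : Finset ℕ) : F :=
  ∑ i ∈ A \ S, w i * ((posSign i S : F) * c (insert i S))

lemma cechD_sub (b c : Finset ℕ → F) (S : Finset ℕ) :
    cechD (fun T => b T - c T) S = cechD b S - cechD c S := by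
  simp [cechD, mul_sub, Finset.sum_sub_distrib]

lemma cechD_congr {b c : Finset ℕ → F} {S : Finset ℕ} (h : ∀ i ∈ S, b (S.erase i) = c (S.erase i)) :
    cechD b S = cechD c S :=
  Finset.sum_congr rfl fun i hi => by rw [h i hi]

lemma cechD_cechD (c : Finset ℕ → F) (S : Finset ℕ) : cechD (cechD c) S = 0 := by
  have h : cechD (cechD c) S = ∑ p ∈ S.sigma fun i => S.erase i,
      ((posSign p.1 S * posSign p.2 (S.erase p.1) : ℤ) : F) * c ((S.erase p.1).erase p.2) := by
    rw [Finset.sum_sigma]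
    simp [cechD, Finset.mul_sum, mul_assoc]
  rw [h]
  refine Finset.sum_involution (fun p _ => ⟨p.2, p.1⟩) ?_ ?_ ?_ ?_
  · rintro ⟨i, j⟩ hp
    simp only [Finset.mem_sigma, Finset.mem_erase] at hp
    rw [posSign_anticomm hp.1 hp.2.2 hp.2.1.symm, Finset.erase_right_comm]
    push_cast
    ring
  · rintro ⟨i, j⟩ hp _ heq
    simp only [Finset.mem_sigma, Finset.mem_erase] at hp
    simp only [Sigma.mk.injEq] at heq
    exact hp.2.1 heq.1
  · rintro ⟨i, j⟩ hp
    simp only [Finset.mem_sigma, Finset.mem_erase] at hp ⊢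
    exact ⟨hp.2.2, hp.2.1.symm, hp.1⟩
  · rintro ⟨i, j⟩ hp
    rfl

/-- The contraction is a homotopy between multiplication by the total weight and zero. -/
lemma cechD_cechK_add (w : ℕ → F) (A : Finset ℕ) (c : Finset ℕ → F) (S : Finset ℕ) :
    cechD (cechK w A c) S + cechK w A (cechD c) S = (∑ i ∈ A, w i) * c S := by
  have h1 : cechD (cechK w A c) S = ∑ j ∈ S, ∑ i ∈ A \ S,
        w i * ((posSign j S * posSign i (S.erase j) : ℤ) : F) * c (insert i (S.erase j)) +
      ∑ i ∈ A ∩ S, w i * c S := by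
    have : ∀ j ∈ S, (posSign j S : F) * cechK w A c (S.erase j) = ∑ i ∈ A \ S,
        w i * ((posSign j S * posSign i (S.erase j) : ℤ) : F) * c (insert i (S.erase j)) +
        if j ∈ A then w j * c S else 0 := by
      intro j hj
      have hsplit : A \ S.erase j = A \ S ∪ (if j ∈ A then {j} else ∅) := by
        ext k
        by_cases hjA : j ∈ A <;> simp [hjA] <;> grind
      rw [cechK, hsplit, Finset.sum_union (by
        split_ifs <;> simp [hj]), mul_add, Finset.mul_sum]
      congr 1
      · refine Finset.sum_congr rfl fun i _ => ?_
        push_cast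
        ring
      · split_ifs
        · have hs : (posSign j S : F) * posSign j S = 1 := by
            exact_mod_cast congrArg (Int.cast : ℤ → F) (posSign_mul_self j S)
          rw [Finset.sum_singleton, posSign_erase_self, Finset.insert_erase hj]
          linear_combination w j * c S * hs
        · simp
    rw [cechD, Finset.sum_congr rfl this, Finset.sum_add_distrib, Finset.sum_ite,
      Finset.sum_const_zero, add_zero, Finset.filter_mem_eq_inter, Finset.inter_comm]
  have h2 : cechK w A (cechD c) S = ∑ i ∈ A \ S, ∑ j ∈ S,
        w i * ((posSign i S * posSign j (insert i S) : ℤ) : F) * c (insert i (S.erase j)) +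
      ∑ i ∈ A \ S, w i * c S := by
    rw [cechK, ← Finset.sum_add_distrib]
    refine Finset.sum_congr rfl fun i hi => ?_
    have hi' : i ∉ S := (Finset.mem_sdiff.1 hi).2
    have hs : (posSign i S : F) * posSign i S = 1 := by
      exact_mod_cast congrArg (Int.cast : ℤ → F) (posSign_mul_self i S)
    rw [cechD, Finset.sum_insert hi', posSign_insert_self, Finset.erase_insert hi', mul_add,
      mul_add, add_comm, Finset.mul_sum, Finset.mul_sum]
    congr 1
    · refine Finset.sum_congr rfl fun j hj => ?_
      rw [Finset.erase_insert_of_ne (by rintro rfl; exact hi' hj)]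
      push_cast
      ring
    · linear_combination w i * c S * hs
  have h3 : ∑ j ∈ S, ∑ i ∈ A \ S,
        w i * ((posSign j S * posSign i (S.erase j) : ℤ) : F) * c (insert i (S.erase j)) +
      ∑ i ∈ A \ S, ∑ j ∈ S,
        w i * ((posSign i S * posSign j (insert i S) : ℤ) : F) * c (insert i (S.erase j)) = 0 := by
    rw [Finset.sum_comm, ← Finset.sum_add_distrib]
    refine Finset.sum_eq_zero fun i hi => ?_
    have hi' : i ∉ S := (Finset.mem_sdiff.1 hi).2
    rw [← Finset.sum_add_distrib]
    refine Finset.sum_eq_zero fun j hj => ?_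
    have hij : i ≠ j := by rintro rfl; exact hi' hj
    have := posSign_anticomm (Finset.mem_insert_self i S) (Finset.mem_insert_of_mem hj) hij
    rw [posSign_insert_self, Finset.erase_insert hi', Finset.erase_insert_of_ne hij,
      posSign_insert_self] at this
    have key : posSign j S * posSign i (S.erase j) + posSign i S * posSign j (insert i S) = 0 := by
      have e2 := posSign_mul_self j S
      have e4 := posSign_mul_self j (insert i S)
      linear_combination (posSign j S * posSign j (insert i S)) * this -
        posSign i S * posSign j (insert i S) * e2 - posSign j S * posSign i (S.erase j) * e4
    have key' := congrArg (Int.cast : ℤ → F) key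
    push_cast at key' ⊢
    linear_combination w i * c (insert i (S.erase j)) * key'
  rw [h1, h2, ← Finset.sum_inter_add_sum_sdiff A S w, add_mul, Finset.sum_mul, Finset.sum_mul]
  linear_combination h3

variable (R) in
/-- The elements of `F` that become integral over `R` after multiplication by a power of `u`,
i.e. the image of the localization of `R` away from `u` (for `u ≠ 0`). -/
def awayIn (F : Type) [Field F] [Algebra R F] (u : R) : Submodule R F where
  carrier := {y | ∃ N : ℕ, ∃ r : R, algebraMap R F r = algebraMap R F u ^ N * y}
  zero_mem' := ⟨0, 0, by simp⟩
  add_mem' := by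
    rintro x y ⟨N, r, hr⟩ ⟨M, s, hs⟩
    refine ⟨N + M, u ^ M * r + u ^ N * s, ?_⟩
    simp only [map_add, map_mul, map_pow, hr, hs]
    ring
  smul_mem' := by
    rintro a x ⟨N, r, hr⟩
    refine ⟨N, a * r, ?_⟩
    rw [map_mul, hr, Algebra.smul_def]
    ring

lemma awayIn_mono {u v : R} (h : u ∣ v) : awayIn R F u ≤ awayIn R F v := by
  rintro y ⟨N, r, hr⟩
  obtain ⟨t, rfl⟩ := h
  refine ⟨N, t ^ N * r, ?_⟩
  rw [map_mul, hr, map_mul, map_pow]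
  ring

lemma intCast_mul_mem_awayIn {u : R} {y : F} (z : ℤ) (hy : y ∈ awayIn R F u) :
    (z : F) * y ∈ awayIn R F u := by
  simpa using zsmul_mem hy z

lemma exists_common_pow {ι : Type} {s : Finset ι} {u : ι → R} {y : ι → F}
    (h : ∀ i ∈ s, y i ∈ awayIn R F (u i)) : ∃ N : ℕ, ∀ M ≥ N, ∀ i ∈ s,
      ∃ r : R, algebraMap R F r = algebraMap R F (u i) ^ M * y i := by
  have : ∀ i, ∃ N : ℕ, i ∈ s → ∃ r : R, algebraMap R F r = algebraMap R F (u i) ^ N * y i := by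
    intro i
    by_cases hi : i ∈ s
    · obtain ⟨N, hN⟩ := h i hi
      exact ⟨N, fun _ => hN⟩
    · exact ⟨0, fun hi' => absurd hi' hi⟩
  choose N hN using this
  refine ⟨s.sup N, fun M hM i hi => ?_⟩
  obtain ⟨r, hr⟩ := hN i hi
  refine ⟨u i ^ (M - N i) * r, ?_⟩
  rw [map_mul, hr, map_pow, ← mul_assoc, ← pow_add,
    Nat.sub_add_cancel ((Finset.le_sup hi).trans hM)]

/-- `c` takes values in the localizations attached to the `k`-element subsets of `A`. -/
def IsCechCochain (g : ℕ → R) (A : Finset ℕ) (k : ℕ) (c : Finset ℕ → F) : Prop :=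
  ∀ S ⊆ A, S.card = k → c S ∈ awayIn R F (∏ i ∈ S, g i)

lemma IsCechCochain.sub {g : ℕ → R} {A : Finset ℕ} {k : ℕ} {b c : Finset ℕ → F}
    (hb : IsCechCochain g A k b) (hc : IsCechCochain g A k c) :
    IsCechCochain g A k fun T => b T - c T :=
  fun S hS hk => sub_mem (hb S hS hk) (hc S hS hk)

lemma IsCechCochain.cechD {g : ℕ → R} {A : Finset ℕ} {k : ℕ} {b : Finset ℕ → F}
    (hb : IsCechCochain g A k b) : IsCechCochain g A (k + 1) (cechD b) := by
  intro S hS hk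
  refine sum_mem fun i hi => intCast_mul_mem_awayIn _ ?_
  refine awayIn_mono (Finset.prod_dvd_prod_of_subset _ _ _ (Finset.erase_subset i S)) ?_
  exact hb _ ((Finset.erase_subset i S).trans hS) (by rw [Finset.card_erase_of_mem hi, hk]; rfl)

/-- The degree `k + 1` cohomology of the Čech complex of the `g i`, `i ∈ A`, vanishes. -/
def CechVanishes (F : Type) [Field F] [Algebra R F] (g : ℕ → R) (A : Finset ℕ) (k : ℕ) : Prop :=
  ∀ c : Finset ℕ → F, IsCechCochain g A (k + 1) c →
    (∀ S ⊆ A, S.card = k + 2 → cechD c S = 0) →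
    ∃ b : Finset ℕ → F, IsCechCochain g A k b ∧ ∀ S ⊆ A, S.card = k + 1 → c S = cechD b S

lemma exists_pow_eq_sum {g : ℕ → R} {A : Finset ℕ} {x : R}
    (hx : x ∈ (Ideal.span (g '' A)).radical) (N : ℕ) :
    ∃ M : ℕ, ∃ r : ℕ → R, x ^ M = ∑ i ∈ A, r i * g i ^ N := by
  have hle : Ideal.span (g '' A) ≤ (Ideal.span ((fun i => g i ^ N) '' (A : Set ℕ))).radical := by
    rw [Ideal.span_le]
    rintro _ ⟨i, hi, rfl⟩
    exact ⟨N, Ideal.subset_span ⟨i, hi, rfl⟩⟩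
  obtain ⟨M, hM⟩ := Ideal.radical_le_radical_iff.2 hle hx
  obtain ⟨r, hr⟩ := (Submodule.mem_span_image_finset_iff_exists_fun' R).1 hM
  exact ⟨M, r, by simpa using hr.symm⟩

lemma cechVanishes_of_card_le {g : ℕ → R} {A : Finset ℕ} {k : ℕ} (h : A.card ≤ k) :
    CechVanishes F g A k := by
  refine fun c _ _ => ⟨0, fun S _ _ => zero_mem _, fun S hS hk => ?_⟩
  have := Finset.card_le_card hS
  omega

variable [FaithfulSMul R F]

/-- Exactness of the Čech complex on the open set where `g h` is invertible, when `g h` lies in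
the radical of the ideal of the `g i`, `i ∈ A`. -/
lemma exists_cechD_eq_of_vanish_on {g : ℕ → R} {A : Finset ℕ} {h : ℕ} (h0 : g h ≠ 0)
    (hrad : g h ∈ (Ideal.span (g '' A)).radical) {k : ℕ} {u : Finset ℕ → F}
    (hu : IsCechCochain g (insert h A) (k + 1) u) (huA : ∀ S ⊆ A, S.card = k + 1 → u S = 0)
    (hdu : ∀ S ⊆ insert h A, S.card = k + 2 → cechD u S = 0) :
    ∃ v : Finset ℕ → F, IsCechCochain g (insert h A) k v ∧ (∀ S ⊆ A, S.card = k → v S = 0) ∧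
      ∀ S ⊆ insert h A, S.card = k + 1 → u S = cechD v S := by
  obtain ⟨N, hN⟩ : ∃ N : ℕ, ∀ S ⊆ insert h A, S.card = k + 1 →
      ∃ r : R, algebraMap R F r = algebraMap R F (∏ i ∈ S, g i) ^ N * u S := by
    obtain ⟨N, hN⟩ := exists_common_pow (s := (insert h A).powersetCard (k + 1)) fun S hS =>
      hu S (Finset.mem_powersetCard.1 hS).1 (Finset.mem_powersetCard.1 hS).2
    exact ⟨N, fun S hS hk => hN N le_rfl S (Finset.mem_powersetCard.2 ⟨hS, hk⟩)⟩
  obtain ⟨M, r, hr⟩ := exists_pow_eq_sum hrad N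
  have hgh : algebraMap R F (g h) ≠ 0 := by
    rwa [Ne, FaithfulSMul.algebraMap_eq_zero_iff]
  let w : ℕ → F := fun i => algebraMap R F (r i * g i ^ N) / algebraMap R F (g h) ^ M
  have hw : ∑ i ∈ A, w i = 1 := by
    rw [← Finset.sum_div, ← map_sum, ← hr, map_pow, div_self (pow_ne_zero _ hgh)]
  have hzero : ∀ S ⊆ A, S.card = k → cechK w A u S = 0 := by
    intro S hS hk
    refine Finset.sum_eq_zero fun i hi => ?_
    rw [Finset.mem_sdiff] at hi
    rw [huA _ (Finset.insert_subset hi.1 hS) (by rw [Finset.card_insert_of_notMem hi.2, hk])]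
    simp
  refine ⟨cechK w A u, fun S hS hk => ?_, hzero, fun S hS hk => ?_⟩
  · by_cases hhS : h ∈ S
    · refine sum_mem fun i hi => ?_
      rw [Finset.mem_sdiff] at hi
      obtain ⟨s, hs⟩ := hN (insert i S)
        (Finset.insert_subset (Finset.mem_insert_of_mem hi.1) hS)
        (by rw [Finset.card_insert_of_notMem hi.2, hk])
      rw [mul_left_comm]
      refine intCast_mul_mem_awayIn _ ⟨N + M, r i * s * (∏ j ∈ S.erase h, g j) ^ M, ?_⟩
      rw [Finset.prod_insert hi.2] at hs
      have hS' : ∏ j ∈ S, g j = g h * ∏ j ∈ S.erase h, g j := (Finset.mul_prod_erase _ _ hhS).symm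
      simp only [w, map_mul, map_pow] at hs ⊢
      rw [hs, pow_add]
      nth_rw 3 [hS']
      rw [map_mul]
      field_simp
      ring
    · rw [hzero S ((Finset.subset_insert_iff_of_notMem hhS).1 hS) hk]
      exact zero_mem _
  · have hK : cechK w A (cechD u) S = 0 := by
      refine Finset.sum_eq_zero fun i hi => ?_
      rw [Finset.mem_sdiff] at hi
      rw [hdu _ (Finset.insert_subset (Finset.mem_insert_of_mem hi.1) hS)
        (by rw [Finset.card_insert_of_notMem hi.2, hk])]
      simp
    have := cechD_cechK_add w A u S
    rw [hw, hK, add_zero, one_mul] at this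
    exact this.symm

open Classical in
/-- Adjoining an element of the radical does not change the vanishing of Čech cohomology. -/
lemma cechVanishes_insert_iff {g : ℕ → R} {A : Finset ℕ} {h : ℕ} (h0 : g h ≠ 0)
    (hrad : g h ∈ (Ideal.span (g '' A)).radical) (k : ℕ) :
    CechVanishes F g (insert h A) k ↔ CechVanishes F g A k := by
  have hA : A ⊆ insert h A := Finset.subset_insert h A
  have hext : ∀ {m : ℕ} {a : Finset ℕ → F}, IsCechCochain g A m a →
      IsCechCochain g (insert h A) m fun S => if S ⊆ A then a S else 0 := by
    intro m a ha S _ hm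
    dsimp only
    split_ifs with hSA
    · exact ha S hSA hm
    · exact zero_mem _
  have hd : ∀ (a : Finset ℕ → F), ∀ S ⊆ A,
      cechD (fun S => if S ⊆ A then a S else 0) S = cechD a S := fun a S hS =>
    cechD_congr fun i _ => if_pos ((Finset.erase_subset i S).trans hS)
  constructor
  · intro hV a ha hda
    have hda' : ∀ S ⊆ A, S.card = k + 2 →
        cechD (fun S => if S ⊆ A then a S else 0) S = 0 := fun S hS hk => by
      rw [hd a S hS, hda S hS hk]
    obtain ⟨v, hv, hvA, hdv⟩ := exists_cechD_eq_of_vanish_on h0 hrad (hext ha).cechD hda'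
      fun S _ _ => cechD_cechD _ S
    obtain ⟨b, hb, hcb⟩ := hV _ ((hext ha).sub hv) fun S hS hk => by
      rw [cechD_sub, hdv S hS hk, sub_self]
    refine ⟨b, fun S hS => hb S (hS.trans hA), fun S hS hk => ?_⟩
    have := hcb S (hS.trans hA) hk
    rwa [hvA S hS hk, sub_zero, if_pos hS] at this
  · intro hV c hc hdc
    obtain ⟨a, ha, hca⟩ := hV c (fun S hS => hc S (hS.trans hA)) fun S hS => hdc S (hS.trans hA)
    obtain ⟨v, hv, -, hdv⟩ := exists_cechD_eq_of_vanish_on h0 hrad (hc.sub (hext ha).cechD)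
      (fun S hS hk => by rw [hd a S hS, hca S hS hk, sub_self])
      fun S hS hk => by rw [cechD_sub, cechD_cechD, hdc S hS hk, sub_zero]
    refine ⟨fun S => v S + if S ⊆ A then a S else 0, fun S hS hk =>
      add_mem (hv S hS hk) (hext ha S hS hk), fun S hS hk => ?_⟩
    have := hdv S hS hk
    rw [sub_eq_iff_eq_add] at this
    rw [this]
    simp [cechD, mul_add, Finset.sum_add_distrib]

lemma cechVanishes_union_iff {g : ℕ → R} {A : Finset ℕ} (B : Finset ℕ)
    (hB : ∀ i ∈ B, g i ≠ 0 ∧ g i ∈ (Ideal.span (g '' A)).radical) (k : ℕ) :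
    CechVanishes F g (A ∪ B) k ↔ CechVanishes F g A k := by
  induction B using Finset.induction_on with
  | empty => simp
  | insert h B _ ih =>
    rw [Finset.union_insert, ← ih fun i hi => hB i (Finset.mem_insert_of_mem hi)]
    obtain ⟨h0, hr⟩ := hB h (Finset.mem_insert_self h B)
    refine cechVanishes_insert_iff h0 (Ideal.radical_mono (Ideal.span_mono ?_) hr) k
    exact Set.image_mono (by simp)

/-- Čech cohomology of `g 0, …, g (n - 1)` vanishes in degrees exceeding the number of elements
generating the same ideal up to radical. -/
lemma cechVanishes_range {n r k : ℕ} (hr : r ≤ k) {g : ℕ → R} (hg : ∀ i < n, g i ≠ 0)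
    {f : Fin r → R}
    (hf : (Ideal.span (Set.range f)).radical = (Ideal.span (g '' Finset.range n)).radical) :
    CechVanishes F g (Finset.range n) k := by
  classical
  let g' : ℕ → R := fun i => if i < n then g i else if h : i - n < r then f ⟨i - n, h⟩ else 0
  let B : Finset ℕ := (Finset.Ico n (n + r)).filter (g' · ≠ 0)
  have hgg : ∀ i < n, g' i = g i := fun i hi => if_pos hi
  have hg'f : ∀ j : Fin r, g' (n + j) = f j := fun j => by simp [g']
  have himg : g' '' (Finset.range n) = g '' (Finset.range n) :=
    Set.image_congr fun i hi => hgg i (by simpa using hi)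
  have hBspan : Ideal.span (g' '' B) = Ideal.span (Set.range f) := by
    refine le_antisymm (Ideal.span_le.2 ?_) (Ideal.span_le.2 ?_)
    · rintro _ ⟨i, hi, rfl⟩
      have hi : (n ≤ i ∧ i < n + r) ∧ g' i ≠ 0 := by simpa [B] using hi
      obtain ⟨j, rfl⟩ := Nat.exists_eq_add_of_le hi.1.1
      exact Ideal.subset_span ⟨⟨j, by omega⟩, (hg'f ⟨j, by omega⟩).symm⟩
    · rintro _ ⟨j, rfl⟩
      by_cases hj : f j = 0
      · rw [hj]; exact zero_mem _
      · exact Ideal.subset_span ⟨n + j, by simp [B, hg'f, hj], hg'f j⟩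
  have hrad : (Ideal.span (g' '' B)).radical =
      (Ideal.span (g' '' (Finset.range n : Finset ℕ))).radical := by rw [hBspan, hf, himg]
  have hB : CechVanishes F g' B k := by
    refine cechVanishes_of_card_le ((Finset.card_filter_le _ _).trans ?_)
    simpa using hr
  rw [← cechVanishes_union_iff (Finset.range n) (fun i hi => ?_) k, Finset.union_comm,
    cechVanishes_union_iff B (fun i hi => ?_) k] at hB
  · intro c hc hdc
    have hprod : ∀ S ⊆ Finset.range n, ∏ i ∈ S, g' i = ∏ i ∈ S, g i := fun S hS =>
      Finset.prod_congr rfl fun i hi => hgg i (Finset.mem_range.1 (hS hi))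
    obtain ⟨b, hb, hcb⟩ := hB c (fun S hS hk => by rw [hprod S hS]; exact hc S hS hk) hdc
    exact ⟨b, fun S hS hk => by rw [← hprod S hS]; exact hb S hS hk, hcb⟩
  · refine ⟨(Finset.mem_filter.1 hi).2, ?_⟩
    rw [← hrad]
    exact Ideal.le_radical (Ideal.subset_span ⟨i, hi, rfl⟩)
  · rw [hrad, hgg i (Finset.mem_range.1 hi)]
    refine ⟨hg i (Finset.mem_range.1 hi), Ideal.le_radical (Ideal.subset_span ⟨i, hi, ?_⟩)⟩
    exact hgg i (Finset.mem_range.1 hi)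

end Cech

section Cycle

variable {K : Type} [Field K] {n : ℕ}

/-- The generators of the edge ideal of the cycle, indexed by natural numbers. -/
noncomputable def edgeGen (K : Type) [Field K] (n : ℕ) (i : ℕ) : MvPolynomial (ZMod n) K :=
  X (i : ZMod n) * X ((i : ZMod n) + 1)

/-- The edges `{i, i + 1}`, `i ∈ S`, cover all vertices of the cycle. -/
def EdgeCovers (n : ℕ) (S : Finset ℕ) : Prop :=
  ∀ v : ZMod n, ∃ i ∈ S, (i : ZMod n) = v ∨ (i : ZMod n) + 1 = v

instance [NeZero n] (S : Finset ℕ) : Decidable (EdgeCovers n S) :=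
  inferInstanceAs (Decidable (∀ _, _))

lemma edgeGen_ne_zero (i : ℕ) : edgeGen K n i ≠ 0 :=
  mul_ne_zero (X_ne_zero _) (X_ne_zero _)

lemma span_edgeGen [NeZero n] :
    Ideal.span (edgeGen K n '' (Finset.range n : Finset ℕ)) = cycleIdeal K n := by
  refine congrArg Ideal.span (Set.ext fun f => ⟨?_, ?_⟩)
  · rintro ⟨i, _, rfl⟩
    exact ⟨i, rfl⟩
  · rintro ⟨i, rfl⟩
    exact ⟨i.val, by simpa using i.val_lt, by simp [edgeGen]⟩

lemma X_dvd_prod_edgeGen {S : Finset ℕ} {v : ZMod n} {i : ℕ} (hi : i ∈ S)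
    (h : (i : ZMod n) = v ∨ (i : ZMod n) + 1 = v) :
    (X v : MvPolynomial (ZMod n) K) ∣ ∏ i ∈ S, edgeGen K n i := by
  refine dvd_trans ?_ (Finset.dvd_prod_of_mem _ hi)
  rcases h with rfl | rfl
  · exact dvd_mul_right _ _
  · exact dvd_mul_left _ _

lemma not_X_dvd_prod_edgeGen {S : Finset ℕ} {v : ZMod n}
    (h : ∀ i ∈ S, (i : ZMod n) ≠ v ∧ (i : ZMod n) + 1 ≠ v) :
    ¬ (X v : MvPolynomial (ZMod n) K) ∣ ∏ i ∈ S, edgeGen K n i := by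
  rw [Prime.dvd_finsetProd_iff X_prime]
  rintro ⟨i, hi, hd⟩
  rcases X_prime.dvd_or_dvd hd with hd | hd
  · exact (h i hi).1 (X_dvd_X.1 hd).symm
  · exact (h i hi).2 (X_dvd_X.1 hd).symm

variable [NeZero n]

/-- The product of all variables. -/
noncomputable def prodX (K : Type) [Field K] (n : ℕ) [NeZero n] : MvPolynomial (ZMod n) K :=
  ∏ v : ZMod n, X v

lemma prodX_dvd {S : Finset ℕ} (hS : EdgeCovers n S) :
    prodX K n ∣ (∏ i ∈ S, edgeGen K n i) ^ n := by
  have : ∏ v : ZMod n, (X v : MvPolynomial (ZMod n) K) ∣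
      ∏ _v : ZMod n, ∏ i ∈ S, edgeGen K n i :=
    Finset.prod_dvd_prod_of_dvd _ _ fun v _ => by
      obtain ⟨i, hi, h⟩ := hS v
      exact X_dvd_prod_edgeGen hi h
  simpa [prodX, ZMod.card] using this

lemma prod_edgeGen_dvd (S : Finset ℕ) :
    ∏ i ∈ S, edgeGen K n i ∣ prodX K n ^ (2 * S.card) := by
  have : ∏ i ∈ S, edgeGen K n i ∣ ∏ _i ∈ S, prodX K n ^ 2 :=
    Finset.prod_dvd_prod_of_dvd _ _ fun i _ => by
      rw [sq]
      exact mul_dvd_mul (Finset.dvd_prod_of_mem _ (Finset.mem_univ _))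
        (Finset.dvd_prod_of_mem _ (Finset.mem_univ _))
  simpa [← pow_mul] using this

lemma prodX_pow_eq (N : ℕ) : prodX K n ^ N =
    monomial (Finsupp.equivFunOnFinite.symm fun _ : ZMod n => N) (1 : K) := by
  rw [monomial_eq, Finsupp.prod_fintype _ _ (by simp), prodX, ← Finset.prod_pow]
  simp

lemma coeff_eq_zero_of_X_pow_dvd {N : ℕ} {v : ZMod n} {p : MvPolynomial (ZMod n) K}
    (h : X v ^ (N + 1) ∣ p) :
    p.coeff (Finsupp.equivFunOnFinite.symm fun _ : ZMod n => N) = 0 := by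
  obtain ⟨q, rfl⟩ := h
  rw [X_pow_eq_monomial, coeff_monomial_mul', if_neg]
  intro hle
  simpa using hle v

/-- A cycle `Γ` of the independence complex and a cocycle `Λ` pairing to `1` with it, written in
terms of the complementary sets of edges, show that Čech cohomology does not vanish. -/
lemma not_cechVanishes_edgeGen {F : Type} [Field F]
    [Algebra (MvPolynomial (ZMod n) K) F] [FaithfulSMul (MvPolynomial (ZMod n) K) F]
    {k : ℕ} (Γ Λ : Finset (Finset ℕ))
    (hΓ : ∀ S ∈ Γ, EdgeCovers n S)
    (hΓ' : ∀ S ∈ (Finset.range n).powersetCard (k + 2),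
      ∑ i ∈ S, (if S.erase i ∈ Γ then posSign i S else 0) = 0)
    (hΛ : Λ ⊆ (Finset.range n).powersetCard (k + 1))
    (hΛ' : ∀ T ∈ (Finset.range n).powersetCard k, EdgeCovers n T →
      ∑ p ∈ (Λ.sigma id).filter (fun p => p.1.erase p.2 = T), posSign p.2 p.1 = 0)
    (hΓΛ : (Λ ∩ Γ).card = 1) :
    ¬ CechVanishes F (edgeGen K n) (Finset.range n) k := by
  have hP0 : algebraMap (MvPolynomial (ZMod n) K) F (prodX K n) ≠ 0 := by
    rw [Ne, FaithfulSMul.algebraMap_eq_zero_iff]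
    exact Finset.prod_ne_zero_iff.2 fun v _ => X_ne_zero v
  intro hV
  obtain ⟨b, hb, hcb⟩ := hV
    (fun S => if S ∈ Γ then (algebraMap (MvPolynomial (ZMod n) K) F (prodX K n))⁻¹ else 0)
    (fun S hS hk => by
      dsimp only
      split_ifs with hSΓ
      · obtain ⟨t, ht⟩ := prodX_dvd (K := K) (hΓ S hSΓ)
        refine ⟨n, t, ?_⟩
        rw [← map_pow, ht, map_mul]
        field_simp
      · exact zero_mem _)
    (fun S hS hk => by
      have h := congrArg
        (fun z : ℤ => (z : F) * (algebraMap (MvPolynomial (ZMod n) K) F (prodX K n))⁻¹)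
        (hΓ' S (Finset.mem_powersetCard.2 ⟨hS, hk⟩))
      rw [Int.cast_zero, zero_mul, Int.cast_sum, Finset.sum_mul] at h
      refine Eq.trans ?_ h
      refine Finset.sum_congr rfl fun i _ => ?_
      by_cases hi : S.erase i ∈ Γ <;> simp [hi])
  obtain ⟨N, hN⟩ := exists_common_pow (R := MvPolynomial (ZMod n) K) (F := F)
    (u := fun _ => prodX K n)
    (s := (Finset.range n).powersetCard k) (y := b) (fun T hT => by
      obtain ⟨hT, hk⟩ := Finset.mem_powersetCard.1 hT
      obtain ⟨M, r, hr⟩ := awayIn_mono (prod_edgeGen_dvd T) (hb T hT hk)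
      exact ⟨2 * T.card * M, r, by rw [hr, map_pow, ← pow_mul]⟩)
  have hN := hN (N + 1) (Nat.le_succ N)
  choose! p hp using hN
  let e : ZMod n →₀ ℕ := Finsupp.equivFunOnFinite.symm fun _ => N
  let q : Finset ℕ → K := fun T => (p T).coeff e
  have hq : ∀ T ∈ (Finset.range n).powersetCard k, ¬ EdgeCovers n T → q T = 0 := by
    intro T hT hcov
    obtain ⟨v, hv⟩ := not_forall.1 hcov
    have hv : ∀ i ∈ T, (i : ZMod n) ≠ v ∧ (i : ZMod n) + 1 ≠ v := by
      intro i hi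
      have := not_exists.1 hv i
      tauto
    obtain ⟨hT', hk⟩ := Finset.mem_powersetCard.1 hT
    obtain ⟨L, r, hr⟩ := hb T hT' hk
    have heq : (∏ i ∈ T, edgeGen K n i) ^ L * p T = prodX K n ^ (N + 1) * r := by
      apply FaithfulSMul.algebraMap_injective (MvPolynomial (ZMod n) K) F
      rw [map_mul, map_mul, hp T hT, hr, map_pow, map_pow]
      ring
    have hdvd : (X v : MvPolynomial (ZMod n) K) ^ (N + 1) ∣ (∏ i ∈ T, edgeGen K n i) ^ L * p T := by
      rw [heq]
      exact dvd_mul_of_dvd_left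
        (pow_dvd_pow_of_dvd (Finset.dvd_prod_of_mem _ (Finset.mem_univ v)) _) _
    exact coeff_eq_zero_of_X_pow_dvd (X_prime.pow_dvd_of_dvd_mul_left _
      (fun h => not_X_dvd_prod_edgeGen hv (X_prime.dvd_of_dvd_pow h)) hdvd)
  have herase : ∀ S ∈ (Finset.range n).powersetCard (k + 1), ∀ i ∈ S,
      S.erase i ∈ (Finset.range n).powersetCard k := by
    intro S hS i hi
    obtain ⟨hS, hk⟩ := Finset.mem_powersetCard.1 hS
    exact Finset.mem_powersetCard.2 ⟨(Finset.erase_subset i S).trans hS, by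
      rw [Finset.card_erase_of_mem hi, hk]; rfl⟩
  have hrel : ∀ S ∈ (Finset.range n).powersetCard (k + 1),
      (if S ∈ Γ then (1 : K) else 0) = ∑ i ∈ S, (posSign i S : K) * q (S.erase i) := by
    intro S hS
    obtain ⟨hS', hk⟩ := Finset.mem_powersetCard.1 hS
    have h1 : (if S ∈ Γ then prodX K n ^ N else 0) =
        ∑ i ∈ S, C (posSign i S : K) * p (S.erase i) := by
      apply FaithfulSMul.algebraMap_injective (MvPolynomial (ZMod n) K) F
      have h2 := congrArg (algebraMap (MvPolynomial (ZMod n) K) F (prodX K n) ^ (N + 1) * ·)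
        (hcb S hS' hk)
      simp only [cechD, Finset.mul_sum] at h2
      rw [map_sum]
      refine Eq.trans ?_ (h2.trans (Finset.sum_congr rfl fun i hi => ?_))
      · split_ifs
        · rw [map_pow, pow_succ, mul_assoc, mul_inv_cancel₀ hP0, mul_one]
        · simp
      · rw [map_mul, hp _ (herase S hS i hi), map_intCast, map_intCast]
        ring
    have h2 := congrArg (coeff e) h1
    rw [coeff_sum] at h2
    refine Eq.trans ?_ (h2.trans (Finset.sum_congr rfl fun i _ => coeff_C_mul _ _ _))
    split_ifs
    · rw [prodX_pow_eq, coeff_monomial, if_pos rfl]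
    · simp
  have hone : ∑ S ∈ Λ, (if S ∈ Γ then (1 : K) else 0) = 1 := by
    rw [Finset.sum_boole, Finset.filter_mem_eq_inter, hΓΛ, Nat.cast_one]
  have hzero : ∑ S ∈ Λ, (if S ∈ Γ then (1 : K) else 0) = 0 := by
    rw [Finset.sum_congr rfl fun S hS => hrel S (hΛ hS)]
    refine (Finset.sum_sigma Λ id fun x => (posSign x.2 x.1 : K) * q (x.1.erase x.2)).symm.trans ?_
    rw [← Finset.sum_fiberwise_of_maps_to (t := (Finset.range n).powersetCard k)
      (g := fun x : (_ : Finset ℕ) × ℕ => x.1.erase x.2) fun x hx =>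
        herase x.1 (hΛ (Finset.mem_sigma.1 hx).1) x.2 (Finset.mem_sigma.1 hx).2]
    refine Finset.sum_eq_zero fun T hT => ?_
    have : ∀ x ∈ (Λ.sigma id).filter (fun p => p.1.erase p.2 = T),
        (posSign x.2 x.1 : K) * q (x.1.erase x.2) = posSign x.2 x.1 * q T := fun x hx => by
      rw [(Finset.mem_filter.1 hx).2]
    rw [Finset.sum_congr rfl this, ← Finset.sum_mul, ← Int.cast_sum]
    by_cases hcov : EdgeCovers n T
    · rw [hΛ' T hT hcov, Int.cast_zero, zero_mul]
    · rw [hq T hT hcov, mul_zero]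
  exact one_ne_zero (hone.symm.trans hzero)

lemma not_cechVanishes_four :
    ¬ CechVanishes (FractionRing (MvPolynomial (ZMod 4) K)) (edgeGen K 4) (Finset.range 4) 2 :=
  not_cechVanishes_edgeGen {{1, 2, 3}, {0, 2, 3}} {{0, 1, 2}, {0, 2, 3}} (by decide) (by decide)
    (by decide) (by decide) (by decide)

lemma not_cechVanishes_seven :
    ¬ CechVanishes (FractionRing (MvPolynomial (ZMod 7) K)) (edgeGen K 7) (Finset.range 7) 4 :=
  not_cechVanishes_edgeGen {{1, 2, 3, 5, 6}, {0, 2, 3, 5, 6}, {0, 2, 3, 4, 6}, {1, 2, 3, 4, 6}}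
    {{0, 1, 2, 3, 5}, {0, 1, 3, 4, 5}, {0, 2, 3, 5, 6}} (by decide +kernel) (by decide +kernel)
    (by decide +kernel) (by decide +kernel) (by decide +kernel)

lemma lt_of_radical_eq_of_not_cechVanishes {r k : ℕ} {f : Fin r → MvPolynomial (ZMod n) K}
    (hf : (Ideal.span (Set.range f)).radical = (cycleIdeal K n).radical)
    (h : ¬ CechVanishes (FractionRing (MvPolynomial (ZMod n) K)) (edgeGen K n)
      (Finset.range n) k) : k < r := by
  by_contra! hr
  exact h (cechVanishes_range hr (fun i _ => edgeGen_ne_zero i) (by rw [hf, span_edgeGen]))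

end Cycle

/-- For `n ≥ 3`, the edge ideal of the `n`-cycle is a set-theoretic complete
intersection (its arithmetical rank equals its height) if and only if `n = 3` or `n = 5`. -/
theorem cycle_stci_iff (K : Type) [Field K] (n : ℕ) (hn : 3 ≤ n) :
    ((araRank (cycleIdeal K n) : ℕ∞) = idealHeight (cycleIdeal K n)) ↔ (n = 3 ∨ n = 5) := by
  have : NeZero n := ⟨by omega⟩
  constructor
  · intro h
    obtain ⟨f, hf⟩ := exists_araRank_generators (K := K) (n := n)
    have hle : araRank (cycleIdeal K n) ≤ (n + 1) / 2 := by
      exact_mod_cast h.le.trans idealHeight_cycleIdeal_le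
    by_contra! hne
    have hlt : (n + 1) / 2 < araRank (cycleIdeal K n) := by
      rcases eq_or_ne n 4 with rfl | h4
      · exact lt_of_radical_eq_of_not_cechVanishes hf not_cechVanishes_four
      rcases eq_or_ne n 7 with rfl | h7
      · exact lt_of_radical_eq_of_not_cechVanishes hf not_cechVanishes_seven
      exact lt_of_radical_eq_cycleIdeal (by omega) hf
    exact absurd hle hlt.not_ge
  · intro h
    refine le_antisymm (le_trans ?_ le_idealHeight_cycleIdeal) idealHeight_cycleIdeal_le_araRank
    rcases h with rfl | rfl
    · exact_mod_cast araRank_cycleIdeal_three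
    · exact_mod_cast araRank_cycleIdeal_five
end

section
/- Let $K$ be a field and $n \geq 2$. The projective dimension of $R/I(L_n)$, where $I(L_n)$ is the edge ideal of the path (line graph) on $n$ vertices, is independent of the characteristic of $K$ and equals $\frac{2n}{3}$ if $n \equiv 0 \pmod 3$, $\frac{2n-2}{3}$ if $n \equiv 1 \pmod 3$, and $\frac{2n-1}{3}$ if $n \equiv 2 \pmod 3$. -/
open MvPolynomial

/-- Projective dimension of an `R`-module `M`, characterized via vanishing of the
`Ext` functors: the least `d` such that `Ext^i(M, N) = 0` for all `i > d` and all `N`. -/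
noncomputable def projDim (R : Type) [CommRing R] (M : Type) [AddCommGroup M]
    [Module R M] : ℕ∞ :=
  sInf {d : ℕ∞ | ∀ i : ℕ, d < i → ∀ N : ModuleCat R,
    Subsingleton (((Ext R (ModuleCat R) i).obj (Opposite.op (ModuleCat.of R M))).obj N)}

/-- The edge ideal `I(Lₙ) = (x₁x₂, …, x_{n-1}xₙ)` of the path (line graph) on `n`
vertices `x₁,…,xₙ`, indexed by `Fin n`. -/
noncomputable def pathIdeal (K : Type) [Field K] (n : ℕ) : Ideal (MvPolynomial (Fin n) K) :=
  Ideal.span (Set.range fun i : Fin (n - 1) =>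
    X (Fin.castLE (Nat.sub_le n 1) i) * X (⟨i.1 + 1, by have := i.isLt; omega⟩ : Fin n))

open CategoryTheory

theorem subsingleton_derivedExt_iff {R : Type} [CommRing R] (M N : ModuleCat.{0} R) (p : ℕ) :
    Subsingleton (((Ext R (ModuleCat R) (p + 1)).obj (Opposite.op M)).obj N) ↔
      Subsingleton (Abelian.Ext.{0} M N (p + 1)) := by
  let P := ProjectiveResolution.of M
  rw [← ModuleCat.isZero_iff_subsingleton, (P.isoExt (p + 1) N).isZero_iff,
    ← HomologicalComplex.exactAt_iff_isZero_homology,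
    HomologicalComplex.exactAt_iff' _ p (p + 1) (p + 2) (by simp) (by simp),
    ShortComplex.moduleCat_exact_iff]
  constructor
  · intro h
    refine subsingleton_of_forall_eq 0 fun α => ?_
    obtain ⟨f, hf, rfl⟩ := P.extMk_surjective α (p + 2) rfl
    exact (P.extMk_eq_zero_iff f (p + 2) rfl hf p rfl).2 (h f hf)
  · intro h f hf
    exact (P.extMk_eq_zero_iff f (p + 2) rfl hf p rfl).1 (Subsingleton.elim _ _)

section
variable {R : Type} [CommRing R] {I J L : Ideal R} {c : R}

/-- The sequence `R ⧸ (I : c) → R ⧸ I → R ⧸ (I + (c))`, where the first map is multiplication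
by `c`. -/
noncomputable abbrev colonSequence (hJ : ∀ f, f ∈ J ↔ c * f ∈ I) (hL : L = I ⊔ Ideal.span {c}) :
    ShortComplex (ModuleCat.{0} R) :=
  ModuleCat.shortComplexOfCompEqZero
    (Submodule.mapQ J I (LinearMap.mulLeft R c) fun f hf => (hJ f).1 hf)
    (Submodule.factor (hL ▸ le_sup_left : I ≤ L)) <| by
    refine Submodule.linearMap_qext _ (LinearMap.ext fun x => ?_)
    refine (Submodule.Quotient.mk_eq_zero _).2 (L.mul_mem_right x ?_)
    exact hL ▸ Ideal.mem_sup_right (Ideal.mem_span_singleton_self c)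

theorem colonSequence_shortExact (hJ : ∀ f, f ∈ J ↔ c * f ∈ I) (hL : L = I ⊔ Ideal.span {c}) :
    (colonSequence hJ hL).ShortExact := by
  refine ModuleCat.shortComplex_shortExact _ ?_ ?_ ?_
  · refine fun y => ⟨fun hy => ?_, ?_⟩
    · obtain ⟨f, rfl⟩ := Submodule.Quotient.mk_surjective _ y
      have hf : f ∈ L := (Submodule.Quotient.mk_eq_zero _).1 hy
      rw [hL, Submodule.mem_sup] at hf
      obtain ⟨a, ha, b, hb, rfl⟩ := hf
      obtain ⟨g, rfl⟩ := Ideal.mem_span_singleton'.1 hb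
      refine ⟨Submodule.Quotient.mk g, (Submodule.Quotient.eq I).2 ?_⟩
      simpa [mul_comm c g] using ha
    · rintro ⟨x, rfl⟩
      exact ConcreteCategory.congr_hom (colonSequence hJ hL).zero x
  · refine (injective_iff_map_eq_zero _).2 fun x hx => ?_
    obtain ⟨f, rfl⟩ := Submodule.Quotient.mk_surjective _ x
    exact (Submodule.Quotient.mk_eq_zero _).2
      ((hJ f).2 ((Submodule.Quotient.mk_eq_zero _).1 hx))
  · exact Submodule.factor_surjective (hL ▸ le_sup_left : I ≤ L)

theorem smul_id_quotient_eq_zero (hc : c ∈ L) : c • 𝟙 (ModuleCat.of R (R ⧸ L)) = 0 := by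
  refine ModuleCat.hom_ext (Submodule.linearMap_qext _ (LinearMap.ext fun x => ?_))
  exact (Submodule.Quotient.mk_eq_zero _).2 (L.mul_mem_right x hc)

/-- If `c` acts as the identity on `N`, nonvanishing of `Ext (R ⧸ (I : c)) N` passes to
`Ext (R ⧸ I) N`. -/
theorem nontrivial_ext_of_colon (hJ : ∀ f, f ∈ J ↔ c * f ∈ I) {N : ModuleCat.{0} R}
    (hN : c • 𝟙 N = 𝟙 N) {p : ℕ}
    (h : Nontrivial (Abelian.Ext.{0} (ModuleCat.of R (R ⧸ J)) N p)) :
    Nontrivial (Abelian.Ext.{0} (ModuleCat.of R (R ⧸ I)) N p) := by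
  by_contra h'
  rw [not_nontrivial_iff_subsingleton] at h'
  refine not_subsingleton_iff_nontrivial.2 h (subsingleton_of_forall_eq 0 fun x => ?_)
  have hS := colonSequence_shortExact hJ rfl
  have hz : ∀ y : Abelian.Ext.{0} (colonSequence hJ rfl).X₃ N (1 + p), y = 0 := fun y => by
    have h1 : c • y = y := by
      rw [Abelian.Ext.smul_eq_comp_mk₀, hN, Abelian.Ext.comp_mk₀_id]
    have h2 : c • y = 0 := by
      rw [← Abelian.Ext.mk₀_id_comp y, ← Abelian.Ext.smul_comp, ← Abelian.Ext.mk₀_smul,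
        smul_id_quotient_eq_zero (Ideal.mem_sup_right (Ideal.mem_span_singleton_self c)),
        Abelian.Ext.mk₀_zero, Abelian.Ext.zero_comp]
    rw [← h1, h2]
  obtain ⟨x₂, rfl⟩ := Abelian.Ext.contravariant_sequence_exact₁ hS N x rfl (hz _)
  have : x₂ = 0 := h'.elim _ _
  rw [this, Abelian.Ext.comp_zero]

/-- If `c` is regular on `R ⧸ I` and acts as zero on `N`, nonvanishing of `Ext^p (R ⧸ I) N`
gives nonvanishing of `Ext^(p+1) (R ⧸ (I + (c))) N`. -/
theorem nontrivial_ext_sup_span (hI : ∀ f, f ∈ I ↔ c * f ∈ I) (hL : L = I ⊔ Ideal.span {c})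
    {N : ModuleCat.{0} R} (hN : c • 𝟙 N = 0) {p : ℕ}
    (h : Nontrivial (Abelian.Ext.{0} (ModuleCat.of R (R ⧸ I)) N p)) :
    Nontrivial (Abelian.Ext.{0} (ModuleCat.of R (R ⧸ L)) N (1 + p)) := by
  by_contra h'
  rw [not_nontrivial_iff_subsingleton] at h'
  refine not_subsingleton_iff_nontrivial.2 h (subsingleton_of_forall_eq 0 fun x => ?_)
  have hS := colonSequence_shortExact hI hL
  obtain ⟨x₂, rfl⟩ := Abelian.Ext.contravariant_sequence_exact₁ hS N x rfl (h'.elim _ _)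
  have hf : (colonSequence hI hL).f = c • 𝟙 (ModuleCat.of R (R ⧸ I)) := by
    exact ModuleCat.hom_ext (Submodule.linearMap_qext _ (LinearMap.ext fun x => rfl))
  have h1 : c • x₂ = 0 := by
    rw [Abelian.Ext.smul_eq_comp_mk₀, hN, Abelian.Ext.mk₀_zero, Abelian.Ext.comp_zero]
  rw [hf, Abelian.Ext.mk₀_smul, Abelian.Ext.smul_comp]
  rw [Abelian.Ext.mk₀_id_comp, h1]

theorem hasProjectiveDimensionLT_of_colon (hJ : ∀ f, f ∈ J ↔ c * f ∈ I)
    (hL : L = I ⊔ Ideal.span {c}) {d : ℕ}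
    (h₁ : HasProjectiveDimensionLT (ModuleCat.of R (R ⧸ J)) d)
    (h₃ : HasProjectiveDimensionLT (ModuleCat.of R (R ⧸ L)) d) :
    HasProjectiveDimensionLT (ModuleCat.of R (R ⧸ I)) d :=
  (colonSequence_shortExact hJ hL).hasProjectiveDimensionLT_X₂ d h₁ h₃

theorem hasProjectiveDimensionLT_sup_span (hI : ∀ f, f ∈ I ↔ c * f ∈ I)
    (hL : L = I ⊔ Ideal.span {c}) {d : ℕ}
    (h : HasProjectiveDimensionLT (ModuleCat.of R (R ⧸ I)) d) :
    HasProjectiveDimensionLT (ModuleCat.of R (R ⧸ L)) (d + 1) :=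
  (colonSequence_shortExact hI hL).hasProjectiveDimensionLT_X₃ d h
    (hasProjectiveDimensionLT_of_ge _ d (d + 1) d.le_succ)

end

section

variable {σ : Type} {K : Type} [Field K]

theorem mem_restrictSupportIdeal_iff {s : Set (σ →₀ ℕ)} (hs : IsUpperSet s)
    {f : MvPolynomial σ K} :
    f ∈ restrictSupportIdeal K s hs ↔ ∀ m, coeff m f ≠ 0 → m ∈ s :=
  (mem_restrictSupport_iff K).trans (by simp [Set.subset_def])

theorem monomial_mul_mem_restrictSupportIdeal_iff {s t : Set (σ →₀ ℕ)} (hs : IsUpperSet s)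
    (ht : IsUpperSet t) {c : σ →₀ ℕ} (h : ∀ m, m ∈ t ↔ c + m ∈ s) (f : MvPolynomial σ K) :
    f ∈ restrictSupportIdeal K t ht ↔ monomial c 1 * f ∈ restrictSupportIdeal K s hs := by
  classical
  simp only [mem_restrictSupportIdeal_iff, h]
  constructor
  · intro H m hm
    rw [coeff_monomial_mul'] at hm
    split_ifs at hm with hc
    · have := H (m - c) (by simpa using hm)
      rwa [add_tsub_cancel_of_le hc] at this
    · simp at hm
  · exact fun H m hm => H _ (by simpa [coeff_monomial_mul] using hm)

theorem restrictSupportIdeal_eq_sup_span {s t : Set (σ →₀ ℕ)} (hs : IsUpperSet s)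
    (ht : IsUpperSet t) {c : σ →₀ ℕ} (h : ∀ m, m ∈ t ↔ m ∈ s ∨ c ≤ m) :
    restrictSupportIdeal K t ht =
      restrictSupportIdeal K s hs ⊔ Ideal.span {monomial c 1} := by
  classical
  apply le_antisymm
  · intro f hf
    rw [mem_restrictSupportIdeal_iff] at hf
    rw [← support_sum_monomial_coeff f]
    refine Ideal.sum_mem _ fun m hm => ?_
    rcases (h m).1 (hf m (mem_support_iff.1 hm)) with hm' | hm'
    · refine Ideal.mem_sup_left ((mem_restrictSupportIdeal_iff hs).2 fun a ha => ?_)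
      rw [coeff_monomial] at ha
      obtain rfl : m = a := by by_contra hne; simp [hne] at ha
      exact hm'
    · refine Ideal.mem_sup_right (Ideal.mem_span_singleton'.2 ⟨monomial (m - c) (coeff m f), ?_⟩)
      rw [monomial_mul, tsub_add_cancel_of_le hm', mul_one]
  · refine sup_le (fun f hf => ?_) ((Ideal.span_singleton_le_iff_mem _).2 ?_)
    · rw [mem_restrictSupportIdeal_iff] at hf ⊢
      exact fun m hm => (h m).2 (Or.inl (hf m hm))
    · refine (mem_restrictSupportIdeal_iff ht).2 fun a ha => ?_
      rw [coeff_monomial] at ha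
      obtain rfl : c = a := by by_contra hne; simp [hne] at ha
      exact (h c).2 (Or.inr le_rfl)

theorem hasProjectiveDimensionLT_one_of_isEmpty {s : Set (σ →₀ ℕ)} (hs : IsUpperSet s)
    (h : ∀ m, m ∉ s) :
    HasProjectiveDimensionLT
      (ModuleCat.of (MvPolynomial σ K) (MvPolynomial σ K ⧸ restrictSupportIdeal K s hs)) 1 := by
  have hbot : restrictSupportIdeal K s hs = ⊥ := by
    refine (Submodule.eq_bot_iff _).2 fun f hf => ?_
    ext m
    by_contra hm
    exact h m ((mem_restrictSupportIdeal_iff hs).1 hf m hm)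
  have : Module.Projective (MvPolynomial σ K) (MvPolynomial σ K ⧸ restrictSupportIdeal K s hs) :=
    .of_equiv (Submodule.quotEquivOfEqBot _ hbot).symm
  have : Projective (ModuleCat.of (MvPolynomial σ K)
      (MvPolynomial σ K ⧸ restrictSupportIdeal K s hs)) := inferInstance
  infer_instance

/-- The field `K` as a module over the polynomial ring, through evaluation at the point `e`. -/
noncomputable def pointModule (e : σ → K) : ModuleCat.{0} (MvPolynomial σ K) :=
  (ModuleCat.restrictScalars (eval e)).obj (ModuleCat.of K K)

theorem smul_id_pointModule (e : σ → K) (f : MvPolynomial σ K) {r : ℕ} (h : eval e f = r) :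
    f • 𝟙 (pointModule e) = r • 𝟙 (pointModule e) := by
  refine ModuleCat.hom_ext (LinearMap.ext fun x => ?_)
  have h' (y : K) : eval e f * y = r • y := by rw [h, nsmul_eq_mul]
  exact h' x

theorem isUpperSet_exists_ne_zero (S : Finset σ) :
    IsUpperSet {m : σ →₀ ℕ | ∃ i ∈ S, m i ≠ 0} :=
  fun _ _ hab ⟨i, hi, h⟩ => ⟨i, hi, fun h0 => h (Nat.le_zero.1 (h0 ▸ hab i))⟩

theorem single_one_le_iff {i : σ} {m : σ →₀ ℕ} : Finsupp.single i 1 ≤ m ↔ m i ≠ 0 := by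
  rw [Finsupp.single_le_iff, Nat.one_le_iff_ne_zero]

theorem single_one_add_single_one_le_iff {i j : σ} (hij : i ≠ j) {m : σ →₀ ℕ} :
    Finsupp.single i 1 + Finsupp.single j 1 ≤ m ↔ m i ≠ 0 ∧ m j ≠ 0 := by
  classical
  constructor
  · exact fun h => ⟨single_one_le_iff.1 (le_self_add.trans h),
      single_one_le_iff.1 (le_add_self.trans h)⟩
  · rintro ⟨hi, hj⟩ k
    rw [Finsupp.add_apply, Finsupp.single_apply, Finsupp.single_apply]
    split_ifs with h1 h2 h2
    · exact absurd (h1.trans h2.symm) hij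
    · subst h1; omega
    · subst h2; omega
    · omega

/-- The top `Ext` group from the quotient by the variables in `S` to a point on which all of these
variables vanish is nonzero. -/
theorem nontrivial_ext_pointModule (S : Finset σ) (e : σ → K) (he : ∀ i ∈ S, e i = 0) :
    Nontrivial (Abelian.Ext.{0} (ModuleCat.of (MvPolynomial σ K)
      (MvPolynomial σ K ⧸ restrictSupportIdeal K _ (isUpperSet_exists_ne_zero S)))
      (pointModule e) S.card) := by
  classical
  induction S using Finset.induction_on with
  | empty =>
    rw [Finset.card_empty, Abelian.Ext.homEquiv₀.nontrivial_congr]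
    obtain ⟨u, hu⟩ : ∃ u : pointModule e, u ≠ 0 := ⟨(1 : K), one_ne_zero (α := K)⟩
    let I := restrictSupportIdeal K _ (isUpperSet_exists_ne_zero (∅ : Finset σ))
    have hI : I ≤ LinearMap.ker (LinearMap.toSpanSingleton (MvPolynomial σ K) _ u) := by
      intro f hf
      have hf0 : f = 0 := by
        ext m
        by_contra hm
        simpa using (mem_restrictSupportIdeal_iff _).1 hf m hm
      rw [hf0]
      exact zero_mem _
    let φ : (MvPolynomial σ K ⧸ I) →ₗ[MvPolynomial σ K] pointModule e := Submodule.liftQ I _ hI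
    let F := ModuleCat.ofHom φ
    refine ⟨F, 0, fun h => hu ?_⟩
    have h1 : (1 : MvPolynomial σ K) • u = 0 :=
      ConcreteCategory.congr_hom h (Submodule.Quotient.mk 1)
    rwa [one_smul] at h1
  | insert a S ha ih =>
    have h := nontrivial_ext_sup_span (c := monomial (Finsupp.single a 1) 1)
      (L := restrictSupportIdeal K _ (isUpperSet_exists_ne_zero (insert a S)))
      (monomial_mul_mem_restrictSupportIdeal_iff _ _ fun m => ?_)
      (restrictSupportIdeal_eq_sup_span _ _ fun m => ?_)
      ?_ (ih fun i hi => he i (Finset.mem_insert_of_mem hi))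
    · rwa [Finset.card_insert_of_notMem ha, add_comm]
    · refine exists_congr fun i => and_congr_right fun hi => ?_
      have : a ≠ i := fun h => ha (h ▸ hi)
      simp [this]
    · rw [single_one_le_iff]
      simp [or_comm]
    · have := smul_id_pointModule e (monomial (Finsupp.single a 1) 1) (r := 0)
        (by simp [eval_monomial, he a (Finset.mem_insert_self a S)])
      rwa [zero_smul] at this
end

/-- Exponents over `Fin n` divisible by some `x_k x_{k+1}` with `k + 1 < a`. -/
def pathExponents (n a : ℕ) : Set (Fin n →₀ ℕ) :=
  {m | ∃ i j : Fin n, i.1 + 1 = j.1 ∧ j.1 < a ∧ m i ≠ 0 ∧ m j ≠ 0}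

theorem isUpperSet_pathExponents (n a : ℕ) : IsUpperSet (pathExponents n a) :=
  fun _ _ hab ⟨i, j, h, hj, hi₀, hj₀⟩ => ⟨i, j, h, hj,
    fun h0 => hi₀ (Nat.le_zero.1 (h0 ▸ hab i)), fun h0 => hj₀ (Nat.le_zero.1 (h0 ▸ hab j))⟩

theorem pathIdeal_eq_restrictSupportIdeal (K : Type) [Field K] (n : ℕ) :
    pathIdeal K n = restrictSupportIdeal K _ (isUpperSet_pathExponents n n) := by
  have h : pathIdeal K n = Ideal.span ((fun s => monomial s (1 : K)) ''
      {c | ∃ i j : Fin n, i.1 + 1 = j.1 ∧ c = Finsupp.single i 1 + Finsupp.single j 1}) := by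
    refine congrArg Ideal.span (Set.ext fun f => ?_)
    constructor
    · rintro ⟨i, rfl⟩
      exact ⟨_, ⟨Fin.castLE (Nat.sub_le n 1) i, ⟨i.1 + 1, by omega⟩, rfl, rfl⟩,
        by simp [X, monomial_mul]⟩
    · rintro ⟨_, ⟨i, j, hij, rfl⟩, rfl⟩
      refine ⟨⟨i.1, by omega⟩, ?_⟩
      have hj : j = ⟨i.1 + 1, by omega⟩ := Fin.ext hij.symm
      simp [X, monomial_mul, hj]
  ext f
  rw [h, mem_ideal_span_monomial_image, mem_restrictSupportIdeal_iff]
  refine forall_congr' fun m => ?_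
  rw [mem_support_iff]
  refine imp_congr_right fun _ => ?_
  have hne : ∀ {i j : Fin n}, i.1 + 1 = j.1 → i ≠ j := fun hij h => by simp [h] at hij
  constructor
  · rintro ⟨_, ⟨i, j, hij, rfl⟩, hle⟩
    exact ⟨i, j, hij, j.2, (single_one_add_single_one_le_iff (hne hij)).1 hle⟩
  · rintro ⟨i, j, hij, -, h⟩
    exact ⟨_, ⟨i, j, hij, rfl⟩, (single_one_add_single_one_le_iff (hne hij)).2 h⟩

theorem hasProjectiveDimensionLT_pathExponents (K : Type) [Field K] (n a : ℕ) (ha : a ≤ n) :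
    HasProjectiveDimensionLT (ModuleCat.of (MvPolynomial (Fin n) K)
      (MvPolynomial (Fin n) K ⧸ restrictSupportIdeal K _ (isUpperSet_pathExponents n a)))
      (2 * a / 3 + 1) := by
  induction a using Nat.strong_induction_on with
  | _ a ih =>
  have hmem : ∀ b (m : Fin n →₀ ℕ), m ∈ pathExponents n b ↔
      ∃ i j : Fin n, i.1 + 1 = j.1 ∧ j.1 < b ∧ m i ≠ 0 ∧ m j ≠ 0 := fun _ _ => Iff.rfl
  have hadd : ∀ (m : Fin n →₀ ℕ) (i k : Fin n),
      (Finsupp.single i 1 + m : Fin n →₀ ℕ) k ≠ 0 ↔ k.1 = i.1 ∨ m k ≠ 0 := fun m i k => by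
    rw [Finsupp.add_apply, Finsupp.single_apply, ← Fin.ext_iff, eq_comm (a := k)]
    split_ifs with h <;> simp [h]
  match a, ih with
  | 0, _ | 1, _ =>
    exact hasProjectiveDimensionLT_one_of_isEmpty _ fun m ⟨i, j, h, hj, _⟩ => by omega
  | 2, _ =>
    have h := hasProjectiveDimensionLT_one_of_isEmpty (K := K) (isUpperSet_pathExponents n 1)
      fun m ⟨i, j, h, hj, _⟩ => by omega
    let x : Fin n := ⟨0, by omega⟩
    let y : Fin n := ⟨1, by omega⟩
    refine hasProjectiveDimensionLT_sup_span (c := monomial (.single x 1 + .single y 1) 1)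
      (monomial_mul_mem_restrictSupportIdeal_iff _ _ fun m => ?_)
      (restrictSupportIdeal_eq_sup_span _ _ fun m => ?_) h
    · exact ⟨fun ⟨i, j, h, hj, _⟩ => by omega, fun ⟨i, j, h, hj, _⟩ => by omega⟩
    · constructor
      · rintro ⟨i, j, hij, hj, h₁, h₂⟩
        obtain rfl : i = x := Fin.ext (by simp [x]; omega)
        obtain rfl : j = y := Fin.ext (by simp [y]; omega)
        exact .inr ((single_one_add_single_one_le_iff (by simp [x, y])).2 ⟨h₁, h₂⟩)
      · rintro (⟨i, j, hij, hj, h⟩ | h)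
        · omega
        · exact ⟨x, y, rfl, by simp [y], (single_one_add_single_one_le_iff (by simp [x, y])).1 h⟩
  | b + 3, ih =>
    let u : Fin n := ⟨b, by omega⟩
    let v : Fin n := ⟨b + 1, by omega⟩
    let w : Fin n := ⟨b + 2, by omega⟩
    have hup : ∀ {s : Set (Fin n →₀ ℕ)} (_ : IsUpperSet s) (i : Fin n),
        IsUpperSet {m | m ∈ s ∨ m i ≠ 0} := fun hs i _ _ hle h =>
      h.imp (hs hle) fun hi h0 => hi (Nat.le_zero.1 (h0 ▸ hle i))
    have hA := ih b (by omega) (by omega)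
    have hB := ih (b + 1) (by omega) (by omega)
    have hvar : ∀ {s : Set (Fin n →₀ ℕ)} (hs : IsUpperSet s) (i : Fin n) (d : ℕ)
        (_ : ∀ m, m ∈ s ↔ .single i 1 + m ∈ s)
        (_ : HasProjectiveDimensionLT (ModuleCat.of (MvPolynomial (Fin n) K)
          (MvPolynomial (Fin n) K ⧸ restrictSupportIdeal K s hs)) d),
        HasProjectiveDimensionLT (ModuleCat.of (MvPolynomial (Fin n) K)
          (MvPolynomial (Fin n) K ⧸ restrictSupportIdeal K _ (hup hs i))) (d + 1) :=
      fun hs i d h hd => hasProjectiveDimensionLT_sup_span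
        (monomial_mul_mem_restrictSupportIdeal_iff _ _ h)
        (restrictSupportIdeal_eq_sup_span _ _ fun m => by rw [single_one_le_iff]; rfl) hd
    have hA₁ := hvar _ u _ (fun m => ?_) hA
    have hA₂ := hvar _ w _ (fun m => ?_) hA₁
    have hB₁ := hvar _ v _ (fun m => ?_) hB
    refine hasProjectiveDimensionLT_of_colon (c := monomial (.single v 1) 1)
      (monomial_mul_mem_restrictSupportIdeal_iff (isUpperSet_pathExponents n (b + 3))
        (hup (hup (isUpperSet_pathExponents n b) u) w) fun m => ?_)
      (restrictSupportIdeal_eq_sup_span _ (hup (isUpperSet_pathExponents n (b + 1)) v)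
        fun m => ?_)
      (@hasProjectiveDimensionLT_of_ge _ _ _ _ _ _ (by omega) hA₂)
      (@hasProjectiveDimensionLT_of_ge _ _ _ _ _ _ (by omega) hB₁)
    · simp only [hmem, hadd, Set.mem_ofPred_eq, v]
      constructor
      · rintro ((⟨i, j, hij, hj, h₁, h₂⟩ | h) | h)
        · exact ⟨i, j, hij, by omega, .inr h₁, .inr h₂⟩
        · exact ⟨u, v, rfl, by simp [v], .inr h, .inl rfl⟩
        · exact ⟨v, w, rfl, by simp [w], .inl rfl, .inr h⟩
      · rintro ⟨i, j, hij, hj, h₁, h₂⟩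
        rcases lt_trichotomy j.1 b with hjb | hjb | hjb
        · exact .inl (.inl ⟨i, j, hij, hjb, h₁.resolve_left (by omega), h₂.resolve_left (by omega)⟩)
        · obtain rfl : j = u := Fin.ext hjb
          exact .inl (.inr (h₂.resolve_left (by omega)))
        · rcases (by omega : j.1 = b + 1 ∨ j.1 = b + 2) with hjb | hjb
          · obtain rfl : i = u := Fin.ext (by simp [u]; omega)
            exact .inl (.inr (h₁.resolve_left (by simp [u])))
          · obtain rfl : j = w := Fin.ext hjb
            exact .inr (h₂.resolve_left (by simp [w]))
    · simp only [hmem, single_one_le_iff, Set.mem_ofPred_eq]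
      constructor
      · rintro (⟨i, j, hij, hj, h⟩ | h)
        · exact .inl ⟨i, j, hij, by omega, h⟩
        · exact .inr h
      · rintro (⟨i, j, hij, hj, h₁, h₂⟩ | h)
        · rcases (by omega : j.1 < b + 1 ∨ j.1 = b + 1 ∨ i.1 = b + 1) with hjb | hjb | hib
          · exact .inl ⟨i, j, hij, hjb, h₁, h₂⟩
          · obtain rfl : j = v := Fin.ext hjb
            exact .inr h₂
          · obtain rfl : i = v := Fin.ext hib
            exact .inr h₁
        · exact .inr h
    · simp only [hmem, hadd]
      refine exists₂_congr fun i j => and_congr_right fun hij => and_congr_right fun hj => ?_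
      rw [or_iff_right (by simp [v]; omega), or_iff_right (by simp [v]; omega)]
    · simp only [hmem, hadd, Set.mem_ofPred_eq]
      refine or_congr (exists₂_congr fun i j => and_congr_right fun hij =>
        and_congr_right fun hj => ?_) ?_
      · rw [or_iff_right (by simp [w]; omega), or_iff_right (by simp [w]; omega)]
      · rw [or_iff_right (by simp [u, w])]
    · simp only [hmem, hadd]
      refine exists₂_congr fun i j => and_congr_right fun hij => and_congr_right fun hj => ?_
      rw [or_iff_right (by simp [u]; omega), or_iff_right (by simp [u]; omega)]

theorem nontrivial_ext_path (K : Type) [Field K] (n : ℕ) :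
    ∃ q, 2 * n / 3 ≤ q ∧ Nontrivial (Abelian.Ext.{0} (ModuleCat.of (MvPolynomial (Fin n) K)
      (MvPolynomial (Fin n) K ⧸ restrictSupportIdeal K _ (isUpperSet_pathExponents n n)))
      (pointModule fun i : Fin n => if i.1 % 3 = 1 then (1 : K) else 0) q) := by
  let S : Finset (Fin n) := {i | i.1 % 3 = 0 ∧ i.1 + 1 < n ∨ i.1 % 3 = 2}
  let c : Fin n →₀ ℕ := Finsupp.equivFunOnFinite.symm fun i => if i.1 % 3 = 1 then 1 else 0
  have hc : ∀ i, c i = if i.1 % 3 = 1 then 1 else 0 := fun i => rfl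
  refine ⟨S.card, ?_, nontrivial_ext_of_colon (c := monomial c 1)
    (monomial_mul_mem_restrictSupportIdeal_iff (isUpperSet_pathExponents n n)
      (isUpperSet_exists_ne_zero S) fun m => ?_) ?_
    (nontrivial_ext_pointModule S _ fun i hi => ?_)⟩
  · have : (Finset.univ : Finset (Fin (2 * n / 3))).card ≤ S.card := by
      refine Finset.card_le_card_of_injOn
        (fun k => (⟨3 * (k.1 / 2) + 2 * (k.1 % 2), by omega⟩ : Fin n)) (fun k _ => ?_)
        fun k _ l _ h => ?_
      · simp only [S, Finset.coe_filter, Finset.mem_univ, true_and, Set.mem_ofPred_eq]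
        rcases Nat.mod_two_eq_zero_or_one k.1 with h | h <;> omega
      · simp only [Fin.mk.injEq] at h
        omega
    simpa using this
  · simp only [Set.mem_ofPred_eq, pathExponents, Finsupp.add_apply, hc, S, Finset.mem_filter,
      Finset.mem_univ, true_and]
    constructor
    · rintro ⟨i, hi | hi, hm⟩
      · exact ⟨i, ⟨i.1 + 1, hi.2⟩, rfl, hi.2, by omega, by rw [if_pos (by grind)]; omega⟩
      · exact ⟨⟨i.1 - 1, by omega⟩, i, by grind, i.2, by rw [if_pos (by grind)]; omega, by omega⟩
    · rintro ⟨i, j, hij, -, hi, hj⟩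
      rcases (by omega : i.1 % 3 = 0 ∨ i.1 % 3 = 1 ∨ i.1 % 3 = 2) with h | h | h
      · refine ⟨i, Or.inl ⟨h, by omega⟩, ?_⟩
        rwa [if_neg (by omega), zero_add] at hi
      · refine ⟨j, Or.inr (by omega), ?_⟩
        rwa [if_neg (by omega), zero_add] at hj
      · refine ⟨i, Or.inr h, ?_⟩
        rwa [if_neg (by omega), zero_add] at hi
  · have := smul_id_pointModule (fun i : Fin n => if i.1 % 3 = 1 then (1 : K) else 0)
      (monomial c 1) (r := 1) ?_
    · rwa [one_smul] at this
    · rw [eval_monomial, Finsupp.prod_fintype _ _ (by simp), Finset.prod_eq_one, one_mul]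
      · simp
      · intro i _
        rw [hc]
        split_ifs <;> simp
  · simp only [S, Finset.mem_filter, Finset.mem_univ, true_and] at hi
    exact if_neg (by omega)

/-- The projective dimension of `R/I(Lₙ)` (`n ≥ 2`) is independent of the characteristic
of the field and equals `2n/3`, `(2n-2)/3`, `(2n-1)/3` according to `n ≡ 0,1,2 (mod 3)`. -/
theorem path_projective_dimension (K : Type) [Field K] (n : ℕ) (hn : 2 ≤ n) :
    projDim (MvPolynomial (Fin n) K) (MvPolynomial (Fin n) K ⧸ pathIdeal K n) =
      ((if n % 3 = 0 then 2 * n / 3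
        else if n % 3 = 1 then (2 * n - 2) / 3
        else (2 * n - 1) / 3 : ℕ) : ℕ∞) := by
  have hval : (if n % 3 = 0 then 2 * n / 3 else if n % 3 = 1 then (2 * n - 2) / 3
      else (2 * n - 1) / 3) = 2 * n / 3 := by
    split_ifs <;> omega
  rw [hval, pathIdeal_eq_restrictSupportIdeal]
  apply le_antisymm
  · refine sInf_le fun i hi N => ?_
    obtain ⟨p, rfl⟩ : ∃ p, i = p + 1 := ⟨i - 1, by have := Nat.cast_lt.1 hi; omega⟩
    rw [subsingleton_derivedExt_iff]
    have := hasProjectiveDimensionLT_pathExponents K n n le_rfl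
    exact HasProjectiveDimensionLT.subsingleton _ (2 * n / 3 + 1) _ (Nat.cast_lt.1 hi) N
  · refine le_sInf fun d hd => ?_
    by_contra! hlt
    obtain ⟨q, hq, hnt⟩ := nontrivial_ext_path K n
    obtain ⟨p, rfl⟩ : ∃ p, q = p + 1 := ⟨q - 1, by omega⟩
    refine not_subsingleton_iff_nontrivial.2 hnt ((subsingleton_derivedExt_iff _ _ p).1 (hd _ ?_ _))
    exact hlt.trans_le (Nat.cast_le.2 hq)
end

section
/- Let $K$ be a field and $n \geq 3$ with $n \equiv 0 \pmod 3$. The top Betti number of the edge ideal of the $n$-cycle in degree $n$ is $\beta_{2n/3,\, n}(R/I(C_n)) = 2$, where $\beta_{i,j}$ denotes the graded Betti numbers of $R/I(C_n)$. -/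
open MvPolynomial

/-- The graded free module `⨁ⱼ R(-j)^(b j)` over `R = K[x₁,…,xₙ]`: the free module on
the index set `Σ j, Fin (b j)`, a generator with first component `j` being thought of as
having degree `j`. -/
abbrev GradedFreeMod (K : Type) [Field K] (n : ℕ) (b : ℕ → ℕ) : Type :=
  (Σ j : ℕ, Fin (b j)) →₀ MvPolynomial (ZMod n) K

/-- An element of `⨁ⱼ R(-j)^(b j)` is homogeneous of degree `d` if its coordinate at
each generator of degree `j` is a homogeneous polynomial of degree `d - j` (and vanishes
if `j > d`). -/
def IsHomogElem {K : Type} [Field K] {n : ℕ} {b : ℕ → ℕ} (d : ℕ)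
    (f : GradedFreeMod K n b) : Prop :=
  ∀ s : Σ j : ℕ, Fin (b j),
    MvPolynomial.IsHomogeneous (f s) (d - s.1) ∧ (f s ≠ 0 → s.1 ≤ d)

/-- A linear map of graded free modules is graded (of degree `0`) if it preserves
homogeneous elements and their degrees. -/
def IsGradedMap {K : Type} [Field K] {n : ℕ} {b b' : ℕ → ℕ}
    (φ : GradedFreeMod K n b →ₗ[MvPolynomial (ZMod n) K] GradedFreeMod K n b') : Prop :=
  ∀ d f, IsHomogElem d f → IsHomogElem d (φ f)

/-- The irrelevant maximal ideal `(x₁,…,xₙ)`. -/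
noncomputable def irrelevantIdeal (K : Type) [Field K] (n : ℕ) :
    Ideal (MvPolynomial (ZMod n) K) :=
  Ideal.span (Set.range (X : ZMod n → MvPolynomial (ZMod n) K))

/-- A minimal graded free resolution of `R/I` with graded Betti numbers `β i j`:
an exact sequence `⋯ → F₁ → F₀ → R/I → 0` of graded free modules `Fᵢ = ⨁ⱼ R(-j)^(β i j)`
with degree‑zero graded differentials whose images lie in `m·Fᵢ`, where `m = (x₁,…,xₙ)`.
The graded Betti numbers `β_{i,j}(R/I) = dim_K Tor_i(R/I, K)_j` may be read off any such
resolution. -/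
structure MinimalGradedFreeResolution (K : Type) [Field K] (n : ℕ)
    (I : Ideal (MvPolynomial (ZMod n) K)) (β : ℕ → ℕ → ℕ) : Type where
  /-- the differentials of the resolution -/
  d : ∀ i : ℕ, GradedFreeMod K n (β (i + 1)) →ₗ[MvPolynomial (ZMod n) K]
    GradedFreeMod K n (β i)
  /-- the augmentation `F₀ → R/I` -/
  aug : GradedFreeMod K n (β 0) →ₗ[MvPolynomial (ZMod n) K] (MvPolynomial (ZMod n) K ⧸ I)
  aug_surjective : Function.Surjective aug
  exact_at_zero : LinearMap.ker aug = LinearMap.range (d 0)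
  exact : ∀ i : ℕ, LinearMap.ker (d i) = LinearMap.range (d (i + 1))
  graded : ∀ i : ℕ, IsGradedMap (d i)
  aug_graded : ∀ (dd : ℕ) (f : GradedFreeMod K n (β 0)), IsHomogElem dd f →
    ∃ p : MvPolynomial (ZMod n) K, p.IsHomogeneous dd ∧ aug f = Ideal.Quotient.mk I p
  minimal : ∀ i : ℕ, LinearMap.range (d i) ≤
    irrelevantIdeal K n • (⊤ : Submodule (MvPolynomial (ZMod n) K) (GradedFreeMod K n (β i)))

noncomputable section

/-- The dimension of `P / (Q ∩ P)`. -/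
def relDim (K : Type*) {N : Type*} [Field K] [AddCommGroup N] [Module K N]
    (Q P : Submodule K N) : ℕ :=
  Module.finrank K (P ⧸ Q.comap P.subtype)

theorem relDim_map {K N N' : Type*} [Field K] [AddCommGroup N] [Module K N]
    [AddCommGroup N'] [Module K N'] (g : N →ₗ[K] N') {Q P : Submodule K N} (hQP : Q ≤ P)
    (hker : ∀ c ∈ P, g c = 0 → c ∈ Q) :
    relDim K Q P = relDim K (Q.map g) (P.map g) := by
  let φ : P →ₗ[K] (P.map g ⧸ (Q.map g).comap (P.map g).subtype) :=
    (Submodule.mkQ _).comp (g.restrict (fun x hx => Submodule.mem_map_of_mem hx))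
  have hφ : Function.Surjective φ := by
    refine (Submodule.mkQ_surjective _).comp ?_
    rintro ⟨_, x, hx, rfl⟩
    exact ⟨⟨x, hx⟩, rfl⟩
  have hk : LinearMap.ker φ = Q.comap P.subtype := by
    ext ⟨x, hx⟩
    simp only [φ, LinearMap.mem_ker, LinearMap.comp_apply, Submodule.mkQ_apply,
      Submodule.Quotient.mk_eq_zero, Submodule.mem_comap, Submodule.subtype_apply,
      LinearMap.coe_restrict_apply,
      Submodule.mem_map]
    constructor
    · rintro ⟨y, hy, hxy⟩
      have := hker (x - y) (P.sub_mem hx (hQP hy)) (by simp [hxy])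
      simpa using Q.add_mem this hy
    · exact fun h => ⟨x, h, rfl⟩
  unfold relDim
  rw [← hk]
  exact (φ.quotKerEquivOfSurjective hφ).finrank_eq

theorem relDim_eq_finrank {K N E : Type*} [Field K] [AddCommGroup N] [Module K N]
    [AddCommGroup E] [Module K E] (φ : E →ₗ[K] N) {Q P : Submodule K N}
    (hφ : ∀ x, φ x ∈ P) (hinj : ∀ x, φ x ∈ Q → x = 0) (hP : ∀ c ∈ P, ∃ x, c - φ x ∈ Q) :
    relDim K Q P = Module.finrank K E := by
  let ψ : E →ₗ[K] (P ⧸ Q.comap P.subtype) := (Submodule.mkQ _).comp (φ.codRestrict P hφ)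
  refine (LinearEquiv.ofBijective ψ ⟨?_, ?_⟩).finrank_eq.symm
  · rw [injective_iff_map_eq_zero]
    intro x hx
    refine hinj x ?_
    simpa [ψ, Submodule.mem_comap, Submodule.subtype_apply] using hx
  · intro y
    obtain ⟨⟨c, hc⟩, rfl⟩ := Submodule.mkQ_surjective _ y
    obtain ⟨x, hx⟩ := hP c hc
    refine ⟨x, ?_⟩
    simp only [ψ, LinearMap.comp_apply, Submodule.mkQ_apply]
    refine ((Submodule.Quotient.eq _).2 ?_).symm
    simpa [Submodule.mem_comap, Submodule.subtype_apply] using hx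

section Koszul

variable {V : Type*} [DecidableEq V]

/-- The sign relating `v ∧ e_S` to `e_{S ∪ {v}}`, for the order on `V` induced by `e`. -/
def wedgeSign (e : V → ℕ) (v : V) (S : Finset V) : ℤ :=
  (-1) ^ (S.filter fun u => e u < e v).card

omit [DecidableEq V] in
theorem wedgeSign_mul_self (e : V → ℕ) (v : V) (S : Finset V) :
    wedgeSign e v S * wedgeSign e v S = 1 := by
  rw [wedgeSign, ← mul_pow]; simp

theorem wedgeSign_insert (e : V → ℕ) (v w : V) (S : Finset V) (hw : w ∉ S) :
    wedgeSign e v (insert w S) = (if e w < e v then -1 else 1) * wedgeSign e v S := by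
  unfold wedgeSign
  rw [Finset.filter_insert]
  split_ifs with h
  · rw [Finset.card_insert_of_notMem (by simp [hw]), pow_succ]; ring
  · simp

theorem wedgeSign_swap {e : V → ℕ} (he : Function.Injective e) {v w : V} (hvw : v ≠ w)
    {S : Finset V} (hv : v ∉ S) (hw : w ∉ S) :
    wedgeSign e v S * wedgeSign e w (insert v S) =
      -(wedgeSign e w S * wedgeSign e v (insert w S)) := by
  rw [wedgeSign_insert e v w S hw, wedgeSign_insert e w v S hv]
  rcases lt_or_gt_of_ne (he.ne hvw) with h | h
  · simp only [h, if_true, not_lt_of_gt h, if_false]; ring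
  · simp only [h, if_true, not_lt_of_gt h, if_false]; ring

variable (K : Type*) [Field K] {N : Type*} [AddCommGroup N] [Module K N]

/-- Contraction by the basis vector `v` on the exterior algebra with coefficients in `N`,
elements of which are written as functions `Finset V → N`. -/
def contract (e : V → ℕ) (v : V) : (Finset V → N) →ₗ[K] (Finset V → N) where
  toFun c S := if v ∈ S then 0 else wedgeSign e v S • c (insert v S)
  map_add' c c' := by ext S; by_cases h : v ∈ S <;> simp [h]
  map_smul' a c := by ext S; by_cases h : v ∈ S <;> simp [h, smul_comm a]

/-- Exterior multiplication by the basis vector `v`. -/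
def wedge (e : V → ℕ) (v : V) : (Finset V → N) →ₗ[K] (Finset V → N) where
  toFun c S := if v ∈ S then wedgeSign e v (S.erase v) • c (S.erase v) else 0
  map_add' c c' := by ext S; by_cases h : v ∈ S <;> simp [h]
  map_smul' a c := by ext S; by_cases h : v ∈ S <;> simp [h, smul_comm a]

variable {K}

theorem contract_apply (e : V → ℕ) (v : V) (c : Finset V → N) (S : Finset V) :
    contract K e v c S = if v ∈ S then 0 else wedgeSign e v S • c (insert v S) := rfl

theorem wedge_apply (e : V → ℕ) (v : V) (c : Finset V → N) (S : Finset V) :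
    wedge K e v c S = if v ∈ S then wedgeSign e v (S.erase v) • c (S.erase v) else 0 := rfl

theorem contract_wedge_self (e : V → ℕ) (v : V) (c : Finset V → N) (S : Finset V) :
    contract K e v (wedge K e v c) S = if v ∈ S then 0 else c S := by
  rw [contract_apply]
  split_ifs with h
  · rfl
  · simp [wedge_apply, Finset.erase_insert h, smul_smul, wedgeSign_mul_self]

theorem wedge_contract_self (e : V → ℕ) (v : V) (c : Finset V → N) (S : Finset V) :
    wedge K e v (contract K e v c) S = if v ∈ S then c S else 0 := by
  rw [wedge_apply]
  split_ifs with h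
  · simp [contract_apply, Finset.insert_erase h, smul_smul, wedgeSign_mul_self]
  · rfl

theorem contract_contract_self (e : V → ℕ) (v : V) (c : Finset V → N) :
    contract K e v (contract K e v c) = 0 := by
  ext S; simp [contract_apply]

theorem contract_contract_swap {e : V → ℕ} (he : Function.Injective e) {v w : V} (hvw : v ≠ w)
    (c : Finset V → N) :
    contract K e v (contract K e w c) + contract K e w (contract K e v c) = 0 := by
  ext S
  simp only [Pi.add_apply, contract_apply, Finset.mem_insert, hvw, hvw.symm, false_or,
    Pi.zero_apply]
  by_cases hv : v ∈ S
  · simp [hv]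
  by_cases hw : w ∈ S
  · simp [hw]
  simp only [hv, hw, if_false, smul_smul]
  rw [wedgeSign_swap he hvw hv hw, Finset.insert_comm]
  simp

theorem contract_wedge_of_ne {e : V → ℕ} (he : Function.Injective e) {v w : V} (hvw : v ≠ w)
    (c : Finset V → N) :
    contract K e v (wedge K e w c) + wedge K e w (contract K e v c) = 0 := by
  ext S
  simp only [Pi.add_apply, contract_apply, wedge_apply, Finset.mem_insert, hvw, hvw.symm,
    false_or, Pi.zero_apply, Finset.mem_erase, ne_eq, not_false_eq_true, true_and]
  by_cases hv : v ∈ S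
  · simp [hv]
  by_cases hw : w ∈ S
  · obtain ⟨T, hT, rfl⟩ : ∃ T, w ∉ T ∧ insert w T = S :=
      ⟨S.erase w, by simp, Finset.insert_erase hw⟩
    have hvT : v ∉ T := fun h => hv (Finset.mem_insert_of_mem h)
    have hw' : w ∉ insert v T := by simp [hT, hvw.symm]
    have h1 := wedgeSign_swap he hvw hvT hT
    have h2 : wedgeSign e v (insert w T) * wedgeSign e w (insert v T) =
        -(wedgeSign e w T * wedgeSign e v T) := by
      rw [wedgeSign_insert e v w T hT] at h1 ⊢
      have hu := wedgeSign_mul_self e v T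
      have : wedgeSign e w (insert v T) = -(wedgeSign e w T *
          ((if e w < e v then -1 else 1))) := by
        linear_combination (wedgeSign e v T) * h1 - (wedgeSign e w (insert v T) +
          (wedgeSign e w T * ((if e w < e v then -1 else 1)))) * hu
      rw [this]
      split_ifs <;> ring
    simp only [hv, if_false, hw, if_true, Finset.insert_comm v w T, Finset.erase_insert hw',
      Finset.erase_insert hT, smul_smul, h2]
    simp
  · simp [hw]

theorem contract_compLeft {N' : Type*} [AddCommGroup N'] [Module K N'] (e : V → ℕ) (v : V)
    (f : N →ₗ[K] N') (c : Finset V → N) (S : Finset V) :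
    contract K e v (f.compLeft _ c) S = f (contract K e v c S) := by
  simp only [contract_apply]; split_ifs <;> simp

theorem wedge_compLeft {N' : Type*} [AddCommGroup N'] [Module K N'] (e : V → ℕ) (v : V)
    (f : N →ₗ[K] N') (c : Finset V → N) (S : Finset V) :
    wedge K e v (f.compLeft _ c) S = f (wedge K e v c S) := by
  simp only [wedge_apply]; split_ifs <;> simp

variable [Fintype V]

/-- The Koszul differential on the exterior algebra with coefficients in `N`, for a family `x`
of operators on `N`. -/
def koszul (e : V → ℕ) (x : V → Module.End K N) : (Finset V → N) →ₗ[K] (Finset V → N) :=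
  ∑ v, (x v).compLeft (Finset V) ∘ₗ contract K e v

theorem koszul_apply (e : V → ℕ) (x : V → Module.End K N) (c : Finset V → N) (S : Finset V) :
    koszul e x c S = ∑ v, x v (contract K e v c S) := by
  simp [koszul]

theorem koszul_compLeft {N' : Type*} [AddCommGroup N'] [Module K N'] (e : V → ℕ)
    {x : V → Module.End K N} {x' : V → Module.End K N'} (f : N →ₗ[K] N')
    (hf : ∀ v m, f (x v m) = x' v (f m)) (c : Finset V → N) :
    koszul e x' (f.compLeft _ c) = f.compLeft _ (koszul e x c) := by
  ext S
  simp [koszul_apply, contract_compLeft, hf]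

theorem contract_koszul (e : V → ℕ) (x : V → Module.End K N) (v : V) (c : Finset V → N)
    (S : Finset V) :
    contract K e v (koszul e x c) S = ∑ w, x w (contract K e v (contract K e w c) S) := by
  simp only [koszul, LinearMap.sum_apply, map_sum, Finset.sum_apply, LinearMap.comp_apply,
    contract_compLeft]

theorem wedge_koszul (e : V → ℕ) (x : V → Module.End K N) (v : V) (c : Finset V → N)
    (S : Finset V) :
    wedge K e v (koszul e x c) S = ∑ w, x w (wedge K e v (contract K e w c) S) := by
  simp only [koszul, LinearMap.sum_apply, map_sum, Finset.sum_apply, LinearMap.comp_apply,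
    wedge_compLeft]

theorem koszul_koszul {e : V → ℕ} (he : Function.Injective e) {x : V → Module.End K N}
    (hx : ∀ v w m, x v (x w m) = x w (x v m)) (c : Finset V → N) :
    koszul e x (koszul e x c) = 0 := by
  ext S
  rw [koszul_apply]
  simp only [contract_koszul, map_sum]
  rw [← Finset.sum_product', Pi.zero_apply]
  refine Finset.sum_involution (fun a _ => a.swap) ?_ ?_ (by simp) (by simp)
  · rintro ⟨v, w⟩ -
    simp only [Prod.fst_swap, Prod.snd_swap]
    by_cases hvw : v = w
    · subst hvw; simp [contract_contract_self]
    · rw [hx w v, ← map_add, ← map_add, ← Pi.add_apply, contract_contract_swap he hvw]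
      simp
  · rintro ⟨v, w⟩ - h1 h2
    obtain rfl : w = v := congrArg Prod.fst h2
    simp [contract_contract_self] at h1

/-- The homotopy associated with a vertex `v` and an operator `D` on the coefficients. -/
theorem koszul_homotopy {e : V → ℕ} (he : Function.Injective e) {x : V → Module.End K N}
    {v : V} {D : Module.End K N} (hD : ∀ w, w ≠ v → ∀ m, D (x w m) = x w (D m))
    (c : Finset V → N) (S : Finset V) :
    koszul e x (D.compLeft _ (wedge K e v c)) S + D (wedge K e v (koszul e x c) S) =
      if v ∈ S then D (x v (c S)) else x v (D (c S)) := by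
  rw [koszul_apply, wedge_koszul, map_sum, ← Finset.sum_add_distrib,
    Finset.sum_eq_single v]
  · rw [contract_compLeft, contract_wedge_self, wedge_contract_self]
    split_ifs <;> simp
  · intro w _ hw
    rw [contract_compLeft, hD w hw, ← map_add, ← map_add, ← Pi.add_apply,
      contract_wedge_of_ne he hw]
    simp
  · simp

end Koszul

section KoszulGraded

variable {V : Type*} [DecidableEq V] [Fintype V] {K : Type*} [Field K]
  {N : Type*} [AddCommGroup N] [Module K N]

omit [DecidableEq V] [Fintype V] in
variable (V) in
/-- The Koszul chains of homological degree `p` and internal degree `d`, for a graded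
coefficient space `G`. -/
def chains (G : ℤ → Submodule K N) (d : ℤ) (p : ℕ) : Submodule K (Finset V → N) where
  carrier := {c | ∀ S, c S ∈ G (d - p) ∧ (S.card ≠ p → c S = 0)}
  add_mem' ha hb S := ⟨(G _).add_mem (ha S).1 (hb S).1, fun h => by
    simp [(ha S).2 h, (hb S).2 h]⟩
  zero_mem' S := ⟨(G _).zero_mem, fun _ => rfl⟩
  smul_mem' a c hc S := ⟨(G _).smul_mem a (hc S).1, fun h => by simp [(hc S).2 h]⟩

theorem koszul_mem_chains (e : V → ℕ) {x : V → Module.End K N} {G : ℤ → Submodule K N}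
    (hxG : ∀ v d, ∀ m ∈ G d, x v m ∈ G (d + 1)) {d : ℤ} {p : ℕ} {c : Finset V → N}
    (hc : c ∈ chains V G d (p + 1)) : koszul e x c ∈ chains V G d p := by
  intro S
  rw [koszul_apply]
  constructor
  · refine Submodule.sum_mem _ fun v _ => ?_
    have : d - p = (d - (p + 1 : ℕ)) + 1 := by push_cast; ring
    rw [this]
    refine hxG _ _ _ ?_
    rw [contract_apply]
    split_ifs
    · exact Submodule.zero_mem _
    · exact zsmul_mem (hc _).1 _
  · intro hS
    refine Finset.sum_eq_zero fun v _ => ?_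
    rw [contract_apply]
    split_ifs with h
    · simp
    · rw [(hc _).2 (by rw [Finset.card_insert_of_notMem h]; omega)]; simp

omit [Fintype V] in
theorem wedge_mem_chains (e : V → ℕ) {v : V} {D : Module.End K N} {G : ℤ → Submodule K N}
    (hDG : ∀ d, ∀ m ∈ G d, D m ∈ G (d - 1)) {d : ℤ} {p : ℕ} {c : Finset V → N}
    (hc : c ∈ chains V G d p) : D.compLeft _ (wedge K e v c) ∈ chains V G d (p + 1) := by
  intro S
  simp only [LinearMap.compLeft_apply, Function.comp_apply, wedge_apply]
  constructor
  · have : d - (p + 1 : ℕ) = (d - p) - 1 := by push_cast; ring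
    rw [this]
    refine hDG _ _ ?_
    split_ifs
    · exact zsmul_mem (hc _).1 _
    · exact Submodule.zero_mem _
  · intro hS
    split_ifs with h
    · rw [(hc _).2 (by have := Finset.card_erase_add_one h; omega)]; simp
    · simp

omit [DecidableEq V] [Fintype V] in
theorem compLeft_mem_chains {N' : Type*} [AddCommGroup N'] [Module K N']
    {G : ℤ → Submodule K N} {G' : ℤ → Submodule K N'} {f : N →ₗ[K] N'}
    (hf : ∀ d, ∀ m ∈ G d, f m ∈ G' d) {d : ℤ} {p : ℕ} {c : Finset V → N}
    (hc : c ∈ chains V G d p) : f.compLeft _ c ∈ chains V G' d p := fun S =>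
  ⟨hf _ _ (hc S).1, fun h => by simp [(hc S).2 h]⟩

omit [DecidableEq V] [Fintype V] in
theorem exists_chains_lift {N' : Type*} [AddCommGroup N'] [Module K N']
    {G : ℤ → Submodule K N} {d : ℤ} {p : ℕ} {f : N →ₗ[K] N'} {c : Finset V → N'}
    (hc : ∀ S, ∃ m ∈ G (d - p), f m = c S) (hp : ∀ S : Finset V, S.card ≠ p → c S = 0) :
    ∃ b ∈ chains V G d p, f.compLeft _ b = c := by
  choose b hb hbc using hc
  refine ⟨fun S => if S.card = p then b S else 0, fun S => ⟨?_, fun h => by simp [h]⟩, ?_⟩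
  · dsimp only
    split_ifs
    exacts [hb S, Submodule.zero_mem _]
  · ext S
    by_cases h : S.card = p
    · simp [h, hbc]
    · simp [h, hp S h]

/-- `1 - (∂ h + h ∂)` for the homotopy `h` of `koszul_homotopy`. -/
def retract (x D : V → Module.End K N) (v : V) (c : Finset V → N) : Finset V → N :=
  fun S => c S - if v ∈ S then D v (x v (c S)) else x v (D v (c S))

theorem retract_foldr {e : V → ℕ} (he : Function.Injective e) {x D : V → Module.End K N}
    (hx : ∀ v w m, x v (x w m) = x w (x v m))
    (hD : ∀ v w, w ≠ v → ∀ m, D v (x w m) = x w (D v m))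
    {G : ℤ → Submodule K N} (hxG : ∀ v d, ∀ m ∈ G d, x v m ∈ G (d + 1))
    (hDG : ∀ v d, ∀ m ∈ G d, D v m ∈ G (d - 1))
    {J : Submodule K (Finset V → N)} (hJ : ∀ c ∈ J, koszul e x c ∈ J)
    (hJD : ∀ v, ∀ c ∈ J, (D v).compLeft _ (wedge K e v c) ∈ J)
    {d : ℤ} {p : ℕ} {c : Finset V → N} (hc : c ∈ chains V G d p) (hcJ : koszul e x c ∈ J)
    (l : List V) :
    l.foldr (retract x D) c ∈ chains V G d p ∧ koszul e x (l.foldr (retract x D) c) ∈ J ∧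
      ∃ b ∈ chains V G d (p + 1), c - l.foldr (retract x D) c - koszul e x b ∈ J := by
  induction l with
  | nil => exact ⟨hc, hcJ, 0, Submodule.zero_mem _, by simp⟩
  | cons v l ih =>
    obtain ⟨h1, h2, b, hb, h3⟩ := ih
    rw [List.foldr_cons]
    set c' := l.foldr (retract x D) c
    have key : retract x D v c' = c' - koszul e x ((D v).compLeft _ (wedge K e v c')) -
        (D v).compLeft _ (wedge K e v (koszul e x c')) := by
      ext S
      have := koszul_homotopy he (fun w hw m => hD v w hw m) c' S
      simp only [retract, Pi.sub_apply, LinearMap.compLeft_apply, Function.comp_apply] at this ⊢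
      rw [← this]; abel
    refine ⟨fun S => ⟨?_, fun h => ?_⟩, ?_, b + (D v).compLeft _ (wedge K e v c'),
      Submodule.add_mem _ hb (wedge_mem_chains e (hDG v) h1), ?_⟩
    · refine Submodule.sub_mem _ (h1 S).1 ?_
      split_ifs
      · simpa using hDG v _ _ (hxG v _ _ (h1 S).1)
      · simpa using hxG v _ _ (hDG v _ _ (h1 S).1)
    · simp [retract, (h1 S).2 h]
    · rw [key, map_sub, map_sub, koszul_koszul he hx, sub_zero]
      exact J.sub_mem h2 (hJ _ (hJD _ _ h2))
    · rw [key, map_add]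
      convert J.add_mem h3 (hJD v _ h2) using 1
      abel

section Rows

variable {N₀ N₁ N₂ : Type*} [AddCommGroup N₀] [Module K N₀] [AddCommGroup N₁] [Module K N₁]
  [AddCommGroup N₂] [Module K N₂]

/-- The homology, in degree `(d, p)`, of the image in the Koszul complex of `N₀` of the
Koszul complex of `N₁`. -/
def imageHomologyDim (e : V → ℕ) (x₀ : V → Module.End K N₀) (G₁ : ℤ → Submodule K N₁)
    (f : N₁ →ₗ[K] N₀) (d : ℤ) (p : ℕ) : ℕ :=
  relDim K (((chains V G₁ d (p + 1)).map (f.compLeft _)).map (koszul e x₀))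
    ((chains V G₁ d p).map (f.compLeft _) ⊓ LinearMap.ker (koszul e x₀))

variable {e : V → ℕ} (he : Function.Injective e) {x₀ : V → Module.End K N₀}
  {x₁ : V → Module.End K N₁}
  {G₁ : ℤ → Submodule K N₁} {G₂ : ℤ → Submodule K N₂} {f : N₁ →ₗ[K] N₀} {g : N₂ →ₗ[K] N₁}

include he in
theorem corner_subset (hx₁ : ∀ v w m, x₁ v (x₁ w m) = x₁ w (x₁ v m))
    (hxG₁ : ∀ v d, ∀ m ∈ G₁ d, x₁ v m ∈ G₁ (d + 1))
    (hf : ∀ v m, f (x₁ v m) = x₀ v (f m)) (hfg : ∀ m, f (g m) = 0)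
    (hgG : ∀ d, ∀ m ∈ G₂ d, g m ∈ G₁ d) (d : ℤ) (p : ℕ) :
    (chains V G₂ d p).map (g.compLeft _) ⊔ (chains V G₁ d (p + 1)).map (koszul e x₁) ≤
      chains V G₁ d p ⊓ LinearMap.ker (koszul e x₀ ∘ₗ f.compLeft _) := by
  refine sup_le ?_ ?_
  · rintro _ ⟨c, hc, rfl⟩
    refine ⟨compLeft_mem_chains hgG hc, ?_⟩
    have : f.compLeft _ (g.compLeft (Finset V) c) = 0 := by ext S; simp [hfg]
    simp [this]
  · rintro _ ⟨c, hc, rfl⟩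
    refine ⟨koszul_mem_chains e hxG₁ hc, ?_⟩
    rw [SetLike.mem_coe, LinearMap.mem_ker, LinearMap.comp_apply, koszul_compLeft e f hf,
      koszul_koszul he hx₁, map_zero]

include he in
theorem corner_eq_imageHomologyDim (hx₁ : ∀ v w m, x₁ v (x₁ w m) = x₁ w (x₁ v m))
    (hxG₁ : ∀ v d, ∀ m ∈ G₁ d, x₁ v m ∈ G₁ (d + 1))
    (hf : ∀ v m, f (x₁ v m) = x₀ v (f m)) (hfg : ∀ m, f (g m) = 0)
    (hgG : ∀ d, ∀ m ∈ G₂ d, g m ∈ G₁ d)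
    (hex : ∀ d, ∀ m ∈ G₁ d, f m = 0 → ∃ m' ∈ G₂ d, g m' = m) (d : ℤ) (p : ℕ) :
    relDim K ((chains V G₂ d p).map (g.compLeft _) ⊔ (chains V G₁ d (p + 1)).map (koszul e x₁))
      (chains V G₁ d p ⊓ LinearMap.ker (koszul e x₀ ∘ₗ f.compLeft _)) =
    imageHomologyDim e x₀ G₁ f d p := by
  rw [relDim_map (f.compLeft (Finset V)) (corner_subset he hx₁ hxG₁ hf hfg hgG d p)]
  · unfold imageHomologyDim
    congr 1
    · rw [Submodule.map_sup, ← Submodule.map_comp, ← Submodule.map_comp, ← Submodule.map_comp]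
      have h1 : f.compLeft (Finset V) ∘ₗ g.compLeft _ = 0 := by ext; simp [hfg]
      have h2 : f.compLeft (Finset V) ∘ₗ koszul e x₁ = koszul e x₀ ∘ₗ f.compLeft _ :=
        LinearMap.ext fun c => (koszul_compLeft e f hf c).symm
      rw [h1, h2]; simp
    · rw [LinearMap.ker_comp, ← Submodule.map_inf_eq_map_inf_comap]
  · rintro c ⟨hc, -⟩ hfc
    refine Submodule.mem_sup_left ?_
    exact exists_chains_lift (fun S => hex _ _ (hc S).1 (congrFun hfc S)) (fun S => (hc S).2)

include he in
theorem corner_succ_eq_imageHomologyDim (hx₁ : ∀ v w m, x₁ v (x₁ w m) = x₁ w (x₁ v m))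
    (hxG₁ : ∀ v d, ∀ m ∈ G₁ d, x₁ v m ∈ G₁ (d + 1))
    (hf : ∀ v m, f (x₁ v m) = x₀ v (f m))
    (hfg : ∀ m, f (g m) = 0)
    (hgG : ∀ d, ∀ m ∈ G₂ d, g m ∈ G₁ d)
    (hex : ∀ d, ∀ m ∈ G₁ d, f m = 0 → ∃ m' ∈ G₂ d, g m' = m) (d : ℤ) (p : ℕ)
    (hcol : ∀ c ∈ chains V G₁ d (p + 1), koszul e x₁ c = 0 →
      c ∈ (chains V G₁ d (p + 2)).map (koszul e x₁))
    (hcol' : ∀ c ∈ (chains V G₂ d p).map (g.compLeft _), koszul e x₁ c = 0 →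
      c ∈ (chains V G₁ d (p + 1)).map (koszul e x₁)) :
    relDim K ((chains V G₂ d (p + 1)).map (g.compLeft _) ⊔
        (chains V G₁ d (p + 1 + 1)).map (koszul e x₁))
      (chains V G₁ d (p + 1) ⊓ LinearMap.ker (koszul e x₀ ∘ₗ f.compLeft _)) =
    imageHomologyDim e x₁ G₂ g d p := by
  rw [relDim_map (koszul e x₁) (corner_subset he hx₁ hxG₁ hf hfg hgG d (p + 1))]
  · unfold imageHomologyDim
    congr 1
    · rw [Submodule.map_sup, ← Submodule.map_comp (koszul e x₁) (koszul e x₁)]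
      have h1 : koszul e x₁ ∘ₗ koszul e x₁ = 0 := LinearMap.ext (koszul_koszul he hx₁)
      rw [h1]; simp
    · have h2 : koszul e x₀ ∘ₗ f.compLeft (Finset V) = f.compLeft (Finset V) ∘ₗ koszul e x₁ :=
        LinearMap.ext fun c => koszul_compLeft e f hf c
      rw [h2, LinearMap.ker_comp, ← Submodule.map_inf_eq_map_inf_comap]
      ext c
      constructor
      · rintro ⟨⟨b, hb, rfl⟩, hc⟩
        refine ⟨?_, koszul_koszul he hx₁ b⟩
        have hb' := koszul_mem_chains e hxG₁ hb
        exact exists_chains_lift (fun S => hex _ _ (hb' S).1 (congrFun hc S))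
          (fun S => (hb' S).2)
      · rintro ⟨hc, hc0⟩
        refine ⟨hcol' c hc hc0, ?_⟩
        obtain ⟨b, -, rfl⟩ := hc
        ext S; simp [hfg]
  · rintro c ⟨hc, -⟩ hkc
    exact Submodule.mem_sup_right (hcol c hc hkc)

end Rows
end KoszulGraded

section Matching

variable {V : Type*} [DecidableEq V] [Fintype V] {K : Type*} [Field K]

theorem koszul_eq_zero_of_forall {N : Type*} [AddCommGroup N] [Module K N] (e : V → ℕ)
    (x : V → Module.End K N) {c : Finset V → N} {S : Finset V}
    (h : ∀ v ∉ S, c (insert v S) = 0) : koszul e x c S = 0 := by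
  rw [koszul_apply]
  refine Finset.sum_eq_zero fun v _ => ?_
  rw [contract_apply]
  split_ifs with hv
  · simp
  · simp [h v hv]

theorem koszul_congr {N : Type*} [AddCommGroup N] [Module K N] (e : V → ℕ)
    (x : V → Module.End K N) {c c' : Finset V → N} {S : Finset V}
    (h : ∀ v ∉ S, c (insert v S) = c' (insert v S)) : koszul e x c S = koszul e x c' S := by
  rw [← sub_eq_zero, ← Pi.sub_apply, ← map_sub]
  exact koszul_eq_zero_of_forall e x fun v hv => by simp [h v hv]

/-- If a family `D` of sets is stable under adding or removing `a`, then a chain supported on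
`W ⊇ D` which is a cycle on `D` is a boundary on `D`. -/
theorem koszul_toggle {e : V → ℕ} (he : Function.Injective e) {W D : Finset V → Prop} (a : V)
    [DecidablePred D]
    (hins : ∀ S, D S → D (insert a S)) (hera : ∀ S, D S → D (S.erase a))
    (hup : ∀ S v, D S → a ∈ S → v ∉ S → W (insert v (S.erase a)) → D (insert v S))
    {f : Finset V → K} (hf : ∀ S, f S ≠ 0 → W S)
    (hδ : ∀ S, D S → koszul e (1 : V → Module.End K K) f S = 0) {S : Finset V} (hS : D S) :
    koszul e (1 : V → Module.End K K) (fun S => if D S then wedge K e a f S else 0) S = f S := by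
  have h1 : koszul e (1 : V → Module.End K K) (fun S => if D S then wedge K e a f S else 0) S =
      koszul e (1 : V → Module.End K K) (wedge K e a f) S := by
    refine koszul_congr e _ fun v hv => ?_
    split_ifs with h
    · rfl
    · rw [wedge_apply]
      split_ifs with ha
      · rcases Finset.mem_insert.1 ha with rfl | haS
        · exact absurd (hins S hS) h
        · have hva : v ≠ a := fun h => hv (h ▸ haS)
          rw [Finset.erase_insert_of_ne hva]
          by_cases h0 : f (insert v (S.erase a)) = 0
          · simp [h0]
          · exact absurd (hup S v hS haS hv (hf _ h0)) h
      · rfl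
  have h2 := koszul_homotopy he (x := (1 : V → Module.End K K)) (v := a) (D := 1)
    (fun _ _ _ => rfl) f S
  have h3 : (1 : Module.End K K).compLeft (Finset V) (wedge K e a f) = wedge K e a f := rfl
  rw [h3] at h2
  rw [h1]
  have h4 : wedge K e a (koszul e (1 : V → Module.End K K) f) S = 0 := by
    rw [wedge_apply]
    split_ifs
    · rw [hδ _ (hera S hS), smul_zero]
    · rfl
  simpa [h4] using h2

/-- A filtration whose successive differences are matched by toggling a vertex reduces any
relative cycle to the last step of the filtration. -/
theorem exists_koszul_eq_of_matching {e : V → ℕ} (he : Function.Injective e)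
    {Ind : Finset V → Prop} {W : ℕ → Finset V → Prop} (a : ℕ → V) (n : ℕ)
    (hInd : ∀ S v, Ind S → Ind (insert v S))
    (hW0 : ∀ S, Ind S → W 0 S) (hWI : ∀ j S, W j S → Ind S) (hWs : Antitone W)
    (hins : ∀ j < n, ∀ S, W j S ∧ ¬ W (j + 1) S →
      W j (insert (a j) S) ∧ ¬ W (j + 1) (insert (a j) S))
    (hera : ∀ j < n, ∀ S, W j S ∧ ¬ W (j + 1) S →
      W j (S.erase (a j)) ∧ ¬ W (j + 1) (S.erase (a j)))
    (hup : ∀ j < n, ∀ S v, W j S ∧ ¬ W (j + 1) S → a j ∈ S → v ∉ S →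
      W j (insert v (S.erase (a j))) → W j (insert v S) ∧ ¬ W (j + 1) (insert v S))
    (hdown : ∀ j < n, ∀ S v, W j (insert v S) → Ind S → W j S)
    {p : ℕ} {f : Finset V → K} (hf : ∀ S, f S ≠ 0 → S.card = p ∧ Ind S)
    (hδ : ∀ S, Ind S → ¬ W n S → koszul e (1 : V → Module.End K K) f S = 0) :
    ∃ g : Finset V → K, (∀ S, g S ≠ 0 → S.card = p + 1 ∧ Ind S) ∧
      ∀ S, Ind S → ¬ W n S → f S = koszul e (1 : V → Module.End K K) g S := by
  classical
  suffices ∀ j ≤ n, ∃ g : Finset V → K, (∀ S, g S ≠ 0 → S.card = p + 1 ∧ Ind S) ∧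
      ∀ S, Ind S → ¬ W j S → f S = koszul e (1 : V → Module.End K K) g S from this n le_rfl
  intro j
  induction j with
  | zero => exact fun _ => ⟨0, by simp, fun S h1 h2 => absurd (hW0 S h1) h2⟩
  | succ j ih =>
    intro hj
    obtain ⟨g, hg, hfg⟩ := ih (by omega)
    set f' : Finset V → K := fun S =>
      if Ind S then f S - koszul e (1 : V → Module.End K K) g S else 0 with hf'
    have hf'W : ∀ S, f' S ≠ 0 → W j S := by
      intro S h
      by_contra hW
      by_cases hI : Ind S
      · exact h (by simp [hf', hfg S hI hW])
      · exact h (by simp [hf', hI])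
    have hf'p : ∀ S, f' S ≠ 0 → S.card = p := by
      intro S h
      by_contra hc
      refine h ?_
      have h1 : f S = 0 := by_contra fun h => hc (hf S h).1
      have h2 : koszul e (1 : V → Module.End K K) g S = 0 :=
        koszul_eq_zero_of_forall e _ fun v hv => by_contra fun h => by
          have := (hg _ h).1
          rw [Finset.card_insert_of_notMem hv] at this
          omega
      simp [hf', h1, h2]
    have hf'δ : ∀ S, W j S ∧ ¬ W (j + 1) S → koszul e (1 : V → Module.End K K) f' S = 0 := by
      intro S hS
      have hI := hWI j S hS.1
      rw [koszul_congr e _ (c' := f - koszul e (1 : V → Module.End K K) g)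
        (fun v _ => by simp [hf', hInd S v hI]), map_sub, koszul_koszul he (fun _ _ _ => rfl),
        sub_zero]
      exact hδ S hI fun h => hS.2 (hWs hj S h)
    have key := fun S => koszul_toggle he (D := fun S => W j S ∧ ¬ W (j + 1) S) (a j)
      (hins j hj) (hera j hj) (hup j hj) hf'W hf'δ (S := S)
    set g' : Finset V → K := fun S =>
      if W j S ∧ ¬ W (j + 1) S then wedge K e (a j) f' S else 0 with hg'
    refine ⟨g + g', fun S h => ?_, fun S hI hS => ?_⟩
    · by_cases h0 : g S = 0
      · have h1 : g' S ≠ 0 := by simpa [h0] using h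
        have h2 : W j S ∧ ¬ W (j + 1) S := by
          by_contra h2; exact h1 (by simp only [hg', if_neg h2])
        simp only [hg', if_pos h2, wedge_apply] at h1
        by_cases ha : a j ∈ S
        · rw [if_pos ha] at h1
          have := hf'p (S.erase (a j)) (fun h0 => h1 (by rw [h0, smul_zero]))
          refine ⟨?_, hWI j S h2.1⟩
          rw [← this, Finset.card_erase_add_one ha]
        · exact absurd (if_neg ha) h1
      · exact hg S h0
    · rw [map_add, Pi.add_apply]
      by_cases hW : W j S
      · rw [key S ⟨hW, hS⟩]; simp [hf', hI]
      · have : koszul e (1 : V → Module.End K K) g' S = 0 :=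
          koszul_eq_zero_of_forall e _ fun v hv => by
            simp only [hg']
            exact if_neg fun h => hW (hdown j hj S v h.1 hI)
        rw [this, add_zero]
        exact hfg S hI hW

end Matching

section CycleMatching

/-- The complement of `S` is an independent set of the `n`-cycle. -/
def CoIndep {n : ℕ} (S : Finset (ZMod n)) : Prop := ∀ i : ZMod n, i ∈ S ∨ i + 1 ∈ S

/-- A filtration of the sets with independent complement on the cycle with `3 * k` vertices. -/
def CycleFiltration {n : ℕ} (k m : ℕ) (S : Finset (ZMod n)) : Prop :=
  CoIndep S ∧ ((((0 : ℕ) : ZMod n) ∉ S ∧ ∀ i, i + k < m → ((3 * i + 3 : ℕ) : ZMod n) ∉ S) ∨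
    ∀ i < k, i < m → ((3 * i + 2 : ℕ) : ZMod n) ∉ S)

variable {n k : ℕ}

theorem CoIndep.insert {S : Finset (ZMod n)} (hS : CoIndep S) (v : ZMod n) :
    CoIndep (insert v S) := fun i =>
  (hS i).imp Finset.mem_insert_of_mem Finset.mem_insert_of_mem

theorem CoIndep.natCast_mem {S : Finset (ZMod n)} (hS : CoIndep S) {m : ℕ}
    (h : (m : ZMod n) ∉ S) : ((m + 1 : ℕ) : ZMod n) ∈ S := by
  rw [Nat.cast_succ]; exact (hS m).resolve_left h

theorem CoIndep.natCast_mem' {S : Finset (ZMod n)} (hS : CoIndep S) {m : ℕ}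
    (h : ((m + 1 : ℕ) : ZMod n) ∉ S) : (m : ZMod n) ∈ S := by
  rw [Nat.cast_succ] at h; exact (hS m).resolve_right h

theorem CoIndep.erase (hn : 3 ≤ n) {S : Finset (ZMod n)} (hS : CoIndep S) {m : ℕ}
    (h0 : (m : ZMod n) ∈ S) (h2 : ((m + 2 : ℕ) : ZMod n) ∈ S) :
    CoIndep (S.erase ((m + 1 : ℕ) : ZMod n)) := by
  have : Fact (1 < n) := ⟨by omega⟩
  intro i
  simp only [Finset.mem_erase]
  by_cases h : i = ((m + 1 : ℕ) : ZMod n)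
  · right
    subst h
    exact ⟨by simp, by convert h2 using 1; push_cast; ring⟩
  by_cases h' : i + 1 = ((m + 1 : ℕ) : ZMod n)
  · have : i = m := by push_cast at h'; exact add_right_cancel h'
    exact Or.inl ⟨h, this ▸ h0⟩
  · exact (hS i).imp (fun hi => ⟨h, hi⟩) (fun hi => ⟨h', hi⟩)

theorem natCast_zmod_inj {a b : ℕ} (ha : a < n) (hb : b < n) (h : (a : ZMod n) = b) :
    a = b := by
  rwa [ZMod.natCast_eq_natCast_iff', Nat.mod_eq_of_lt ha, Nat.mod_eq_of_lt hb] at h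

theorem CoIndep.last_mem (hn : n = 3 * k) (hk : 0 < k) {S : Finset (ZMod n)} (hS : CoIndep S)
    (h : ((0 : ℕ) : ZMod n) ∉ S) : ((3 * (k - 1) + 2 : ℕ) : ZMod n) ∈ S := by
  refine hS.natCast_mem' ?_
  have : 3 * (k - 1) + 2 + 1 = n := by omega
  rw [this]
  simpa using h

theorem cycleFiltration_diff_of_lt {m : ℕ} (hm : m < k) (S : Finset (ZMod n)) :
    (CycleFiltration k m S ∧ ¬ CycleFiltration k (m + 1) S) ↔
      CoIndep S ∧ ((0 : ℕ) : ZMod n) ∈ S ∧ (∀ i < m, ((3 * i + 2 : ℕ) : ZMod n) ∉ S) ∧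
        ((3 * m + 2 : ℕ) : ZMod n) ∈ S := by
  unfold CycleFiltration
  constructor
  · rintro ⟨⟨hI, h⟩, h'⟩
    have h0 : ((0 : ℕ) : ZMod n) ∈ S := by
      by_contra h0
      exact h' ⟨hI, Or.inl ⟨h0, fun i hi => by omega⟩⟩
    have h1 := h.resolve_left fun h => h.1 h0
    refine ⟨hI, h0, fun i hi => h1 i (by omega) hi, ?_⟩
    by_contra h2
    refine h' ⟨hI, Or.inr fun i hi him => ?_⟩
    rcases Nat.lt_succ_iff_lt_or_eq.1 him with h3 | rfl
    exacts [h1 i hi h3, h2]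
  · rintro ⟨hI, h0, h1, h2⟩
    refine ⟨⟨hI, Or.inr fun i _ hi => h1 i hi⟩, ?_⟩
    rintro ⟨-, h | h⟩
    exacts [h.1 h0, h m hm (by omega) h2]

theorem cycleFiltration_diff_of_le (hn : n = 3 * k) (hk : 0 < k) (j : ℕ)
    (S : Finset (ZMod n)) :
    (CycleFiltration k (k + j) S ∧ ¬ CycleFiltration k (k + j + 1) S) ↔
      CoIndep S ∧ ((0 : ℕ) : ZMod n) ∉ S ∧ (∀ i < j, ((3 * i + 3 : ℕ) : ZMod n) ∉ S) ∧
        ((3 * j + 3 : ℕ) : ZMod n) ∈ S := by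
  unfold CycleFiltration
  constructor
  · rintro ⟨⟨hI, h⟩, h'⟩
    have h1 := h.resolve_right fun h => h' ⟨hI, Or.inr fun i hi _ => h i hi (by omega)⟩
    refine ⟨hI, h1.1, fun i hi => h1.2 i (by omega), ?_⟩
    by_contra h2
    refine h' ⟨hI, Or.inl ⟨h1.1, fun i him => ?_⟩⟩
    rcases Nat.lt_succ_iff_lt_or_eq.1 (show i < j + 1 by omega) with h3 | rfl
    exacts [h1.2 i (by omega), h2]
  · rintro ⟨hI, h0, h1, h2⟩
    refine ⟨⟨hI, Or.inl ⟨h0, fun i hi => h1 i (by omega)⟩⟩, ?_⟩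
    rintro ⟨-, h | h⟩
    exacts [h.2 j (by omega) h2, h (k - 1) (by omega) (by omega) (hI.last_mem hn hk h0)]

/-- The vertex toggled in the `m`-th step of `CycleFiltration`. -/
def toggleVertex (n k m : ℕ) : ZMod n :=
  if m < k then ((3 * m + 1 : ℕ) : ZMod n) else ((3 * (m - k) + 2 : ℕ) : ZMod n)

theorem cycleFiltration_insert (hn : n = 3 * k) (hk : 0 < k) {m : ℕ} (hm : m < 2 * k - 1)
    {S : Finset (ZMod n)} (hS : CycleFiltration k m S ∧ ¬ CycleFiltration k (m + 1) S) :
    CycleFiltration k m (insert (toggleVertex n k m) S) ∧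
      ¬ CycleFiltration k (m + 1) (insert (toggleVertex n k m) S) := by
  by_cases h : m < k
  · rw [toggleVertex, if_pos h]
    rw [cycleFiltration_diff_of_lt h] at hS ⊢
    obtain ⟨hI, h0, h1, h2⟩ := hS
    refine ⟨hI.insert _, Finset.mem_insert_of_mem h0, fun i hi hmem => ?_,
      Finset.mem_insert_of_mem h2⟩
    rcases Finset.mem_insert.1 hmem with he | he
    · have := natCast_zmod_inj (by omega) (by omega) he
      omega
    · exact h1 i hi he
  · obtain ⟨j, rfl⟩ := Nat.exists_eq_add_of_le (not_lt.1 h)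
    rw [toggleVertex, if_neg h, Nat.add_sub_cancel_left]
    rw [cycleFiltration_diff_of_le hn hk] at hS ⊢
    obtain ⟨hI, h0, h1, h2⟩ := hS
    refine ⟨hI.insert _, fun hmem => ?_, fun i hi hmem => ?_, Finset.mem_insert_of_mem h2⟩
    · rcases Finset.mem_insert.1 hmem with he | he
      · have := natCast_zmod_inj (by omega) (by omega) he
        omega
      · exact h0 he
    · rcases Finset.mem_insert.1 hmem with he | he
      · have := natCast_zmod_inj (by omega) (by omega) he
        omega
      · exact h1 i hi he

theorem cycleFiltration_erase (hn : n = 3 * k) (hk : 0 < k) {m : ℕ} (hm : m < 2 * k - 1)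
    {S : Finset (ZMod n)} (hS : CycleFiltration k m S ∧ ¬ CycleFiltration k (m + 1) S) :
    CycleFiltration k m (S.erase (toggleVertex n k m)) ∧
      ¬ CycleFiltration k (m + 1) (S.erase (toggleVertex n k m)) := by
  by_cases h : m < k
  · rw [toggleVertex, if_pos h]
    rw [cycleFiltration_diff_of_lt h] at hS ⊢
    obtain ⟨hI, h0, h1, h2⟩ := hS
    refine ⟨hI.erase (by omega) ?_ h2, Finset.mem_erase.2 ⟨fun he => ?_, h0⟩,
      fun i hi hmem => h1 i hi (Finset.mem_of_mem_erase hmem),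
      Finset.mem_erase.2 ⟨fun he => ?_, h2⟩⟩
    · rcases Nat.eq_zero_or_pos m with rfl | hm0
      · exact h0
      · have := hI.natCast_mem (h1 (m - 1) (by omega))
        rwa [show 3 * (m - 1) + 2 + 1 = 3 * m by omega] at this
    · have := natCast_zmod_inj (by omega) (by omega) he
      omega
    · have := natCast_zmod_inj (by omega) (by omega) he
      omega
  · obtain ⟨j, rfl⟩ := Nat.exists_eq_add_of_le (not_lt.1 h)
    rw [toggleVertex, if_neg h, Nat.add_sub_cancel_left]
    rw [cycleFiltration_diff_of_le hn hk] at hS ⊢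
    obtain ⟨hI, h0, h1, h2⟩ := hS
    refine ⟨hI.erase (m := 3 * j + 1) (by omega) ?_ h2,
      fun hmem => h0 (Finset.mem_of_mem_erase hmem),
      fun i hi hmem => h1 i hi (Finset.mem_of_mem_erase hmem),
      Finset.mem_erase.2 ⟨fun he => ?_, h2⟩⟩
    · rcases Nat.eq_zero_or_pos j with rfl | hj0
      · exact hI.natCast_mem h0
      · have := hI.natCast_mem (h1 (j - 1) (by omega))
        rwa [show 3 * (j - 1) + 3 + 1 = 3 * j + 1 by omega] at this
    · have := natCast_zmod_inj (by omega) (by omega) he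
      omega

theorem cycleFiltration_exchange (hn : n = 3 * k) (hk : 0 < k) {m : ℕ} (hm : m < 2 * k - 1)
    {S : Finset (ZMod n)} {v : ZMod n}
    (hS : CycleFiltration k m S ∧ ¬ CycleFiltration k (m + 1) S)
    (hv : CycleFiltration k m (insert v (S.erase (toggleVertex n k m)))) :
    CycleFiltration k m (insert v S) ∧ ¬ CycleFiltration k (m + 1) (insert v S) := by
  have hmem : ∀ u, u ≠ toggleVertex n k m → u ∈ insert v S →
      u ∈ insert v (S.erase (toggleVertex n k m)) := by
    intro u hu h
    rcases Finset.mem_insert.1 h with rfl | h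
    · exact Finset.mem_insert_self _ _
    · exact Finset.mem_insert_of_mem (Finset.mem_erase.2 ⟨hu, h⟩)
  obtain ⟨-, hv⟩ := hv
  by_cases h : m < k
  · rw [toggleVertex, if_pos h] at hv hmem
    rw [cycleFiltration_diff_of_lt h] at hS ⊢
    obtain ⟨hI, h0, h1, h2⟩ := hS
    have hv := hv.resolve_left fun hv => hv.1 <| hmem _ (fun he => by
      have := natCast_zmod_inj (by omega) (by omega) he
      omega) (Finset.mem_insert_of_mem h0)
    refine ⟨hI.insert _, Finset.mem_insert_of_mem h0, fun i hi hi' => ?_,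
      Finset.mem_insert_of_mem h2⟩
    refine hv i (by omega) hi (hmem _ (fun he => ?_) hi')
    have := natCast_zmod_inj (by omega) (by omega) he
    omega
  · obtain ⟨j, rfl⟩ := Nat.exists_eq_add_of_le (not_lt.1 h)
    rw [toggleVertex, if_neg h, Nat.add_sub_cancel_left] at hv hmem
    rw [cycleFiltration_diff_of_le hn hk] at hS ⊢
    obtain ⟨hI, h0, h1, h2⟩ := hS
    have hv := hv.resolve_right fun hv => hv (k - 1) (by omega) (by omega) <|
      hmem _ (fun he => by
        have := natCast_zmod_inj (by omega) (by omega) he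
        omega) (Finset.mem_insert_of_mem (hI.last_mem hn hk h0))
    refine ⟨hI.insert _, fun h => hv.1 (hmem _ (fun he => ?_) h), fun i hi hi' => ?_,
      Finset.mem_insert_of_mem h2⟩
    · have := natCast_zmod_inj (by omega) (by omega) he
      omega
    · refine hv.2 i (by omega) (hmem _ (fun he => ?_) hi')
      have := natCast_zmod_inj (by omega) (by omega) he
      omega

theorem cycleFiltration_of_insert {m : ℕ} {S : Finset (ZMod n)} {v : ZMod n}
    (h : CycleFiltration k m (insert v S)) (hS : CoIndep S) : CycleFiltration k m S :=
  ⟨hS, h.2.imp (fun h => ⟨fun h0 => h.1 (Finset.mem_insert_of_mem h0),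
    fun i hi h1 => h.2 i hi (Finset.mem_insert_of_mem h1)⟩)
    fun h i hi hi' h1 => h i hi hi' (Finset.mem_insert_of_mem h1)⟩

theorem cycleFiltration_antitone : Antitone (CycleFiltration (n := n) k) := by
  rintro a b hab S ⟨hS, h⟩
  exact ⟨hS, h.imp (fun h => ⟨h.1, fun i hi => h.2 i (by omega)⟩)
    fun h i hi hi' => h i hi (by omega)⟩

theorem cycleFiltration_zero {S : Finset (ZMod n)} (hS : CoIndep S) :
    CycleFiltration k 0 S := ⟨hS, Or.inr fun i _ hi => by omega⟩

variable [NeZero n]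

/-- The set of vertices of the `n`-cycle not congruent to `r` modulo 3. -/
def coResidue (n : ℕ) [NeZero n] (r : ℕ) : Finset (ZMod n) :=
  Finset.univ.filter fun x => x.val % 3 ≠ r

theorem card_coResidue (hn : n = 3 * k) {r : ℕ} (hr : r < 3) :
    (coResidue n r).card = 2 * k := by
  have h1 : (coResidue n r)ᶜ =
      (Finset.range k).image fun i => ((3 * i + r : ℕ) : ZMod n) := by
    ext x
    simp only [coResidue, Finset.mem_compl, Finset.mem_filter, Finset.mem_univ, true_and,
      not_not, Finset.mem_image, Finset.mem_range]
    constructor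
    · intro h
      have := x.val_lt
      refine ⟨x.val / 3, by omega, ?_⟩
      rw [show 3 * (x.val / 3) + r = x.val by omega, ZMod.natCast_zmod_val]
    · rintro ⟨i, hi, rfl⟩
      rw [ZMod.val_natCast_of_lt (by omega)]
      omega
  have h2 : ((coResidue n r)ᶜ).card = k := by
    rw [h1, Finset.card_image_of_injOn, Finset.card_range]
    intro i hi j hj h
    simp only [Finset.coe_range, Set.mem_Iio] at hi hj
    have := natCast_zmod_inj (by omega) (by omega) h
    omega
  have := Finset.card_compl_add_card (coResidue n r)
  rw [ZMod.card] at this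
  omega

theorem coResidue_ne (hk : 3 ≤ n) : coResidue n 0 ≠ coResidue n 2 := by
  intro h
  have : ((2 : ℕ) : ZMod n) ∈ coResidue n 0 := by
    simp only [coResidue, Finset.mem_filter, Finset.mem_univ, true_and,
      ZMod.val_natCast_of_lt (show 2 < n by omega)]
    omega
  rw [h] at this
  simp only [coResidue, Finset.mem_filter, Finset.mem_univ, true_and,
      ZMod.val_natCast_of_lt (show 2 < n by omega)] at this
  omega

theorem CoIndep.eq_coResidue (hn : n = 3 * k) {S : Finset (ZMod n)} (hS : CoIndep S) {r : ℕ}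
    (hr : r < 3) (h : ∀ i < k, ((3 * i + r : ℕ) : ZMod n) ∉ S) : S = coResidue n r := by
  have h' : ∀ m, m % 3 = r → (m : ZMod n) ∉ S := by
    intro m hm
    have h1 : ((m % n : ℕ) : ZMod n) ∉ S := by
      have h2 : m % n < n := Nat.mod_lt _ (NeZero.pos n)
      have h3 : m % n % 3 = r := by rw [Nat.mod_mod_of_dvd _ ⟨k, hn⟩, hm]
      have := h (m % n / 3) (by omega)
      rwa [show 3 * (m % n / 3) + r = m % n by omega] at this
    rwa [ZMod.natCast_mod] at h1
  ext x
  obtain ⟨m, hm, rfl⟩ : ∃ m < n, (m : ZMod n) = x := ⟨x.val, x.val_lt, by simp⟩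
  simp only [coResidue, Finset.mem_filter, Finset.mem_univ, true_and,
      ZMod.val_natCast_of_lt hm]
  constructor
  · exact fun hx hr => h' m hr hx
  · intro hx
    by_cases h1 : (m + 1) % 3 = r
    · exact hS.natCast_mem' (h' (m + 1) h1)
    · have h2 := hS.natCast_mem (h' (m + n - 1) (by omega))
      rw [show m + n - 1 + 1 = m + n by omega] at h2
      simpa using h2

theorem cycleFiltration_last (hn : n = 3 * k) (hk : 0 < k) {S : Finset (ZMod n)} :
    CycleFiltration k (2 * k - 1) S ↔ S = coResidue n 0 ∨ S = coResidue n 2 := by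
  constructor
  · rintro ⟨hS, h | h⟩
    · refine Or.inl (hS.eq_coResidue hn (by omega) fun i hi => ?_)
      rcases i with _ | i
      · exact h.1
      · exact h.2 i (by omega)
    · exact Or.inr (hS.eq_coResidue hn (by omega) fun i hi => h i hi (by omega))
  · have hco : ∀ r, CoIndep (coResidue n r) := by
      intro r i
      obtain ⟨m, hm, rfl⟩ : ∃ m < n, (m : ZMod n) = i := ⟨i.val, i.val_lt, by simp⟩
      rw [← Nat.cast_succ]
      simp only [coResidue, Finset.mem_filter, Finset.mem_univ, true_and,
        ZMod.val_natCast_of_lt hm, ZMod.val_natCast, Nat.mod_mod_of_dvd _ (⟨k, hn⟩ : 3 ∣ n)]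
      omega
    rintro (rfl | rfl)
    · refine ⟨hco 0, Or.inl ⟨?_, fun i hi => ?_⟩⟩
      · simp [coResidue]
      · simp only [coResidue, Finset.mem_filter, Finset.mem_univ, true_and,
          ZMod.val_natCast, Nat.mod_mod_of_dvd _ (⟨k, hn⟩ : 3 ∣ n)]
        omega
    · refine ⟨hco 2, Or.inr fun i hi _ => ?_⟩
      simp only [coResidue, Finset.mem_filter, Finset.mem_univ, true_and,
          ZMod.val_natCast, Nat.mod_mod_of_dvd _ (⟨k, hn⟩ : 3 ∣ n)]
      omega

theorem exists_koszul_eq_of_cycle {K : Type*} [Field K] {e : ZMod n → ℕ}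
    (he : Function.Injective e) (hn : n = 3 * k) (hk : 0 < k)
    {p : ℕ} {f : Finset (ZMod n) → K} (hf : ∀ S, f S ≠ 0 → S.card = p ∧ CoIndep S)
    (hδ : ∀ S, CoIndep S → S ≠ coResidue n 0 → S ≠ coResidue n 2 →
      koszul e (1 : ZMod n → Module.End K K) f S = 0) :
    ∃ g : Finset (ZMod n) → K, (∀ S, g S ≠ 0 → S.card = p + 1 ∧ CoIndep S) ∧
      ∀ S, CoIndep S → S ≠ coResidue n 0 → S ≠ coResidue n 2 →
        f S = koszul e (1 : ZMod n → Module.End K K) g S := by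
  have hlast : ∀ S : Finset (ZMod n), ¬ CycleFiltration k (2 * k - 1) S ↔
      S ≠ coResidue n 0 ∧ S ≠ coResidue n 2 := fun S => by
    rw [cycleFiltration_last hn hk, not_or]
  obtain ⟨g, hg, h⟩ := exists_koszul_eq_of_matching he (Ind := CoIndep)
    (W := CycleFiltration k) (toggleVertex n k) (2 * k - 1) (fun S v h => h.insert v)
    (fun S => cycleFiltration_zero) (fun j S h => h.1) cycleFiltration_antitone
    (fun j hj S => cycleFiltration_insert hn hk hj)
    (fun j hj S => cycleFiltration_erase hn hk hj)
    (fun j hj S v hS _ _ => cycleFiltration_exchange hn hk hj hS)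
    (fun j hj S v => cycleFiltration_of_insert) hf
    (fun S hS hl => hδ S hS ((hlast S).1 hl).1 ((hlast S).1 hl).2)
  exact ⟨g, hg, fun S hS h0 h2 => h S hS ((hlast S).2 ⟨h0, h2⟩)⟩

end CycleMatching

section Operators

variable {V : Type*} {K : Type*} [Field K]

/-- Multiplication by the variable `X v`, as a `K`-linear operator. -/
def mulX (K : Type*) [Field K] (N : Type*) [AddCommGroup N] [Module K N]
    [Module (MvPolynomial V K) N] [IsScalarTower K (MvPolynomial V K) N] (v : V) :
    Module.End K N :=
  Algebra.lsmul K K N (X v : MvPolynomial V K)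

section

variable {N : Type*} [AddCommGroup N] [Module K N]
  [Module (MvPolynomial V K) N] [IsScalarTower K (MvPolynomial V K) N]

@[simp] theorem mulX_apply (v : V) (m : N) :
    mulX K N v m = (X v : MvPolynomial V K) • m := rfl

theorem mulX_comm (v w : V) (m : N) : mulX K N v (mulX K N w m) = mulX K N w (mulX K N v m) := by
  simp only [mulX_apply, smul_smul, mul_comm]

end

/-- Homogeneous polynomials, with degrees in `ℤ`. -/
def degreePart (V K : Type*) [Field K] (d : ℤ) : Submodule K (MvPolynomial V K) where
  carrier := {p | ∀ a, coeff a p ≠ 0 → (a.degree : ℤ) = d}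
  add_mem' {p q} hp hq a h := by
    rw [coeff_add] at h
    by_cases h1 : coeff a p = 0
    · exact hq a (by simpa [h1] using h)
    · exact hp a h1
  zero_mem' a h := by simp at h
  smul_mem' r p hp a h := hp a (by rw [coeff_smul] at h; exact right_ne_zero_of_smul h)

variable [DecidableEq V]

theorem X_mul_mem_degreePart (v : V) {d : ℤ} {p : MvPolynomial V K} (hp : p ∈ degreePart V K d) :
    X v * p ∈ degreePart V K (d + 1) := by
  intro a h
  rw [coeff_X_mul'] at h
  split_ifs at h with hv
  · have h1 := hp _ h
    have h2 : a = Finsupp.single v 1 + (a - Finsupp.single v 1) := by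
      rw [add_tsub_cancel_of_le]
      simpa [Nat.one_le_iff_ne_zero] using hv
    rw [h2, map_add, Finsupp.degree_single]
    push_cast
    rw [h1]; ring
  · exact absurd rfl h

/-- The `K`-linear map dividing out `X v`, discarding the monomials not divisible by it. -/
def divX (K : Type*) [Field K] (v : V) : Module.End K (MvPolynomial V K) where
  toFun p := p.divMonomial (Finsupp.single v 1)
  map_add' p q := by ext a; simp
  map_smul' r p := by ext a; simp

omit [DecidableEq V] in
theorem coeff_divX (v : V) (p : MvPolynomial V K) (a : V →₀ ℕ) :
    coeff a (divX K v p) = coeff (a + Finsupp.single v 1) p := by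
  simp [divX, coeff_divMonomial, add_comm]

omit [DecidableEq V] in
theorem divX_X_mul (v : V) (p : MvPolynomial V K) : divX K v (X v * p) = p := by
  ext a
  rw [coeff_divX, add_comm, coeff_X_mul]

theorem divX_X_mul_of_ne {v w : V} (h : w ≠ v) (p : MvPolynomial V K) :
    divX K v (X w * p) = X w * divX K v p := by
  ext a
  rw [coeff_divX, coeff_X_mul', coeff_X_mul']
  have h1 : w ∈ (a + Finsupp.single v 1).support ↔ w ∈ a.support := by
    simp [h.symm]
  simp only [h1]
  split_ifs with h2
  · rw [coeff_divX]
    congr 1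
    rw [tsub_add_eq_add_tsub]
    simpa [Nat.one_le_iff_ne_zero] using h2
  · rfl

omit [DecidableEq V] in
theorem divX_mem_degreePart (v : V) {d : ℤ} {p : MvPolynomial V K} (hp : p ∈ degreePart V K d) :
    divX K v p ∈ degreePart V K (d - 1) := by
  intro a h
  rw [coeff_divX] at h
  have := hp _ h
  rw [map_add, Finsupp.degree_single] at this
  push_cast at this
  linarith

/-- The `K`-linear map lowering by one every exponent of `X v` which is at least two, and
discarding the other monomials. -/
def lowerX (K : Type*) [Field K] (v : V) : Module.End K (MvPolynomial V K) :=
  LinearMap.mulLeft K (X v) ∘ₗ divX K v ∘ₗ divX K v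

theorem coeff_lowerX (v : V) (p : MvPolynomial V K) (a : V →₀ ℕ) :
    coeff a (lowerX K v p) = if a v = 0 then 0 else coeff (a + Finsupp.single v 1) p := by
  simp only [lowerX, LinearMap.comp_apply, LinearMap.mulLeft_apply, coeff_X_mul', coeff_divX,
    Finsupp.mem_support_iff]
  by_cases h1 : a v = 0
  · simp [h1]
  · rw [if_pos h1, if_neg h1]
    congr 1
    rw [tsub_add_cancel_of_le]
    simpa [Nat.one_le_iff_ne_zero] using h1

theorem lowerX_X_mul_of_ne {v w : V} (h : w ≠ v) (p : MvPolynomial V K) :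
    lowerX K v (X w * p) = X w * lowerX K v p := by
  simp only [lowerX, LinearMap.comp_apply, LinearMap.mulLeft_apply, divX_X_mul_of_ne h]
  ring

theorem lowerX_mem_degreePart (v : V) {d : ℤ} {p : MvPolynomial V K}
    (hp : p ∈ degreePart V K d) : lowerX K v p ∈ degreePart V K (d - 1) := by
  have := X_mul_mem_degreePart v (divX_mem_degreePart v (divX_mem_degreePart v hp))
  simpa [lowerX] using this

/-- The exponent of `∏_{v ∉ S} X v`. -/
def complExp [Fintype V] (S : Finset V) : V →₀ ℕ := ∑ v ∈ Sᶜ, Finsupp.single v 1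

variable [Fintype V]

theorem complExp_apply (S : Finset V) (v : V) : complExp S v = if v ∈ S then 0 else 1 := by
  simp [complExp, Finsupp.finsetSum_apply, Finsupp.single_apply]

theorem degree_complExp (S : Finset V) :
    ((complExp S).degree : ℤ) = Fintype.card V - S.card := by
  rw [complExp, map_sum]
  simp [Finset.card_compl, Nat.cast_sub (Finset.card_le_univ S)]

theorem complExp_eq_add {S : Finset V} {v : V} (hv : v ∉ S) :
    complExp S = Finsupp.single v 1 + complExp (insert v S) := by
  ext w
  simp only [complExp_apply, Finsupp.add_apply, Finsupp.single_apply, Finset.mem_insert]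
  by_cases h : v = w
  · subst h; simp [hv]
  · have h' : ¬ w = v := fun h' => h h'.symm
    simp [h, h']

theorem koszul_monomial (e : V → ℕ) (g : Finset V → K) (S : Finset V) :
    koszul e (mulX K (MvPolynomial V K)) (fun S => monomial (complExp S) (g S)) S =
      monomial (complExp S) (koszul e (1 : V → Module.End K K) g S) := by
  rw [koszul_apply, koszul_apply, map_sum]
  refine Finset.sum_congr rfl fun v _ => ?_
  rw [contract_apply, contract_apply]
  split_ifs with h
  · simp
  · rw [mulX_apply, complExp_eq_add h]
    rw [Pi.one_apply, Module.End.one_apply, map_zsmul, smul_comm, smul_eq_mul, X,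
      monomial_mul, one_mul]

theorem coeff_koszul (e : V → ℕ) (c : Finset V → MvPolynomial V K) (S : Finset V) :
    coeff (complExp S) (koszul e (mulX K (MvPolynomial V K)) c S) =
      koszul e (1 : V → Module.End K K) (fun S => coeff (complExp S) (c S)) S := by
  rw [koszul_apply, koszul_apply, coeff_sum]
  refine Finset.sum_congr rfl fun v _ => ?_
  rw [contract_apply, contract_apply]
  split_ifs with h
  · simp
  · rw [mulX_apply, complExp_eq_add h, smul_eq_mul, coeff_X_mul, Pi.one_apply, Module.End.one_apply,
      ← lcoeff_apply (R := K), map_zsmul, lcoeff_apply]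

end Operators

theorem mem_cycleIdeal {K : Type} [Field K] {n : ℕ} (hn : 2 ≤ n) {p : MvPolynomial (ZMod n) K} :
    p ∈ cycleIdeal K n ↔ ∀ a, coeff a p ≠ 0 → ∃ i, a i ≠ 0 ∧ a (i + 1) ≠ 0 := by
  have : Fact (1 < n) := ⟨hn⟩
  have h1 : cycleIdeal K n = Ideal.span ((fun s => monomial s (1 : K)) ''
      Set.range fun i : ZMod n => Finsupp.single i 1 + Finsupp.single (i + 1) 1) := by
    rw [cycleIdeal, ← Set.range_comp]
    congr 2
    ext1 i
    simp [X, monomial_mul]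
  rw [h1, mem_ideal_span_monomial_image]
  refine forall_congr' fun a => ?_
  rw [mem_support_iff]
  refine imp_congr_right fun _ => ?_
  simp only [Set.exists_range_iff]
  refine exists_congr fun i => ?_
  have hne : i ≠ i + 1 := by simp
  constructor
  · intro h
    have h2 := h i
    have h3 := h (i + 1)
    simp [hne, hne.symm] at h2 h3
    omega
  · rintro ⟨h2, h3⟩ j
    simp only [Finsupp.add_apply, Finsupp.single_apply]
    split_ifs with h4 h5 h5
    · exact absurd (h4.trans h5.symm) hne
    · subst h4; omega
    · subst h5; omega
    · omega


theorem coeff_retract {V : Type*} [DecidableEq V] [Fintype V] {K : Type*} [Field K] (v : V)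
    (c : Finset V → MvPolynomial V K) (S : Finset V) (a : V →₀ ℕ) :
    coeff a (retract (mulX K (MvPolynomial V K)) (lowerX K) v c S) =
      if a v ≤ complExp S v then coeff a (c S) else 0 := by
  rw [retract, coeff_sub, complExp_apply]
  by_cases hv : v ∈ S
  · simp only [hv, if_true, mulX_apply, smul_eq_mul, coeff_lowerX, nonpos_iff_eq_zero]
    by_cases ha : a v = 0
    · simp [ha]
    · rw [add_comm a, coeff_X_mul]; simp [ha]
  · simp only [hv, if_false, mulX_apply, smul_eq_mul, coeff_X_mul', coeff_lowerX,
      Finsupp.mem_support_iff]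
    by_cases ha : a v = 0
    · simp [ha]
    · have h1 : a - Finsupp.single v 1 + Finsupp.single v 1 = a := by
        rw [tsub_add_cancel_of_le]
        simpa [Nat.one_le_iff_ne_zero] using ha
      have h2 : (a - Finsupp.single v 1 : V →₀ ℕ) v = 0 ↔ a v ≤ 1 := by
        simp [Nat.sub_eq_zero_iff_le]
      simp only [h2, h1, ha, ne_eq, not_false_eq_true, if_true]
      split_ifs <;> simp

theorem coeff_retract_foldr {V : Type*} [DecidableEq V] [Fintype V] {K : Type*} [Field K]
    (c : Finset V → MvPolynomial V K) (S : Finset V) (a : V →₀ ℕ) (l : List V) :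
    coeff a (l.foldr (retract (mulX K (MvPolynomial V K)) (lowerX K)) c S) =
      if ∀ v ∈ l, a v ≤ complExp S v then coeff a (c S) else 0 := by
  induction l with
  | nil => simp
  | cons v l ih =>
    rw [List.foldr_cons, coeff_retract, ih]
    simp only [List.mem_cons, forall_eq_or_imp]
    split_ifs <;> simp_all

theorem eq_complExp {V : Type*} [DecidableEq V] [Fintype V] {S : Finset V} {a : V →₀ ℕ}
    (h : ∀ v, a v ≤ complExp S v) (hd : (a.degree : ℤ) = Fintype.card V - S.card) :
    a = complExp S := by
  rw [← degree_complExp, Nat.cast_inj] at hd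
  have h1 : a ≤ complExp S := h
  obtain ⟨b, hb⟩ := le_iff_exists_add.1 h1
  rw [hb, map_add] at hd
  have : b = 0 := (Finsupp.degree_eq_zero_iff b).1 (by omega)
  rw [hb, this, add_zero]

section

variable {K : Type} [Field K] {n k : ℕ} [NeZero n]

/-- Families of polynomials in the edge ideal of the cycle. -/
def cycleIdealChains (K : Type) [Field K] (n : ℕ) :
    Submodule K (Finset (ZMod n) → MvPolynomial (ZMod n) K) :=
  Submodule.pi Set.univ fun _ => (cycleIdeal K n).restrictScalars K

omit [NeZero n] in
theorem mem_cycleIdealChains {c : Finset (ZMod n) → MvPolynomial (ZMod n) K} :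
    c ∈ cycleIdealChains K n ↔ ∀ S, c S ∈ cycleIdeal K n := by
  simp [cycleIdealChains, Submodule.mem_pi]

theorem koszul_mem_cycleIdealChains (e : ZMod n → ℕ)
    {c : Finset (ZMod n) → MvPolynomial (ZMod n) K} (hc : c ∈ cycleIdealChains K n) :
    koszul e (mulX K _) c ∈ cycleIdealChains K n := by
  rw [mem_cycleIdealChains] at hc ⊢
  intro S
  rw [koszul_apply]
  refine Submodule.sum_mem _ fun v _ => ?_
  rw [contract_apply, mulX_apply, smul_eq_mul]
  refine Ideal.mul_mem_left _ _ ?_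
  split_ifs
  exacts [Submodule.zero_mem _, zsmul_mem (hc _) _]

omit [NeZero n] in
theorem lowerX_mem_cycleIdeal (hn : 2 ≤ n) (v : ZMod n) {p : MvPolynomial (ZMod n) K}
    (hp : p ∈ cycleIdeal K n) : lowerX K v p ∈ cycleIdeal K n := by
  rw [mem_cycleIdeal hn] at hp ⊢
  intro a ha
  rw [coeff_lowerX] at ha
  split_ifs at ha with hv
  · exact absurd rfl ha
  · have key : ∀ i, (a + Finsupp.single v 1 : ZMod n →₀ ℕ) i ≠ 0 → a i ≠ 0 := by
      intro i hi
      by_cases h : v = i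
      · exact h ▸ hv
      · simpa [Finsupp.single_apply, h] using hi
    obtain ⟨i, h1, h2⟩ := hp _ ha
    exact ⟨i, key _ h1, key _ h2⟩

omit [NeZero n] in
theorem lowerX_wedge_mem_cycleIdealChains (hn : 2 ≤ n) (e : ZMod n → ℕ) (v : ZMod n)
    {c : Finset (ZMod n) → MvPolynomial (ZMod n) K} (hc : c ∈ cycleIdealChains K n) :
    (lowerX K v).compLeft _ (wedge K e v c) ∈ cycleIdealChains K n := by
  rw [mem_cycleIdealChains] at hc ⊢
  intro S
  refine lowerX_mem_cycleIdeal hn v ?_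
  rw [wedge_apply]
  split_ifs
  exacts [zsmul_mem (hc _) _, Submodule.zero_mem _]

theorem coeff_complExp_of_mem (hn : 2 ≤ n) {p : MvPolynomial (ZMod n) K}
    (hp : p ∈ cycleIdeal K n) {S : Finset (ZMod n)} (hS : CoIndep S) :
    coeff (complExp S) p = 0 := by
  by_contra h
  obtain ⟨i, h1, h2⟩ := (mem_cycleIdeal hn).1 hp _ h
  simp only [complExp_apply, ne_eq, ite_eq_left_iff, one_ne_zero, imp_false, not_not] at h1 h2
  rcases hS i with h | h <;> simp_all

theorem mem_sup_of_coeff_complExp_eq_zero (hn : 2 ≤ n) {e : ZMod n → ℕ}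
    (he : Function.Injective e) {p : ℕ} {c : Finset (ZMod n) → MvPolynomial (ZMod n) K}
    (hc : c ∈ chains _ (degreePart _ K) n p) (hcI : koszul e (mulX K _) c ∈ cycleIdealChains K n)
    (h0 : ∀ S, CoIndep S → coeff (complExp S) (c S) = 0) :
    c ∈ (chains _ (degreePart _ K) n (p + 1)).map (koszul e (mulX K _)) ⊔
      (cycleIdealChains K n ⊓ chains _ (degreePart _ K) n p) := by
  have hxG : ∀ (v : ZMod n) (d : ℤ), ∀ m ∈ degreePart (ZMod n) K d,
      mulX K (MvPolynomial (ZMod n) K) v m ∈ degreePart (ZMod n) K (d + 1) :=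
    fun v d m hm => X_mul_mem_degreePart v hm
  obtain ⟨h1, -, b, hb, hbI⟩ := retract_foldr he (x := mulX K (MvPolynomial (ZMod n) K))
    (D := lowerX K) mulX_comm (fun v w hvw m => lowerX_X_mul_of_ne hvw m) hxG
    (fun v d m hm => lowerX_mem_degreePart v hm)
    (fun c hc => koszul_mem_cycleIdealChains e hc)
    (fun v c hc => lowerX_wedge_mem_cycleIdealChains hn e v hc) hc hcI Finset.univ.toList
  have h2 : Finset.univ.toList.foldr (retract (mulX K _) (lowerX K)) c ∈
      cycleIdealChains K n := by
    rw [mem_cycleIdealChains]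
    intro S
    rw [mem_cycleIdeal hn]
    intro a ha
    have hcard : S.card = p := by
      by_contra h
      rw [(h1 S).2 h] at ha
      simp at ha
    have hd := (h1 S).1 a ha
    rw [coeff_retract_foldr] at ha
    split_ifs at ha with hle
    · have := eq_complExp (fun v => hle v (by simp)) (by rw [hd, hcard, ZMod.card])
      subst this
      have hS : ¬ CoIndep S := fun hS => ha (h0 S hS)
      simp only [CoIndep, not_forall, not_or] at hS
      obtain ⟨i, hi⟩ := hS
      exact ⟨i, by simp [complExp_apply, hi.1], by simp [complExp_apply, hi.2]⟩
    · exact absurd rfl ha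
  have h3 : c - koszul e (mulX K _) b ∈ cycleIdealChains K n ⊓ chains _ (degreePart _ K) n p := by
    refine ⟨?_, Submodule.sub_mem _ hc (koszul_mem_chains e hxG hb)⟩
    have := Submodule.add_mem _ hbI h2
    rwa [sub_right_comm, sub_add_cancel] at this
  exact Submodule.mem_sup.2 ⟨_, Submodule.mem_map_of_mem hb, _, h3, by abel⟩

/-- The chains concentrated on the two sets `coResidue n 0` and `coResidue n 2`. -/
def topChain (K : Type) [Field K] (n : ℕ) [NeZero n] :
    K × K →ₗ[K] (Finset (ZMod n) → MvPolynomial (ZMod n) K) :=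
  LinearMap.pi fun S => monomial (complExp S) ∘ₗ
    ((if S = coResidue n 0 then LinearMap.fst K K K else 0) +
      (if S = coResidue n 2 then LinearMap.snd K K K else 0))

theorem topChain_apply (x : K × K) (S : Finset (ZMod n)) :
    topChain K n x S = monomial (complExp S)
      ((if S = coResidue n 0 then x.1 else 0) + (if S = coResidue n 2 then x.2 else 0)) := by
  simp only [topChain, LinearMap.pi_apply, LinearMap.comp_apply, LinearMap.add_apply]
  split_ifs <;> rfl

theorem monomial_complExp_mem_chains {V : Type*} [DecidableEq V] [Fintype V] {K : Type*} [Field K]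
    {p : ℕ} {g : Finset V → K} (hg : ∀ S, g S ≠ 0 → S.card = p) :
    (fun S => monomial (complExp S) (g S)) ∈ chains V (degreePart V K) (Fintype.card V) p := by
  intro S
  constructor
  · intro a ha
    rw [coeff_monomial] at ha
    split_ifs at ha with h
    · rw [← h, degree_complExp, hg S ha]
    · exact absurd rfl ha
  · intro h
    have : g S = 0 := by
      by_contra h'
      exact h (hg S h')
    simp [this]

theorem koszul_coeff_eq_zero {e : ZMod n → ℕ} (hn : 2 ≤ n)
    {c : Finset (ZMod n) → MvPolynomial (ZMod n) K}
    (hc : koszul e (mulX K _) c ∈ cycleIdealChains K n) {S : Finset (ZMod n)} (hS : CoIndep S) :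
    koszul e (1 : ZMod n → Module.End K K) (fun S => coeff (complExp S) (c S)) S = 0 := by
  rw [← coeff_koszul]
  exact coeff_complExp_of_mem hn (mem_cycleIdealChains.1 hc S) hS

theorem card_of_eq_coResidue (hn : n = 3 * k) {S : Finset (ZMod n)}
    (h : S = coResidue n 0 ∨ S = coResidue n 2) : S.card = 2 * k := by
  rcases h with rfl | rfl <;> exact card_coResidue hn (by norm_num)

theorem topChain_mem (hn : n = 3 * k) (hk : 0 < k) (e : ZMod n → ℕ) (x : K × K) :
    topChain K n x ∈ chains _ (degreePart _ K) n (2 * k) ⊓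
      (cycleIdealChains K n).comap (koszul e (mulX K _)) := by
  have hfun : topChain K n x = fun S => monomial (complExp S)
      ((if S = coResidue n 0 then x.1 else 0) + (if S = coResidue n 2 then x.2 else 0)) := by
    ext1 S; rw [topChain_apply]
  rw [hfun]
  constructor
  · have := monomial_complExp_mem_chains (V := ZMod n) (K := K) (p := 2 * k)
      (g := fun S => (if S = coResidue n 0 then x.1 else 0) +
        (if S = coResidue n 2 then x.2 else 0)) (fun S h => card_of_eq_coResidue hn (by
          by_contra h'
          rw [not_or] at h'
          simp [h'.1, h'.2] at h))
    rwa [ZMod.card] at this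
  · change koszul e (mulX K _) _ ∈ cycleIdealChains K n
    rw [mem_cycleIdealChains]
    intro S
    rw [koszul_monomial]
    by_cases hS : CoIndep S
    · rw [koszul_eq_zero_of_forall]
      · simp
      intro v hv
      have h1 : ¬ (insert v S = coResidue n 0 ∨ insert v S = coResidue n 2) := by
        intro h
        have h2 := card_of_eq_coResidue hn
          ((cycleFiltration_last hn hk).1 (cycleFiltration_of_insert
            ((cycleFiltration_last hn hk).2 h) hS))
        have h3 := card_of_eq_coResidue hn h
        rw [Finset.card_insert_of_notMem hv] at h3
        omega
      rw [not_or] at h1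
      simp [h1.1, h1.2]
    · rw [mem_cycleIdeal (by omega)]
      intro a ha
      rw [coeff_monomial] at ha
      split_ifs at ha with h
      · subst h
        simp only [CoIndep, not_forall, not_or] at hS
        obtain ⟨i, hi⟩ := hS
        exact ⟨i, by simp [complExp_apply, hi.1], by simp [complExp_apply, hi.2]⟩
      · exact absurd rfl ha

theorem coIndep_coResidue (hn : n = 3 * k) (hk : 0 < k) {S : Finset (ZMod n)}
    (h : S = coResidue n 0 ∨ S = coResidue n 2) : CoIndep S :=
  ((cycleFiltration_last hn hk).2 h).1

open Classical in
theorem relDim_cycleIdeal {e : ZMod n → ℕ} (he : Function.Injective e) (hn : n = 3 * k)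
    (hk : 0 < k) :
    relDim K ((chains _ (degreePart _ K) n (2 * k + 1)).map (koszul e (mulX K _)) ⊔
        (cycleIdealChains K n ⊓ chains _ (degreePart _ K) n (2 * k)))
      (chains _ (degreePart _ K) n (2 * k) ⊓
        (cycleIdealChains K n).comap (koszul e (mulX K (MvPolynomial (ZMod n) K)))) = 2 := by
  have hne := coResidue_ne (n := n) (by omega)
  have hxG : ∀ (v : ZMod n) (d : ℤ), ∀ m ∈ degreePart (ZMod n) K d,
      mulX K (MvPolynomial (ZMod n) K) v m ∈ degreePart (ZMod n) K (d + 1) :=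
    fun v d m hm => X_mul_mem_degreePart v hm
  have hkk := fun c => koszul_koszul he (x := mulX K (MvPolynomial (ZMod n) K)) mulX_comm c
  rw [relDim_eq_finrank (topChain K n) (fun x => topChain_mem hn hk e x)]
  · simp
  · intro x hx
    obtain ⟨_, ⟨b, hb, rfl⟩, j, ⟨hj, -⟩, hbj⟩ := Submodule.mem_sup.1 hx
    set f : Finset (ZMod n) → K := fun S => if CoIndep S then coeff (complExp S) (b S) else 0
      with hf
    have hfδ : ∀ S, CoIndep S → koszul e (1 : ZMod n → Module.End K K) f S =
        coeff (complExp S) (topChain K n x S) := by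
      intro S hS
      rw [← hbj, Pi.add_apply, coeff_add,
        coeff_complExp_of_mem (by omega) (mem_cycleIdealChains.1 hj S) hS, add_zero, coeff_koszul]
      exact koszul_congr e _ fun v _ => if_pos (hS.insert v)
    obtain ⟨g, -, hg⟩ := exists_koszul_eq_of_cycle he hn hk (p := 2 * k + 1) (f := f)
      (fun S hS => by
        have h1 : CoIndep S := by
          by_contra h; simp [hf, h] at hS
        refine ⟨?_, h1⟩
        by_contra h
        simp [hf, (hb S).2 h] at hS)
      (fun S hS h0 h2 => by rw [hfδ S hS, topChain_apply]; simp [h0, h2])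
    have key : ∀ S, (S = coResidue n 0 ∨ S = coResidue n 2) →
        coeff (complExp S) (topChain K n x S) = 0 := by
      intro S hS
      rw [← hfδ S (coIndep_coResidue hn hk hS)]
      have h1 := koszul_koszul he (x := (1 : ZMod n → Module.End K K)) (fun _ _ _ => rfl) g
      refine (koszul_congr e _ fun v hv => ?_).trans (congr_fun h1 S)
      have h2 : ¬ (insert v S = coResidue n 0 ∨ insert v S = coResidue n 2) := by
        intro h
        have h3 := card_of_eq_coResidue hn h
        rw [Finset.card_insert_of_notMem hv, card_of_eq_coResidue hn hS] at h3
        omega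
      rw [not_or] at h2
      exact hg _ ((coIndep_coResidue hn hk hS).insert v) h2.1 h2.2
    have k0 := key _ (Or.inl rfl)
    have k2 := key _ (Or.inr rfl)
    rw [topChain_apply, coeff_monomial] at k0 k2
    simp only [hne, hne.symm, if_true, if_false, add_zero, zero_add] at k0 k2
    exact Prod.ext k0 k2
  · intro c hc
    set f : Finset (ZMod n) → K := fun S => if CoIndep S then coeff (complExp S) (c S) else 0
      with hf
    obtain ⟨g, hgc, hg⟩ := exists_koszul_eq_of_cycle he hn hk (p := 2 * k) (f := f)
      (fun S hS => by
        have h1 : CoIndep S := by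
          by_contra h; simp [hf, h] at hS
        refine ⟨?_, h1⟩
        by_contra h
        simp [hf, (hc.1 S).2 h] at hS)
      (fun S hS h0 h2 => by
        rw [← koszul_coeff_eq_zero (by omega) hc.2 hS]
        exact koszul_congr e _ fun v _ => if_pos (hS.insert v))
    set c₁ : Finset (ZMod n) → MvPolynomial (ZMod n) K := fun S => monomial (complExp S) (g S)
      with hc₁
    have hc₁m : c₁ ∈ chains _ (degreePart (ZMod n) K) n (2 * k + 1) := by
      have := monomial_complExp_mem_chains (V := ZMod n) (K := K) (fun S h => (hgc S h).1)
      rwa [ZMod.card] at this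
    set x : K × K := (f (coResidue n 0) - koszul e (1 : ZMod n → Module.End K K) g (coResidue n 0),
      f (coResidue n 2) - koszul e (1 : ZMod n → Module.End K K) g (coResidue n 2))
      with hx
    have hxm := topChain_mem hn hk e x
    refine ⟨x, ?_⟩
    have h1 : c - topChain K n x - koszul e (mulX K _) c₁ ∈
        (chains _ (degreePart _ K) n (2 * k + 1)).map (koszul e (mulX K _)) ⊔
        (cycleIdealChains K n ⊓ chains _ (degreePart _ K) n (2 * k)) := by
      refine mem_sup_of_coeff_complExp_eq_zero (by omega) he ?_ ?_ ?_
      · exact Submodule.sub_mem _ (Submodule.sub_mem _ hc.1 hxm.1) (koszul_mem_chains e hxG hc₁m)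
      · rw [map_sub, map_sub, hkk, sub_zero]
        exact Submodule.sub_mem _ hc.2 hxm.2
      · intro S hS
        have hfS : f S = coeff (complExp S) (c S) := if_pos hS
        rw [Pi.sub_apply, Pi.sub_apply, coeff_sub, coeff_sub, ← hfS, hc₁, koszul_monomial,
          topChain_apply, coeff_monomial, coeff_monomial, if_pos rfl, if_pos rfl]
        by_cases h0 : S = coResidue n 0
        · subst h0; simp [hx, hne]
        by_cases h2 : S = coResidue n 2
        · subst h2; simp [hx, hne.symm]
        · rw [hg S hS h0 h2]; simp [h0, h2]
    have h2 := Submodule.add_mem _ h1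
      (Submodule.mem_sup_left (Submodule.mem_map_of_mem (f := koszul e (mulX K _)) hc₁m))
    convert h2 using 1
    abel

/-- The homogeneous elements of the coordinate ring of the cycle. -/
def quotientDegreePart (K : Type) [Field K] (n : ℕ) (d : ℤ) :
    Submodule K (MvPolynomial (ZMod n) K ⧸ cycleIdeal K n) :=
  (degreePart _ K d).map ((cycleIdeal K n).mkQ.restrictScalars K)

end


theorem map_chains {V K N N' : Type*} [Field K] [AddCommGroup N] [Module K N] [AddCommGroup N']
    [Module K N'] (G : ℤ → Submodule K N) (f : N →ₗ[K] N') (d : ℤ) (p : ℕ) :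
    (chains V G d p).map (f.compLeft _) = chains V (fun d => (G d).map f) d p := by
  ext c
  constructor
  · rintro ⟨b, hb, rfl⟩
    exact compLeft_mem_chains (fun d m hm => Submodule.mem_map_of_mem hm) hb
  · intro hc
    exact exists_chains_lift (fun S => (hc S).1) (fun S => (hc S).2)

section

variable {K : Type} [Field K] {n k : ℕ} [NeZero n]

theorem relDim_quotientDegreePart {e : ZMod n → ℕ} (he : Function.Injective e) (hn : n = 3 * k)
    (hk : 0 < k) :
    relDim K ((chains _ (quotientDegreePart K n) n (2 * k + 1)).map
        (koszul e (mulX K (MvPolynomial (ZMod n) K ⧸ cycleIdeal K n))))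
      (chains _ (quotientDegreePart K n) n (2 * k) ⊓
        LinearMap.ker (koszul e (mulX K (MvPolynomial (ZMod n) K ⧸ cycleIdeal K n)))) = 2 := by
  set q : MvPolynomial (ZMod n) K →ₗ[K] (MvPolynomial (ZMod n) K ⧸ cycleIdeal K n) :=
    (cycleIdeal K n).mkQ.restrictScalars K with hq
  have hker : ∀ c : Finset (ZMod n) → MvPolynomial (ZMod n) K,
      q.compLeft _ c = 0 ↔ c ∈ cycleIdealChains K n := by
    intro c
    rw [mem_cycleIdealChains, funext_iff]
    exact forall_congr' fun S => Submodule.Quotient.mk_eq_zero _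
  have hkq := koszul_compLeft e (x := mulX K (MvPolynomial (ZMod n) K))
    (x' := mulX K (MvPolynomial (ZMod n) K ⧸ cycleIdeal K n)) q (fun _ _ => rfl)
  have hch : ∀ p, (chains (ZMod n) (degreePart _ K) n p).map (q.compLeft _) =
      chains _ (quotientDegreePart K n) n p := fun p => map_chains _ _ _ _
  have hxG : ∀ (v : ZMod n) (d : ℤ), ∀ m ∈ degreePart (ZMod n) K d,
      mulX K (MvPolynomial (ZMod n) K) v m ∈ degreePart (ZMod n) K (d + 1) :=
    fun v d m hm => X_mul_mem_degreePart v hm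
  refine Eq.trans ?_ (relDim_cycleIdeal (K := K) he hn hk)
  rw [relDim_map (q.compLeft (Finset (ZMod n)))]
  · congr 1
    · rw [Submodule.map_sup, ← hch]
      have h1 : (cycleIdealChains K n ⊓ chains _ (degreePart _ K) n (2 * k)).map
          (q.compLeft (Finset (ZMod n))) = ⊥ := by
        rw [eq_bot_iff]
        rintro _ ⟨c, hc, rfl⟩
        exact (hker c).2 hc.1
      rw [h1, sup_bot_eq, ← Submodule.map_comp, ← Submodule.map_comp]
      congr 1
      exact LinearMap.ext hkq
    · rw [← hch]
      ext c
      constructor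
      · rintro ⟨⟨b, hb, rfl⟩, hc⟩
        refine ⟨b, ⟨hb, ?_⟩, rfl⟩
        rw [SetLike.mem_coe, LinearMap.mem_ker, hkq, hker] at hc
        exact hc
      · rintro ⟨b, hb, rfl⟩
        refine ⟨⟨b, hb.1, rfl⟩, ?_⟩
        rw [SetLike.mem_coe, LinearMap.mem_ker, hkq, hker]
        exact hb.2
  · refine sup_le ?_ ?_
    · rintro _ ⟨b, hb, rfl⟩
      refine ⟨koszul_mem_chains e hxG hb, ?_⟩
      change koszul e _ _ ∈ cycleIdealChains K n
      rw [koszul_koszul he mulX_comm]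
      exact Submodule.zero_mem _
    · exact fun c hc => ⟨hc.2, koszul_mem_cycleIdealChains e hc.1⟩
  · exact fun c hc h => Submodule.mem_sup_right ⟨(hker c).1 h, hc.1⟩

end

section

variable {K N N' : Type*} [Field K] [AddCommGroup N] [Module K N] [AddCommGroup N'] [Module K N']

/-- The operators `pr d` project onto the graded pieces `G d`. -/
structure IsDegreeProj (G : ℤ → Submodule K N) (pr : ℤ → Module.End K N) : Prop where
  mem : ∀ d m, pr d m ∈ G d
  eq : ∀ d d' m, m ∈ G d → pr d' m = if d = d' then m else 0

theorem IsDegreeProj.exists_mem {G : ℤ → Submodule K N} {pr : ℤ → Module.End K N}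
    (h : IsDegreeProj G pr) {G' : ℤ → Submodule K N'} {pr' : ℤ → Module.End K N'}
    (h' : IsDegreeProj G' pr') {f : N →ₗ[K] N'} (hf : ∀ d m, f (pr d m) = pr' d (f m)) {d : ℤ}
    {m : N} (hm : f m ∈ G' d) : ∃ m' ∈ G d, f m' = f m :=
  ⟨pr d m, h.mem d m, by rw [hf, h'.eq d d _ hm, if_pos rfl]⟩

end

section

variable {V K : Type*} [Field K]

/-- The component of degree `d` of a polynomial. -/
def degreeProj (V K : Type*) [Field K] (d : ℤ) : Module.End K (MvPolynomial V K) :=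
  if 0 ≤ d then homogeneousComponent d.toNat else 0

theorem coeff_degreeProj (d : ℤ) (p : MvPolynomial V K) (a : V →₀ ℕ) :
    coeff a (degreeProj V K d p) = if (a.degree : ℤ) = d then coeff a p else 0 := by
  unfold degreeProj
  split_ifs with h1 h2 h2
  · rw [coeff_homogeneousComponent, if_pos (by omega)]
  · rw [coeff_homogeneousComponent, if_neg (by omega)]
  · omega
  · rfl

theorem isDegreeProj_degreePart : IsDegreeProj (degreePart V K) (degreeProj V K) where
  mem d p a h := by
    rw [coeff_degreeProj] at h
    by_contra h'
    exact h (if_neg h')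
  eq d d' p hp := by
    ext a
    rw [coeff_degreeProj]
    by_cases h : coeff a p = 0
    · split_ifs <;> simp [h]
    · rw [hp a h]
      split_ifs <;> simp

end

variable {K : Type} [Field K] {n : ℕ}

theorem degreeProj_mem_cycleIdeal (hn : 2 ≤ n) (d : ℤ) {p : MvPolynomial (ZMod n) K}
    (hp : p ∈ cycleIdeal K n) : degreeProj _ K d p ∈ cycleIdeal K n := by
  rw [mem_cycleIdeal hn] at hp ⊢
  intro a ha
  rw [coeff_degreeProj] at ha
  split_ifs at ha
  · exact hp a ha
  · exact absurd rfl ha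

/-- The component of degree `d` of an element of the coordinate ring of the cycle. -/
def quotientDegreeProj (K : Type) [Field K] (hn : 2 ≤ n) (d : ℤ) :
    Module.End K (MvPolynomial (ZMod n) K ⧸ cycleIdeal K n) :=
  Submodule.mapQ ((cycleIdeal K n).restrictScalars K) ((cycleIdeal K n).restrictScalars K)
    (degreeProj _ K d) fun _ hp => degreeProj_mem_cycleIdeal hn d hp

theorem isDegreeProj_quotientDegreePart (hn : 2 ≤ n) :
    IsDegreeProj (quotientDegreePart K n) (quotientDegreeProj K hn) where
  mem d m := by
    obtain ⟨p, rfl⟩ := Ideal.Quotient.mk_surjective m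
    exact ⟨_, isDegreeProj_degreePart.mem d p, rfl⟩
  eq d d' m := by
    rintro ⟨p, hp, rfl⟩
    have : quotientDegreeProj K hn d' ((cycleIdeal K n).mkQ.restrictScalars K p) =
      (cycleIdeal K n).mkQ.restrictScalars K (degreeProj _ K d' p) := rfl
    rw [this, isDegreeProj_degreePart.eq d d' p hp]
    split_ifs <;> simp

variable {b b' : ℕ → ℕ}

/-- The homogeneous elements of a graded free module, with degrees in `ℤ`. -/
def freeDegreePart (K : Type) [Field K] (n : ℕ) (b : ℕ → ℕ) (d : ℤ) :
    Submodule K (GradedFreeMod K n b) where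
  carrier := {f | ∀ s, f s ∈ degreePart _ K (d - s.1)}
  add_mem' hf hg s := Submodule.add_mem _ (hf s) (hg s)
  zero_mem' _ := Submodule.zero_mem _
  smul_mem' r _ hf s := Submodule.smul_mem _ r (hf s)

theorem isHomogElem_iff {d : ℕ} {f : GradedFreeMod K n b} :
    IsHomogElem d f ↔ f ∈ freeDegreePart K n b d := by
  have hw : ∀ a : ZMod n →₀ ℕ, Finsupp.weight 1 a = a.degree := fun a =>
    (DFunLike.congr_fun Finsupp.degree_eq_weight_one a).symm
  refine forall_congr' fun s => ?_
  constructor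
  · rintro ⟨h1, h2⟩ a ha
    have h3 : a.degree = d - s.1 := by
      have := h1 ha
      rwa [hw] at this
    have h4 := h2 (by rintro h; simp [h] at ha)
    omega
  · intro h
    constructor
    · intro a ha
      have := h a ha
      rw [hw]
      omega
    · intro h0
      obtain ⟨a, ha⟩ := ne_zero_iff.1 h0
      have := h a ha
      omega

theorem eq_zero_of_mem_freeDegreePart {d : ℤ} (hd : d < 0) {f : GradedFreeMod K n b}
    (hf : f ∈ freeDegreePart K n b d) : f = 0 := by
  ext s a
  by_contra h
  have := hf s a h
  omega

/-- The component of degree `d` of an element of a graded free module. -/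
def freeDegreeProj (K : Type) [Field K] (n : ℕ) (b : ℕ → ℕ) (d : ℤ) :
    Module.End K (GradedFreeMod K n b) :=
  Finsupp.lsum K fun s => Finsupp.lsingle s ∘ₗ degreeProj _ K (d - s.1)

theorem freeDegreeProj_apply (d : ℤ) (f : GradedFreeMod K n b) (s : Σ j, Fin (b j)) :
    freeDegreeProj K n b d f s = degreeProj _ K (d - s.1) (f s) := by
  induction f using Finsupp.induction_linear with
  | zero => simp
  | add f g hf hg => rw [map_add, Finsupp.add_apply, hf, hg, Finsupp.add_apply, map_add]
  | single t p =>
    rw [freeDegreeProj, Finsupp.lsum_single, LinearMap.comp_apply, Finsupp.lsingle_apply]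
    by_cases h : t = s
    · subst h; simp
    · simp [h]

theorem isDegreeProj_freeDegreePart :
    IsDegreeProj (freeDegreePart K n b) (freeDegreeProj K n b) where
  mem d f s := by
    rw [freeDegreeProj_apply]
    exact isDegreeProj_degreePart.mem _ _
  eq d d' f hf := by
    ext1 s
    rw [freeDegreeProj_apply, isDegreeProj_degreePart.eq _ _ _ (hf s)]
    simp only [sub_left_inj]
    split_ifs <;> rfl

theorem single_monomial_mem_freeDegreePart (s : Σ j, Fin (b j)) (a : ZMod n →₀ ℕ) (r : K) :
    (Finsupp.single s (monomial a r) : GradedFreeMod K n b) ∈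
      freeDegreePart K n b (s.1 + a.degree : ℕ) := by
  intro t
  by_cases h : s = t
  · subst h
    intro c hc
    rw [Finsupp.single_eq_same, coeff_monomial] at hc
    split_ifs at hc with h
    · subst h; push_cast; ring
    · exact absurd rfl hc
  · rw [Finsupp.single_apply, if_neg h]
    exact Submodule.zero_mem _

theorem map_freeDegreeProj {N : Type*} [AddCommGroup N] [Module K N] {G : ℤ → Submodule K N}
    {pr : ℤ → Module.End K N} (h : IsDegreeProj G pr) {f : GradedFreeMod K n b →ₗ[K] N}
    (hf : ∀ d, ∀ m ∈ freeDegreePart K n b d, f m ∈ G d) (d : ℤ) (m : GradedFreeMod K n b) :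
    f (freeDegreeProj K n b d m) = pr d (f m) := by
  induction m using Finsupp.induction_linear with
  | zero => simp
  | add m m' hm hm' => simp only [map_add, hm, hm']
  | single s p =>
    induction p using MvPolynomial.induction_on' with
    | monomial a r =>
      have h1 := single_monomial_mem_freeDegreePart (b := b) s a r
      rw [isDegreeProj_freeDegreePart.eq _ _ _ h1, h.eq _ _ _ (hf _ _ h1)]
      split_ifs <;> simp
    | add p q hp hq => simp only [Finsupp.single_add, map_add, hp, hq]

theorem IsGradedMap.mem {φ : GradedFreeMod K n b →ₗ[MvPolynomial (ZMod n) K]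
    GradedFreeMod K n b'} (hφ : IsGradedMap φ) (d : ℤ) (m : GradedFreeMod K n b)
    (hm : m ∈ freeDegreePart K n b d) : φ m ∈ freeDegreePart K n b' d := by
  rcases lt_or_ge d 0 with hd | hd
  · rw [eq_zero_of_mem_freeDegreePart hd hm, map_zero]
    exact Submodule.zero_mem _
  · lift d to ℕ using hd
    rw [← isHomogElem_iff] at hm ⊢
    exact hφ _ _ hm


variable {K : Type} [Field K] {n : ℕ} {b b' : ℕ → ℕ}

/-- Coordinatewise division by `X v` on a graded free module. -/
def freeDivX (K : Type) [Field K] (n : ℕ) (b : ℕ → ℕ) (v : ZMod n) :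
    Module.End K (GradedFreeMod K n b) :=
  Finsupp.mapRange.linearMap (divX K v)

theorem freeDivX_apply (v : ZMod n) (f : GradedFreeMod K n b) (s : Σ j, Fin (b j)) :
    freeDivX K n b v f s = divX K v (f s) := rfl

theorem mulX_mem_freeDegreePart (v : ZMod n) (d : ℤ) (f : GradedFreeMod K n b)
    (hf : f ∈ freeDegreePart K n b d) :
    mulX K (GradedFreeMod K n b) v f ∈ freeDegreePart K n b (d + 1) := by
  intro s
  have := X_mul_mem_degreePart v (hf s)
  rwa [sub_add_eq_add_sub] at this

theorem coeff_retract_free [NeZero n] (v : ZMod n) (c : Finset (ZMod n) → GradedFreeMod K n b)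
    (S : Finset (ZMod n)) (s : Σ j, Fin (b j)) (a : ZMod n →₀ ℕ) :
    coeff a (retract (mulX K _) (freeDivX K n b) v c S s) =
      if v ∉ S ∧ a v = 0 then coeff a (c S s) else 0 := by
  rw [retract, Finsupp.sub_apply, coeff_sub]
  by_cases hv : v ∈ S
  · simp only [hv, if_true, freeDivX_apply, mulX_apply, Finsupp.smul_apply, smul_eq_mul,
      divX_X_mul]
    simp
  · simp only [hv, if_false, freeDivX_apply, mulX_apply, Finsupp.smul_apply, smul_eq_mul,
      coeff_X_mul', Finsupp.mem_support_iff, coeff_divX]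
    by_cases ha : a v = 0
    · simp [ha]
    · have h1 : a - Finsupp.single v 1 + Finsupp.single v 1 = a := by
        rw [tsub_add_cancel_of_le]
        simpa [Nat.one_le_iff_ne_zero] using ha
      simp [ha, h1]

theorem coeff_retract_free_foldr [NeZero n] (c : Finset (ZMod n) → GradedFreeMod K n b)
    (S : Finset (ZMod n)) (s : Σ j, Fin (b j)) (a : ZMod n →₀ ℕ) (l : List (ZMod n)) :
    coeff a (l.foldr (retract (mulX K _) (freeDivX K n b)) c S s) =
      if ∀ v ∈ l, v ∉ S ∧ a v = 0 then coeff a (c S s) else 0 := by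
  induction l with
  | nil => simp
  | cons v l ih =>
    rw [List.foldr_cons, coeff_retract_free, ih]
    simp only [List.mem_cons, forall_eq_or_imp]
    split_ifs <;> simp_all

/-- The Koszul complex of a graded free module is acyclic in positive degrees, and its homology
in degree zero is detected by the constant coefficients. -/
theorem mem_map_koszul_of_constantCoeff_eq_zero [NeZero n] {e : ZMod n → ℕ}
    (he : Function.Injective e) {d : ℤ} {p : ℕ} {c : Finset (ZMod n) → GradedFreeMod K n b}
    (hc : c ∈ chains _ (freeDegreePart K n b) d p)
    (hcz : koszul e (mulX K (GradedFreeMod K n b)) c = 0)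
    (h0 : ∀ s, constantCoeff (c ∅ s) = 0) :
    c ∈ (chains _ (freeDegreePart K n b) d (p + 1)).map
      (koszul e (mulX K (GradedFreeMod K n b))) := by
  obtain ⟨-, -, c', hc', h⟩ := retract_foldr he (x := mulX K (GradedFreeMod K n b))
    (D := freeDivX K n b) mulX_comm
    (fun v w hvw m => by
      ext1 s
      simp only [freeDivX_apply, mulX_apply, Finsupp.smul_apply, smul_eq_mul,
        divX_X_mul_of_ne hvw])
    mulX_mem_freeDegreePart
    (fun v d m hm s => by
      have := divX_mem_degreePart v (hm s)
      rwa [sub_right_comm] at this)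
    (J := ⊥) (fun c hc => by rw [Submodule.mem_bot] at hc ⊢; rw [hc, map_zero])
    (fun v c hc => by rw [Submodule.mem_bot] at hc ⊢; rw [hc, map_zero, map_zero]) hc
    (by rw [hcz]; exact Submodule.zero_mem _) Finset.univ.toList
  have h1 : Finset.univ.toList.foldr (retract (mulX K _) (freeDivX K n b)) c = 0 := by
    ext S s a
    rw [coeff_retract_free_foldr]
    split_ifs with hS
    · have hS' : S = ∅ := Finset.eq_empty_of_forall_notMem fun v => (hS v (by simp)).1
      have ha : a = 0 := Finsupp.ext fun v => (hS v (by simp)).2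
      subst hS' ha
      rw [← constantCoeff_eq, h0]; simp
    · simp
  rw [Submodule.mem_bot, h1, sub_zero, sub_eq_zero] at h
  exact ⟨c', hc', h.symm⟩

theorem constantCoeff_of_mem_smul_top {f : GradedFreeMod K n b}
    (hf : f ∈ irrelevantIdeal K n •
      (⊤ : Submodule (MvPolynomial (ZMod n) K) (GradedFreeMod K n b)))
    (s : Σ j, Fin (b j)) : constantCoeff (f s) = 0 := by
  refine Submodule.smul_induction_on hf (fun r hr m _ => ?_) fun x y hx hy => ?_
  · have hle : irrelevantIdeal K n ≤ RingHom.ker (constantCoeff (σ := ZMod n) (R := K)) := by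
      rw [irrelevantIdeal, Ideal.span_le]
      rintro _ ⟨i, rfl⟩
      simp
    have := hle hr
    rw [RingHom.mem_ker] at this
    simp [this]
  · simp [hx, hy]

theorem koszul_of_mem_chains_zero {V N : Type*} [DecidableEq V] [Fintype V] {K : Type*} [Field K]
    [AddCommGroup N] [Module K N] (e : V → ℕ) (x : V → Module.End K N)
    {G : ℤ → Submodule K N} {d : ℤ} {c : Finset V → N} (hc : c ∈ chains V G d 0) :
    koszul e x c = 0 := by
  ext1 S
  exact koszul_eq_zero_of_forall e x fun v _ => (hc _).2 (by simp)

/-- The chain with values in degree zero given by constants on the generators of degree `d`. -/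
def constantChain (K : Type) [Field K] (n : ℕ) (b : ℕ → ℕ) (d : ℕ) :
    (Fin (b d) → K) →ₗ[K] (Finset (ZMod n) → GradedFreeMod K n b) :=
  LinearMap.single K _ ∅ ∘ₗ
    ∑ j : Fin (b d), Finsupp.lsingle ⟨d, j⟩ ∘ₗ Algebra.linearMap K _ ∘ₗ LinearMap.proj j

theorem constantChain_apply_of_ne {d : ℕ} (y : Fin (b d) → K) {S : Finset (ZMod n)}
    (hS : S ≠ ∅) : constantChain K n b d y S = 0 := by
  simp [constantChain, hS]

theorem constantChain_apply_empty {d : ℕ} (y : Fin (b d) → K) :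
    constantChain K n b d y ∅ = ∑ j, Finsupp.single ⟨d, j⟩ (C (y j)) := by
  simp [constantChain, algebraMap_eq]

theorem constantChain_apply_same {d : ℕ} (y : Fin (b d) → K) (j : Fin (b d)) :
    constantChain K n b d y ∅ ⟨d, j⟩ = C (y j) := by
  rw [constantChain_apply_empty, Finsupp.finsetSum_apply, Finset.sum_eq_single j]
  · simp
  · intro i _ hi
    rw [Finsupp.single_apply, if_neg]
    simpa using hi
  · simp

theorem constantChain_mem_chains (d : ℕ) (y : Fin (b d) → K) :
    constantChain K n b d y ∈ chains (ZMod n) (freeDegreePart K n b) d 0 := by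
  intro S
  constructor
  · by_cases hS : S = ∅
    · subst hS
      rw [constantChain_apply_empty]
      refine Submodule.sum_mem _ fun j _ => ?_
      have := single_monomial_mem_freeDegreePart (K := K) (n := n) (b := b) ⟨d, j⟩ 0 (y j)
      simpa using this
    · rw [constantChain_apply_of_ne y hS]
      exact Submodule.zero_mem _
  · intro hS
    exact constantChain_apply_of_ne y fun h => hS (by simp [h])

theorem constantCoeff_koszul [NeZero n] (e : ZMod n → ℕ)
    (c : Finset (ZMod n) → GradedFreeMod K n b) (S : Finset (ZMod n)) (s : Σ j, Fin (b j)) :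
    constantCoeff (koszul e (mulX K (GradedFreeMod K n b)) c S s) = 0 := by
  rw [koszul_apply, Finsupp.finsetSum_apply, map_sum]
  refine Finset.sum_eq_zero fun v _ => ?_
  simp [mulX_apply]

theorem relDim_chains_zero [NeZero n] {e : ZMod n → ℕ} (he : Function.Injective e) (d : ℕ)
    {Q : Submodule K (Finset (ZMod n) → GradedFreeMod K n b)}
    (hQ : ∀ c ∈ Q, ∀ s, constantCoeff (c ∅ s) = 0) :
    relDim K (Q ⊔ (chains _ (freeDegreePart K n b) d 1).map
        (koszul e (mulX K (GradedFreeMod K n b)))) (chains _ (freeDegreePart K n b) d 0) =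
      b d := by
  rw [relDim_eq_finrank (constantChain K n b d) (constantChain_mem_chains d)]
  · simp
  · intro y hy
    obtain ⟨c, hc, _, ⟨c', -, rfl⟩, hcc⟩ := Submodule.mem_sup.1 hy
    ext j
    have h1 : constantCoeff (constantChain K n b d y ∅ ⟨d, j⟩) = 0 := by
      rw [← hcc, Pi.add_apply, Finsupp.add_apply, map_add, hQ c hc, constantCoeff_koszul,
        add_zero]
    rw [constantChain_apply_same, constantCoeff_C] at h1
    exact h1
  · intro c hc
    refine ⟨fun j => constantCoeff (c ∅ ⟨d, j⟩), Submodule.mem_sup_right ?_⟩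
    have h1 := Submodule.sub_mem _ hc
      (constantChain_mem_chains d fun j => constantCoeff (c ∅ ⟨d, j⟩))
    refine mem_map_koszul_of_constantCoeff_eq_zero he h1 (koszul_of_mem_chains_zero _ _ h1) ?_
    rintro ⟨i, j⟩
    by_cases hi : i = d
    · subst hi
      rw [Pi.sub_apply, Finsupp.sub_apply, map_sub, constantChain_apply_same, constantCoeff_C,
        sub_self]
    · by_contra h
      rw [constantCoeff_eq] at h
      have h2 := (h1 ∅).1 ⟨i, j⟩ 0 h
      simp at h2
      omega

variable {β : ℕ → ℕ → ℕ}

theorem betti_eq_two [NeZero n] {k : ℕ} (hn : n = 3 * k) (hk : 0 < k)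
    (res : MinimalGradedFreeResolution K n (cycleIdeal K n) β) : β (2 * k) n = 2 := by
  have h2n : 2 ≤ n := by omega
  have he := ZMod.val_injective n
  set x : ∀ i, ZMod n → Module.End K (GradedFreeMod K n (β i)) :=
    fun i => mulX K (GradedFreeMod K n (β i)) with hx
  set δ : ∀ i, GradedFreeMod K n (β (i + 1)) →ₗ[K] GradedFreeMod K n (β i) :=
    fun i => (res.d i).restrictScalars K with hδ
  set ε : GradedFreeMod K n (β 0) →ₗ[K] (MvPolynomial (ZMod n) K ⧸ cycleIdeal K n) :=
    res.aug.restrictScalars K with hε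
  have hδG : ∀ i d, ∀ m ∈ freeDegreePart K n (β (i + 1)) d, δ i m ∈ freeDegreePart K n (β i) d :=
    fun i => (res.graded i).mem
  have hεG : ∀ d, ∀ m ∈ freeDegreePart K n (β 0) d, ε m ∈ quotientDegreePart K n d := by
    intro d m hm
    rcases lt_or_ge d 0 with hd | hd
    · rw [eq_zero_of_mem_freeDegreePart hd hm, map_zero]
      exact Submodule.zero_mem _
    · lift d to ℕ using hd
      obtain ⟨p, hp, h⟩ := res.aug_graded d m (isHomogElem_iff.2 hm)
      refine ⟨p, fun a ha => ?_, h.symm⟩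
      rw [← hp ha, DFunLike.congr_fun Finsupp.degree_eq_weight_one a]
      rfl
  have hεδ : ∀ m, ε (δ 0 m) = 0 := fun m => by
    have : res.d 0 m ∈ LinearMap.ker res.aug := res.exact_at_zero ▸ LinearMap.mem_range_self _ m
    exact this
  have hδδ : ∀ i m, δ i (δ (i + 1) m) = 0 := fun i m => by
    have : res.d (i + 1) m ∈ LinearMap.ker (res.d i) :=
      res.exact i ▸ LinearMap.mem_range_self _ m
    exact this
  have hlift : ∀ i d, ∀ m ∈ freeDegreePart K n (β i) d, (∃ m', δ i m' = m) →
      ∃ m' ∈ freeDegreePart K n (β (i + 1)) d, δ i m' = m := by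
    rintro i d _ hm ⟨m, rfl⟩
    exact isDegreeProj_freeDegreePart.exists_mem isDegreeProj_freeDegreePart
      (map_freeDegreeProj isDegreeProj_freeDegreePart (hδG i)) hm
  have hex₀ : ∀ d, ∀ m ∈ freeDegreePart K n (β 0) d, ε m = 0 →
      ∃ m' ∈ freeDegreePart K n (β 1) d, δ 0 m' = m := fun d m hm h => by
    refine hlift 0 d m hm ?_
    have : m ∈ LinearMap.ker res.aug := h
    rw [res.exact_at_zero] at this
    exact this
  have hex : ∀ i d, ∀ m ∈ freeDegreePart K n (β (i + 1)) d, δ i m = 0 →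
      ∃ m' ∈ freeDegreePart K n (β (i + 2)) d, δ (i + 1) m' = m := fun i d m hm h => by
    refine hlift (i + 1) d m hm ?_
    have : m ∈ LinearMap.ker (res.d i) := h
    rw [res.exact i] at this
    exact this
  have hmin : ∀ i m s, constantCoeff (δ i m s) = 0 := fun i m s =>
    constantCoeff_of_mem_smul_top (res.minimal i (LinearMap.mem_range_self _ m)) s
  have hcol : ∀ i p, ∀ c ∈ chains _ (freeDegreePart K n (β i)) n (p + 1),
      koszul ZMod.val (x i) c = 0 →
      c ∈ (chains _ (freeDegreePart K n (β i)) n (p + 2)).map (koszul ZMod.val (x i)) :=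
    fun i p c hc hcz => mem_map_koszul_of_constantCoeff_eq_zero he hc hcz fun s => by
      rw [(hc ∅).2 (by simp)]; simp
  have hcol' : ∀ i p, ∀ c ∈ (chains _ (freeDegreePart K n (β (i + 1))) n p).map
      ((δ i).compLeft _), koszul ZMod.val (x i) c = 0 →
      c ∈ (chains _ (freeDegreePart K n (β i)) n (p + 1)).map (koszul ZMod.val (x i)) := by
    rintro i p _ ⟨c, hc, rfl⟩ hcz
    exact mem_map_koszul_of_constantCoeff_eq_zero he (compLeft_mem_chains (hδG i) hc) hcz
      fun s => hmin i _ s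
  have hmulG : ∀ i v d, ∀ m ∈ freeDegreePart K n (β i) d, x i v m ∈
    freeDegreePart K n (β i) (d + 1) := fun i => mulX_mem_freeDegreePart
  let xq : ZMod n → Module.End K (MvPolynomial (ZMod n) K ⧸ cycleIdeal K n) := mulX K _
  have hεx : ∀ v m, ε (x 0 v m) = xq v (ε m) := fun v m => res.aug.map_smul _ m
  have hδx : ∀ i v m, δ i (x (i + 1) v m) = x i v (δ i m) := fun i v m => (res.d i).map_smul _ m
  have haug : imageHomologyDim ZMod.val xq
      (freeDegreePart K n (β 0)) ε n (2 * k) = 2 := by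
    have h1 : (fun d => (freeDegreePart K n (β 0) d).map ε) = quotientDegreePart K n := by
      ext1 d
      refine le_antisymm (Submodule.map_le_iff_le_comap.2 (hεG d)) fun m hm => ?_
      obtain ⟨m, rfl⟩ := res.aug_surjective m
      exact isDegreeProj_freeDegreePart.exists_mem (isDegreeProj_quotientDegreePart h2n)
        (map_freeDegreeProj (isDegreeProj_quotientDegreePart h2n) hεG) hm
    rw [imageHomologyDim, map_chains, map_chains, h1]
    exact relDim_quotientDegreePart he hn hk
  have hstep₀ : ∀ p, imageHomologyDim ZMod.val xq (freeDegreePart K n (β 0)) ε n (p + 1) =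
      imageHomologyDim ZMod.val (x 0) (freeDegreePart K n (β 1)) (δ 0) n p := fun p => by
    rw [← corner_eq_imageHomologyDim he mulX_comm (hmulG 0) hεx hεδ
      (hδG 0) hex₀]
    exact corner_succ_eq_imageHomologyDim he mulX_comm (hmulG 0)
      hεx hεδ (hδG 0) hex₀ n p (hcol 0 p) (hcol' 0 p)
  have hstep : ∀ i p, imageHomologyDim ZMod.val (x i) (freeDegreePart K n (β (i + 1))) (δ i) n
      (p + 1) =
      imageHomologyDim ZMod.val (x (i + 1)) (freeDegreePart K n (β (i + 2))) (δ (i + 1)) n p :=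
    fun i p => by
    rw [← corner_eq_imageHomologyDim he mulX_comm (hmulG (i + 1))
      (hδx i) (hδδ i) (hδG (i + 1)) (hex i)]
    exact corner_succ_eq_imageHomologyDim he mulX_comm (hmulG (i + 1))
      (hδx i) (hδδ i) (hδG (i + 1)) (hex i) n p
      (hcol (i + 1) p) (hcol' (i + 1) p)
  have hdiag : ∀ i p, imageHomologyDim ZMod.val (x 0) (freeDegreePart K n (β 1)) (δ 0) n (p + i) =
      imageHomologyDim ZMod.val (x i) (freeDegreePart K n (β (i + 1))) (δ i) n p := by
    intro i
    induction i with
    | zero => exact fun p => rfl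
    | succ i ih => exact fun p => by rw [← hstep, ← ih]; congr 1; omega
  obtain ⟨m, rfl⟩ : ∃ m, k = m + 1 := ⟨k - 1, by omega⟩
  have hlast := hdiag (2 * m + 1) 0
  rw [show 2 * (m + 1) = (0 + (2 * m + 1)) + 1 by ring, hstep₀, hlast,
    ← corner_eq_imageHomologyDim he mulX_comm (hmulG (2 * m + 2))
      (hδx (2 * m + 1)) (hδδ (2 * m + 1)) (hδG (2 * m + 2))
      (hex (2 * m + 1))] at haug
  refine Eq.trans ?_ haug
  have hP : chains (ZMod n) (freeDegreePart K n (β (2 * m + 2))) n 0 ⊓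
      LinearMap.ker (koszul ZMod.val (x (2 * m + 1)) ∘ₗ (δ (2 * m + 1)).compLeft _) =
      chains (ZMod n) (freeDegreePart K n (β (2 * m + 2))) n 0 :=
    inf_eq_left.2 fun c hc =>
      koszul_of_mem_chains_zero _ _ (compLeft_mem_chains (hδG (2 * m + 1)) hc)
  rw [hP, zero_add]
  refine (relDim_chains_zero (K := K) (b := β (2 * m + 2)) he n ?_).symm
  rintro _ ⟨c, -, rfl⟩ s
  exact hmin (2 * m + 2) _ s

end

/-- For `n ≡ 0 (mod 3)`, `n ≥ 3`, the top graded Betti number of `R/I(Cₙ)` in internal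
degree `n` is `β_{2n/3, n} = 2`: any minimal graded free resolution of `R/I(Cₙ)` has
exactly two generators of degree `n` in homological degree `2n/3`. -/
theorem cycle_top_betti_zero_mod_three (K : Type) [Field K] (n : ℕ) (hn : 3 ≤ n)
    (h3 : n % 3 = 0) (β : ℕ → ℕ → ℕ)
    (res : MinimalGradedFreeResolution K n (cycleIdeal K n) β) :
    β (2 * n / 3) n = 2 := by
  have : NeZero n := ⟨by omega⟩
  have h := betti_eq_two (k := n / 3) (by omega) (by omega) res
  rwa [show 2 * (n / 3) = 2 * n / 3 by omega] at h
end
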